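/- Let f be C²-smooth on an open neighbourhood of S^{n-1} and suppose its restriction to S^{n-1} is orthogonal to all affine functions. If for some a ∈ ℝ and b ≥ 0 one has ‖f''(θ) − a I_n‖ ≤ 1 for every θ ∈ S^{n-1} and ∫ ‖f'' − a I_n‖²_HS dσ_{n-1} ≤ b², then ∫ exp{ ((n−1)/(2(1+4b²))) · |f| } dσ_{n-1} ≤ 2. -/

import Mathlib

open MeasureTheory Metric Filter
open scoped RealInnerProductSpace ENNReal NNReal

noncomputable section

namespace SecondOrderConc

/-- Euclidean space ℝⁿ. -/
abbrev E (n : ℕ) : Type := EuclideanSpace ℝ (Fin n)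

/-- The uniform (normalized rotation-invariant) probability measure `σ_{n-1}`
on the unit sphere `S^{n-1}`, viewed as a measure on the ambient space ℝⁿ. -/
def sphMeasure (n : ℕ) : Measure (E n) :=
  ((((volume : Measure (E n)).toSphere).map Subtype.val) Set.univ)⁻¹ •
    (((volume : Measure (E n)).toSphere).map Subtype.val)

variable {n : ℕ}

/-- Euclidean Hessian of `f` at `x`, as a continuous linear operator on ℝⁿ. -/
def hess (f : E n → ℝ) (x : E n) : E n →L[ℝ] E n :=
  fderiv ℝ (gradient f) x

/-- Squared Hilbert–Schmidt norm of an operator on ℝⁿ. -/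
def hsNormSq (A : E n →L[ℝ] E n) : ℝ :=
  ∑ i : Fin n, ‖A (EuclideanSpace.single i 1)‖ ^ 2

/-- Orthogonal projection of ℝⁿ onto `θ^⊥` (for a unit vector `θ`). -/
def projPerp (θ : E n) : E n →L[ℝ] E n :=
  ContinuousLinearMap.id ℝ (E n) - (innerSL ℝ θ).smulRight θ

/-- Spherical gradient `∇_S f(θ) = ∇f(θ) − ⟨∇f(θ),θ⟩θ`. -/
def sgrad (f : E n → ℝ) (θ : E n) : E n :=
  gradient f θ - ⟪gradient f θ, θ⟫ • θ

/-- Spherical Hessian `f''_S(θ) = P_{θ^⊥} (f''(θ) − ⟨∇f(θ),θ⟩ I_n) P_{θ^⊥}`. -/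
def sHess (f : E n → ℝ) (θ : E n) : E n →L[ℝ] E n :=
  (projPerp θ).comp
    ((hess f θ - ⟪gradient f θ, θ⟫ • ContinuousLinearMap.id ℝ (E n)).comp (projPerp θ))

/-- Spherical Laplacian `Δ_S f(θ) = Tr f''_S(θ)`. -/
def sLap (f : E n → ℝ) (θ : E n) : ℝ :=
  LinearMap.trace ℝ (E n) (sHess f θ).toLinearMap

/-- Euclidean Laplacian `Δ f = Tr f''`. -/
def eLap (f : E n → ℝ) (x : E n) : ℝ :=
  LinearMap.trace ℝ (E n) (hess f x).toLinearMap

/-- 0-homogeneous extension to `ℝⁿ \ {0}` of (the restriction to the sphere of) `g`. -/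
def ext0 (g : E n → ℝ) : E n → ℝ := fun x => g (‖x‖⁻¹ • x)

local notation "𝕊" => Metric.sphere (0 : E n) 1

open scoped ContDiff Topology

instance sphMeasure_isProbabilityMeasure [NeZero n] : IsProbabilityMeasure (sphMeasure n) := by
  have : Nontrivial (E n) := by
    rw [← Module.finrank_pos_iff (R := ℝ), finrank_euclideanSpace_fin]
    exact Nat.pos_of_ne_zero (NeZero.ne n)
  have : IsFiniteMeasure ((volume : Measure (E n)).toSphere.map Subtype.val) := by
    infer_instance
  have : NeZero ((volume : Measure (E n)).toSphere.map Subtype.val) := by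
    refine ⟨fun h => ?_⟩
    rw [Measure.map_eq_zero_iff measurable_subtype_coe.aemeasurable] at h
    exact Measure.toSphere_ne_zero _ h
  unfold sphMeasure
  infer_instance

lemma ae_mem_sphere : ∀ᵐ x ∂sphMeasure n, x ∈ 𝕊 := by
  refine Measure.ae_smul_measure ?_ _
  refine (ae_map_iff (p := (· ∈ 𝕊)) measurable_subtype_coe.aemeasurable
    Metric.isClosed_sphere.measurableSet).2 ?_
  exact Eventually.of_forall fun x => x.2

lemma restrict_sphere : (sphMeasure n).restrict 𝕊 = sphMeasure n :=
  Measure.restrict_eq_self_of_ae_mem ae_mem_sphere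

lemma measurePreserving_isometry (R : E n ≃ₗᵢ[ℝ] E n) :
    MeasurePreserving R (sphMeasure n) (sphMeasure n) := by
  have hR : Measurable R := R.continuous.measurable
  refine ⟨hR, ?_⟩
  unfold sphMeasure
  rw [Measure.map_smul]
  congr 1
  ext s hs
  rw [Measure.map_apply hR hs, Measure.map_apply measurable_subtype_coe (hR hs),
    Measure.map_apply measurable_subtype_coe hs,
    Measure.toSphere_apply' _ (measurable_subtype_coe (hR hs)),
    Measure.toSphere_apply' _ (measurable_subtype_coe hs)]
  congr 1
  symm
  rw [← R.measurePreserving.measure_preimage_emb R.toHomeomorph.measurableEmbedding]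
  congr 1
  ext x
  simp only [Subtype.image_preimage_coe, Set.mem_smul, Set.mem_preimage, Set.mem_inter_iff]
  constructor
  · rintro ⟨r, hr, y, ⟨hy1, hy2⟩, h⟩
    refine ⟨r, hr, R.symm y, ⟨by simpa using hy1, by simpa using hy2⟩, ?_⟩
    apply R.injective
    simp [h]
  · rintro ⟨r, hr, y, ⟨hy1, hy2⟩, rfl⟩
    exact ⟨r, hr, R y, ⟨by simpa using hy1, hy2⟩, by simp⟩

lemma sphMeasure_pos_of_isOpen {O : Set (E n)} (hO : IsOpen O) {x : E n} (hx : x ∈ O)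
    (hxS : x ∈ 𝕊) : 0 < sphMeasure n O := by
  unfold sphMeasure
  rw [Measure.smul_apply, Measure.map_apply measurable_subtype_coe hO.measurableSet, smul_eq_mul]
  refine ENNReal.mul_pos (ENNReal.inv_ne_zero.2 (measure_ne_top _ _)) ?_
  exact (hO.preimage continuous_subtype_val).measure_ne_zero _ ⟨⟨x, hxS⟩, hx⟩

lemma aestronglyMeasurable_of_continuousOn {F : Type*} [NormedAddCommGroup F] {g : E n → F}
    (hg : ContinuousOn g 𝕊) : AEStronglyMeasurable g (sphMeasure n) := by
  rw [← restrict_sphere]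
  exact hg.aestronglyMeasurable_of_isCompact (isCompact_sphere _ _)
    Metric.isClosed_sphere.measurableSet

lemma integrable_of_continuousOn [NeZero n] {g : E n → ℝ}
    (hg : ContinuousOn g 𝕊) : Integrable g (sphMeasure n) := by
  rw [← restrict_sphere]
  exact hg.integrableOn_compact (isCompact_sphere _ _)

lemma integral_congr_sphere {F : Type*} [NormedAddCommGroup F] [NormedSpace ℝ F] {g h : E n → F}
    (H : ∀ x ∈ 𝕊, g x = h x) : ∫ x, g x ∂sphMeasure n = ∫ x, h x ∂sphMeasure n :=
  integral_congr_ae (ae_mem_sphere.mono H)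

lemma integral_mono_sphere [NeZero n] {g h : E n → ℝ} (hg : ContinuousOn g 𝕊)
    (hh : ContinuousOn h 𝕊) (H : ∀ x ∈ 𝕊, g x ≤ h x) :
    ∫ x, g x ∂sphMeasure n ≤ ∫ x, h x ∂sphMeasure n :=
  integral_mono_ae (integrable_of_continuousOn hg) (integrable_of_continuousOn hh)
    (ae_mem_sphere.mono H)

lemma integral_comp_isometry (R : E n ≃ₗᵢ[ℝ] E n) (g : E n → ℝ) :
    ∫ x, g (R x) ∂sphMeasure n = ∫ x, g x ∂sphMeasure n :=
  (measurePreserving_isometry R).integral_comp R.toHomeomorph.measurableEmbedding g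

/-- Differentiation under the integral sign over the sphere, with locally uniform data. -/
lemma hasDerivAt_integral_sphere [NeZero n] {F F' : ℝ → E n → ℝ} {t₀ δ : ℝ} (hδ : 0 < δ)
    (hF : ∀ t ∈ Metric.closedBall t₀ δ, ContinuousOn (F t) 𝕊)
    (hF' : ContinuousOn (Function.uncurry F') (Metric.closedBall t₀ δ ×ˢ 𝕊))
    (hder : ∀ t ∈ Metric.closedBall t₀ δ, ∀ x ∈ 𝕊, HasDerivAt (fun s => F s x) (F' t x) t) :
    HasDerivAt (fun t => ∫ x, F t x ∂sphMeasure n) (∫ x, F' t₀ x ∂sphMeasure n) t₀ := by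
  obtain ⟨C, hC⟩ := ((isCompact_closedBall t₀ δ).prod
    (isCompact_sphere (0 : E n) 1)).exists_bound_of_continuousOn hF'
  have hslice : ContinuousOn (F' t₀) 𝕊 :=
    hF'.comp (f := fun x => (t₀, x)) (by fun_prop)
      (fun x hx => ⟨Metric.mem_closedBall_self hδ.le, hx⟩)
  refine (hasDerivAt_integral_of_dominated_loc_of_deriv_le (bound := fun _ => C)
    (Metric.closedBall_mem_nhds t₀ hδ) ?_ ?_ ?_ ?_ (integrable_const C) ?_).2
  · filter_upwards [Metric.closedBall_mem_nhds t₀ hδ] with t ht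
    exact aestronglyMeasurable_of_continuousOn (hF t ht)
  · exact integrable_of_continuousOn (hF t₀ (Metric.mem_closedBall_self hδ.le))
  · exact aestronglyMeasurable_of_continuousOn hslice
  · filter_upwards [ae_mem_sphere] with x hx t ht
    exact hC (t, x) ⟨ht, hx⟩
  · filter_upwards [ae_mem_sphere] with x hx t ht
    exact hder t ht x hx

/-- The generator `x ↦ xᵢ eⱼ - xⱼ eᵢ` of rotations in a coordinate plane. -/
def rotGen (i j : Fin n) : E n →L[ℝ] E n :=
  (EuclideanSpace.proj i : E n →L[ℝ] ℝ).smulRight (EuclideanSpace.single j 1) -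
    (EuclideanSpace.proj j : E n →L[ℝ] ℝ).smulRight (EuclideanSpace.single i 1)

lemma rotGen_apply (i j : Fin n) (x : E n) :
    rotGen i j x = x i • EuclideanSpace.single j (1 : ℝ) - x j • EuclideanSpace.single i 1 := by
  simp [rotGen]

lemma rotGen_apply_coord (i j m : Fin n) (x : E n) :
    rotGen i j x m = (if m = j then x i else 0) - if m = i then x j else 0 := by
  simp [rotGen_apply]

lemma inner_rotGen_left (i j : Fin n) (x y : E n) :
    ⟪rotGen i j x, y⟫ = x i * y j - x j * y i := by
  simp [rotGen_apply, inner_sub_left, inner_smul_left, EuclideanSpace.inner_single_left]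

lemma inner_rotGen_self (i j : Fin n) (x : E n) : ⟪rotGen i j x, x⟫ = 0 := by
  rw [inner_rotGen_left]; ring

lemma rotGen_cube (i j : Fin n) (x : E n) :
    rotGen i j (rotGen i j (rotGen i j x)) = -rotGen i j x := by
  by_cases h : i = j
  · subst h; simp [rotGen]
  · ext m
    simp only [rotGen_apply_coord, PiLp.neg_apply]
    simp only [h, Ne.symm h, if_true, if_false]
    split_ifs <;> simp_all

/-- The rotation group generated by `rotGen i j`. -/
def rotFlow (i j : Fin n) (s : ℝ) : E n →L[ℝ] E n :=
  ContinuousLinearMap.id ℝ (E n) + Real.sin s • rotGen i j +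
    (1 - Real.cos s) • (rotGen i j).comp (rotGen i j)

lemma rotFlow_apply (i j : Fin n) (s : ℝ) (x : E n) :
    rotFlow i j s x = x + Real.sin s • rotGen i j x +
      (1 - Real.cos s) • rotGen i j (rotGen i j x) := by
  simp [rotFlow]

@[simp] lemma rotFlow_zero (i j : Fin n) (x : E n) : rotFlow i j 0 x = x := by
  simp [rotFlow_apply]

lemma hasDerivAt_rotFlow (i j : Fin n) (s : ℝ) (x : E n) :
    HasDerivAt (fun s => rotFlow i j s x) (rotGen i j (rotFlow i j s x)) s := by
  simp only [rotFlow_apply, map_add, map_smul, rotGen_cube]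
  have h := (((Real.hasDerivAt_sin s).smul_const (rotGen i j x)).const_add x).add
    (((Real.hasDerivAt_cos s).const_sub 1).smul_const (rotGen i j (rotGen i j x)))
  refine h.congr_deriv ?_
  module

lemma norm_rotFlow (i j : Fin n) (s : ℝ) (x : E n) : ‖rotFlow i j s x‖ = ‖x‖ := by
  have hd : ∀ s, HasDerivAt (fun s => ⟪rotFlow i j s x, rotFlow i j s x⟫) 0 s := by
    intro s
    have h := (hasDerivAt_rotFlow i j s x).inner ℝ (hasDerivAt_rotFlow i j s x)
    rwa [real_inner_comm (rotGen i j _), inner_rotGen_self, add_zero] at h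
  have := is_const_of_deriv_eq_zero (fun s => (hd s).differentiableAt) (fun s => (hd s).deriv) s 0
  simp only [rotFlow_zero, real_inner_self_eq_norm_sq] at this
  exact (sq_eq_sq₀ (norm_nonneg _) (norm_nonneg _)).1 this

/-- `rotFlow` as a linear isometry equivalence. -/
def rotIsometry (i j : Fin n) (s : ℝ) : E n ≃ₗᵢ[ℝ] E n :=
  LinearIsometry.toLinearIsometryEquiv ⟨(rotFlow i j s).toLinearMap, norm_rotFlow i j s⟩ rfl

lemma rotIsometry_apply (i j : Fin n) (s : ℝ) (x : E n) :
    rotIsometry i j s x = rotFlow i j s x := rfl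

lemma rotFlow_mem_sphere (i j : Fin n) (s : ℝ) {x : E n} (hx : x ∈ 𝕊) :
    rotFlow i j s x ∈ 𝕊 := by
  simpa [norm_rotFlow] using hx

/-- Derivative in the direction of an infinitesimal rotation. -/
def rotD (i j : Fin n) (g : E n → ℝ) (x : E n) : ℝ := fderiv ℝ g x (rotGen i j x)

/-- Regularity at all points of the sphere. -/
def SphSmooth (k : ℕ∞ω) (g : E n → ℝ) : Prop := ∀ x ∈ 𝕊, ContDiffAt ℝ k g x

namespace SphSmooth

variable {k l : ℕ∞ω} {g h : E n → ℝ}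

lemma of_le (hg : SphSmooth k g) (hl : l ≤ k) : SphSmooth l g := fun x hx => (hg x hx).of_le hl

lemma continuousOn (hg : SphSmooth k g) : ContinuousOn g 𝕊 :=
  fun x hx => (hg x hx).continuousAt.continuousWithinAt

lemma differentiableAt (hg : SphSmooth k g) (hk : k ≠ 0) {x : E n} (hx : x ∈ 𝕊) :
    DifferentiableAt ℝ g x := (hg x hx).differentiableAt hk

lemma const (c : ℝ) : SphSmooth k (fun _ : E n => c) := fun _ _ => contDiffAt_const

lemma add (hg : SphSmooth k g) (hh : SphSmooth k h) : SphSmooth k (fun x => g x + h x) :=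
  fun x hx => (hg x hx).add (hh x hx)

lemma neg (hg : SphSmooth k g) : SphSmooth k (fun x => - g x) :=
  fun x hx => (hg x hx).neg

lemma mul (hg : SphSmooth k g) (hh : SphSmooth k h) : SphSmooth k (fun x => g x * h x) :=
  fun x hx => (hg x hx).mul (hh x hx)

lemma exp (hg : SphSmooth k g) : SphSmooth k (fun x => Real.exp (g x)) :=
  fun x hx => (hg x hx).exp

lemma log (hg : SphSmooth k g) (h0 : ∀ x ∈ 𝕊, 0 < g x) : SphSmooth k (fun x => Real.log (g x)) :=
  fun x hx => (hg x hx).log (h0 x hx).ne'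

lemma rotD (hg : SphSmooth k g) (hl : l + 1 ≤ k) (i j : Fin n) : SphSmooth l (rotD i j g) :=
  fun x hx => ((hg x hx).fderiv_right hl).clm_apply (rotGen i j).contDiff.contDiffAt

end SphSmooth

section rules

variable {g h : E n → ℝ} {x : E n} (i j : Fin n)

lemma rotD_congr (H : g =ᶠ[𝓝 x] h) : rotD i j g x = rotD i j h x := by
  rw [rotD, rotD, H.fderiv_eq]

lemma rotD_add (hg : DifferentiableAt ℝ g x) (hh : DifferentiableAt ℝ h x) :
    rotD i j (fun y => g y + h y) x = rotD i j g x + rotD i j h x := by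
  rw [rotD, fderiv_fun_add hg hh]; rfl

lemma rotD_sub (hg : DifferentiableAt ℝ g x) (hh : DifferentiableAt ℝ h x) :
    rotD i j (fun y => g y - h y) x = rotD i j g x - rotD i j h x := by
  rw [rotD, fderiv_fun_sub hg hh]; rfl

lemma rotD_neg : rotD i j (fun y => - g y) x = - rotD i j g x := by
  rw [rotD, fderiv_fun_neg]; rfl

lemma rotD_const (c : ℝ) : rotD i j (fun _ => c) x = 0 := by simp [rotD]

lemma rotD_mul (hg : DifferentiableAt ℝ g x) (hh : DifferentiableAt ℝ h x) :
    rotD i j (fun y => g y * h y) x = g x * rotD i j h x + h x * rotD i j g x := by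
  rw [rotD, fderiv_fun_mul hg hh]; rfl

lemma rotD_const_mul (hg : DifferentiableAt ℝ g x) (c : ℝ) :
    rotD i j (fun y => c * g y) x = c * rotD i j g x := by
  rw [rotD, fderiv_const_mul hg]; rfl

lemma rotD_sum {ι : Type*} {s : Finset ι} {G : ι → E n → ℝ}
    (hG : ∀ a ∈ s, DifferentiableAt ℝ (G a) x) :
    rotD i j (fun y => ∑ a ∈ s, G a y) x = ∑ a ∈ s, rotD i j (G a) x := by
  rw [rotD, fderiv_fun_sum hG]; simp [rotD]

lemma rotD_exp (hg : DifferentiableAt ℝ g x) :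
    rotD i j (fun y => Real.exp (g y)) x = Real.exp (g x) * rotD i j g x := by
  rw [rotD, fderiv_exp hg]; rfl

lemma rotD_log (hg : DifferentiableAt ℝ g x) (h0 : g x ≠ 0) :
    rotD i j (fun y => Real.log (g y)) x = rotD i j g x / g x := by
  rw [rotD, fderiv.log hg h0]; simp [rotD, div_eq_inv_mul]

lemma rotD_self : rotD i i g x = 0 := by simp [rotD, rotGen]

lemma rotD_swap : rotD j i g x = - rotD i j g x := by
  simp [rotD, rotGen]

end rules

lemma hasDerivAt_comp_rotFlow {g : E n → ℝ} (i j : Fin n) {s : ℝ} {x : E n}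
    (hg : DifferentiableAt ℝ g (rotFlow i j s x)) :
    HasDerivAt (fun s => g (rotFlow i j s x)) (rotD i j g (rotFlow i j s x)) s :=
  hg.hasFDerivAt.comp_hasDerivAt s (hasDerivAt_rotFlow i j s x)

lemma continuous_rotFlow (i j : Fin n) :
    Continuous fun p : ℝ × E n => rotFlow i j p.1 p.2 := by
  simp only [rotFlow_apply]; fun_prop

lemma integral_rotD_eq_zero [NeZero n] {g : E n → ℝ} (hg : SphSmooth 1 g) (i j : Fin n) :
    ∫ x, rotD i j g x ∂sphMeasure n = 0 := by
  have h := hasDerivAt_integral_sphere (F := fun s x => g (rotFlow i j s x))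
    (F' := fun s x => rotD i j g (rotFlow i j s x)) (t₀ := 0) one_pos
    (fun t _ => hg.continuousOn.comp (rotFlow i j t).continuous.continuousOn
      fun x hx => rotFlow_mem_sphere i j t hx)
    ((hg.rotD (l := 0) (by simp) i j).continuousOn.comp (continuous_rotFlow i j).continuousOn
      fun p hp => rotFlow_mem_sphere i j p.1 hp.2)
    (fun t _ x hx => hasDerivAt_comp_rotFlow i j
      (hg.differentiableAt one_ne_zero (rotFlow_mem_sphere i j t hx)))
  have hc : ∀ s, ∫ x, g (rotFlow i j s x) ∂sphMeasure n = ∫ x, g x ∂sphMeasure n :=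
    fun s => integral_comp_isometry (rotIsometry i j s) g
  simp only [hc, rotFlow_zero] at h
  exact h.unique (hasDerivAt_const _ _)

/-- Integration by parts on the sphere. -/
lemma integral_mul_rotD [NeZero n] {g h : E n → ℝ} (hg : SphSmooth 1 g) (hh : SphSmooth 1 h)
    (i j : Fin n) :
    ∫ x, g x * rotD i j h x ∂sphMeasure n = - ∫ x, h x * rotD i j g x ∂sphMeasure n := by
  have h0 := integral_rotD_eq_zero (hg.mul hh) i j
  rw [integral_congr_sphere fun x hx => rotD_mul i j (hg.differentiableAt one_ne_zero hx)
    (hh.differentiableAt one_ne_zero hx), integral_add] at h0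
  · linarith
  · exact integrable_of_continuousOn
      (hg.continuousOn.mul (hh.rotD (l := 0) (by simp) i j).continuousOn)
  · exact integrable_of_continuousOn
      (hh.continuousOn.mul (hg.rotD (l := 0) (by simp) i j).continuousOn)

section curvatureAlgebra

lemma sum_wedge_mul_wedge {ι : Type*} [Fintype ι] (a b c d : ι → ℝ) :
    ∑ i, ∑ j, (a i * b j - a j * b i) * (c i * d j - c j * d i) =
      2 * ((∑ i, a i * c i) * (∑ i, b i * d i) - (∑ i, a i * d i) * ∑ i, b i * c i) := by
  have h1 : ∀ u v : ι → ℝ, (∑ i, u i) * (∑ j, v j) = ∑ i, ∑ j, u i * v j :=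
    fun u v => Finset.sum_mul_sum _ _ _ _
  have h2 : ∀ u v : ι → ℝ, (∑ i, u i) * (∑ j, v j) = ∑ i, ∑ j, u j * v i := fun u v => by
    rw [h1, Finset.sum_comm]
  rw [two_mul]
  nth_rewrite 1 [h1, h1]
  rw [h2, h2]
  simp only [← Finset.sum_add_distrib, ← Finset.sum_sub_distrib]
  exact Finset.sum_congr rfl fun i _ => Finset.sum_congr rfl fun j _ => by ring

lemma sum_wedge_sq {ι : Type*} [Fintype ι] {x : ι → ℝ} (hx : ∑ i, x i * x i = 1) (v : ι → ℝ) :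
    ∑ i, ∑ j, (x i * v j - x j * v i) ^ 2 = 2 * (∑ i, v i * v i - (∑ i, x i * v i) ^ 2) := by
  simp_rw [pow_two (_ - _)]
  rw [sum_wedge_mul_wedge, hx]
  simp_rw [mul_comm (v _) (x _)]
  ring

variable {ι : Type*} [DecidableEq ι] (x p : ι → ℝ) (F : ι → ι → ℝ)

/-- Coordinates of the gradient of a rotational derivative. -/
def rotGrad (i j m : ι) : ℝ :=
  (x i * F m j - x j * F m i) + ((if m = i then 1 else 0) * p j - (if m = j then 1 else 0) * p i)

/-- Second rotational derivatives in coordinates. -/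
def rotHess (k l i j : ι) : ℝ := x k * rotGrad x p F i j l - x l * rotGrad x p F i j k

variable {x p F}

lemma rotHess_add_rankOne (β : ℝ) (k l i j : ι) :
    rotHess x p (fun m l => F m l + β * (p m * p l)) k l i j =
      rotHess x p F k l i j + β * ((x k * p l - x l * p k) * (x i * p j - x j * p i)) := by
  simp only [rotHess, rotGrad]; ring

variable [Fintype ι]

lemma sum_rotHess_sq (hx : ∑ i, x i * x i = 1) (hF : ∀ i j, F i j = F j i) :
    1 / 4 * ∑ i, ∑ j, ∑ k, ∑ l, rotHess x p F k l i j ^ 2 =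
      ∑ m, ∑ l, F m l * F m l - 2 * ∑ l, (∑ m, x m * F m l) * (∑ m, x m * F m l) +
      (Fintype.card ι - 2) * ∑ m, p m * p m - 2 * (∑ m, x m * p m) * (∑ m, F m m) +
      (∑ l, x l * (∑ m, x m * F m l) + ∑ m, x m * p m) ^ 2 := by
  set y : ι → ℝ := fun l => ∑ m, x m * F m l with hy
  have hy' : ∀ m, ∑ l, x l * F m l = y m := fun m => by
    simp only [hy]; exact Finset.sum_congr rfl fun l _ => by rw [hF]
  have h1 : ∀ i j, ∑ k, ∑ l, rotHess x p F k l i j ^ 2 =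
      2 * (∑ m, rotGrad x p F i j m * rotGrad x p F i j m -
        (∑ m, x m * rotGrad x p F i j m) ^ 2) := fun i j => sum_wedge_sq hx _
  have h2 : ∀ i j, ∑ m, x m * rotGrad x p F i j m =
      x i * (y j + p j) - x j * (y i + p i) := fun i j => by
    simp only [rotGrad, mul_add, mul_sub, Finset.sum_add_distrib, Finset.sum_sub_distrib, hy,
      Finset.mul_sum]
    simp only [ite_mul, mul_ite, one_mul, zero_mul, mul_zero, Finset.sum_ite_eq',
      Finset.mem_univ, if_true]
    have : ∀ i j, ∑ m, x m * (x i * F m j) = ∑ m, x i * (x m * F m j) :=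
      fun i j => Finset.sum_congr rfl fun m _ => by ring
    rw [this, this]; ring
  have h3 : ∑ i, ∑ j, (∑ m, x m * rotGrad x p F i j m) ^ 2 =
      2 * (∑ i, (y i + p i) * (y i + p i) - (∑ i, x i * (y i + p i)) ^ 2) := by
    simp_rw [h2]; exact sum_wedge_sq hx _
  have h4 : ∀ m, ∑ i, ∑ j, rotGrad x p F i j m * rotGrad x p F i j m =
      2 * (∑ l, F m l * F m l - y m ^ 2) + 2 * (∑ l, p l * p l - p m * p m) +
      4 * (x m * (∑ l, F m l * p l) - (∑ l, x l * p l) * F m m) := fun m => by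
    have e : ∀ i j, rotGrad x p F i j m * rotGrad x p F i j m =
        (x i * F m j - x j * F m i) ^ 2 +
        ((fun i => if m = i then (1 : ℝ) else 0) i * p j -
          (fun i => if m = i then (1 : ℝ) else 0) j * p i) *
        ((fun i => if m = i then (1 : ℝ) else 0) i * p j -
          (fun i => if m = i then (1 : ℝ) else 0) j * p i) +
        2 * ((x i * F m j - x j * F m i) * ((fun i => if m = i then (1 : ℝ) else 0) i * p j -
          (fun i => if m = i then (1 : ℝ) else 0) j * p i)) := fun i j => by
      simp only [rotGrad]; ring
    simp_rw [e, Finset.sum_add_distrib, ← Finset.mul_sum]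
    rw [sum_wedge_sq hx, sum_wedge_mul_wedge, sum_wedge_mul_wedge, hy']
    simp only [ite_mul, mul_ite, one_mul, zero_mul, mul_zero, mul_one, Finset.sum_ite_eq,
      Finset.mem_univ, if_true]
    ring
  have h5 : ∑ i, ∑ j, ∑ m, rotGrad x p F i j m * rotGrad x p F i j m =
      ∑ m, ∑ i, ∑ j, rotGrad x p F i j m * rotGrad x p F i j m := by
    rw [Finset.sum_congr rfl fun i _ => Finset.sum_comm, Finset.sum_comm]
  have h6 : ∑ m, x m * (∑ l, F m l * p l) = ∑ l, y l * p l := by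
    simp only [hy, Finset.sum_mul, Finset.mul_sum]
    rw [Finset.sum_comm]
    exact Finset.sum_congr rfl fun l _ => Finset.sum_congr rfl fun m _ => by ring
  simp_rw [h1, ← Finset.mul_sum, Finset.sum_sub_distrib]
  rw [h3, h5]
  simp_rw [h4, Finset.sum_add_distrib, ← Finset.mul_sum, Finset.sum_sub_distrib,
    ← Finset.mul_sum]
  rw [h6]
  simp only [add_mul, mul_add, Finset.sum_add_distrib, Finset.sum_const, Finset.card_univ,
    nsmul_eq_mul, pow_two, mul_comm (p _) (y _)]
  ring

lemma sum_rotHess_diag (hx : ∑ i, x i * x i = 1) :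
    1 / 2 * ∑ i, ∑ j, rotHess x p F i j i j =
      ∑ m, F m m - ∑ l, x l * (∑ m, x m * F m l) - (Fintype.card ι - 1) * ∑ m, x m * p m := by
  have e : ∀ i j, rotHess x p F i j i j = x i * x i * F j j + x j * x j * F i i -
      x i * (x j * F j i) - x j * (x i * F i j) - x i * p i - x j * p j +
      ((if i = j then x i * p j else 0) + (if i = j then x j * p i else 0)) := fun i j => by
    simp only [rotHess, rotGrad]
    rcases eq_or_ne i j with h | h
    · subst h; simp; ring
    · simp [h, h.symm]; ring
  have h1 : ∑ i, ∑ j, x j * (x i * F i j) = ∑ j, ∑ i, x j * (x i * F i j) := Finset.sum_comm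
  have h2 : ∑ i, ∑ j, x i * x i * F j j = ∑ m, F m m := by
    simp_rw [← Finset.mul_sum, ← Finset.sum_mul, hx, one_mul]
  have h3 : ∑ i, ∑ j, x j * x j * F i i = ∑ m, F m m := by
    simp_rw [← Finset.sum_mul, hx, one_mul]
  simp only [e, Finset.sum_add_distrib, Finset.sum_sub_distrib]
  rw [h1, h2, h3]
  simp only [Finset.sum_ite_eq, Finset.mem_univ, if_true, Finset.sum_const, Finset.card_univ,
    nsmul_eq_mul, Finset.mul_sum]
  simp_rw [← Finset.mul_sum]
  ring

lemma sum_sq_ge_trace (hx : ∑ i, x i * x i = 1) (hF : ∀ i j, F i j = F j i) {N : ℝ}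
    (hN : N = Fintype.card ι - 1) (h0 : 0 < N) :
    (∑ m, F m m - ∑ l, x l * (∑ m, x m * F m l)) ^ 2 ≤
      N * (∑ m, ∑ l, F m l * F m l - 2 * ∑ l, (∑ m, x m * F m l) * (∑ m, x m * F m l) +
        (∑ l, x l * (∑ m, x m * F m l)) ^ 2) := by
  set y : ι → ℝ := fun l => ∑ m, x m * F m l with hy
  set r := ∑ l, x l * y l with hr
  set τ := ∑ m, F m m with hτ
  set c := (τ - r) / N with hc
  have hy' : ∀ m, ∑ l, x l * F m l = y m := fun m => by
    simp only [hy]; exact Finset.sum_congr rfl fun l _ => by rw [hF]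
  have hcard : (Fintype.card ι : ℝ) = N + 1 := by rw [hN]; ring
  have key : ∑ m, ∑ l, (F m l - x m * y l - y m * x l + (r + c) * (x m * x l) -
      if m = l then c else 0) ^ 2 =
      ∑ m, ∑ l, F m l * F m l - 2 * ∑ l, y l * y l + r ^ 2 - (τ - r) ^ 2 / N := by
    have e : ∀ m l, (F m l - x m * y l - y m * x l + (r + c) * (x m * x l) -
      if m = l then c else 0) ^ 2 = F m l * F m l + x m * x m * (y l * y l) +
        y m * y m * (x l * x l) + (r + c) ^ 2 * (x m * x m * (x l * x l)) +
        2 * (x m * y m * (x l * y l)) - 2 * (y l * (x m * F m l)) - 2 * (y m * (x l * F m l)) +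
        2 * (r + c) * (x m * (x l * F m l)) - 4 * (r + c) * (x m * x m * (x l * y l))
        + ((if m = l then c ^ 2 else 0) - (if m = l then 2 * c * F m l else 0) +
          (if m = l then 4 * c * (x m * y m) else 0) -
          (if m = l then 2 * (r + c) * c * (x m * x m) else 0)) + 2 * (r + c) *
          (x m * x m * (x l * y l)) - 2 * (r + c) * (x m * y m * (x l * x l)) := fun m l => by
      rcases eq_or_ne m l with h | h
      · subst h; simp; ring
      · simp [h]; ring
    simp only [e, Finset.sum_add_distrib, Finset.sum_sub_distrib]
    have h1 : ∑ m, ∑ l, y l * (x m * F m l) = ∑ l, y l * y l := by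
      rw [Finset.sum_comm]; simp_rw [← Finset.mul_sum]; rfl
    have h4 : ∑ m, x m * y m = r := rfl
    simp only [Finset.sum_ite_eq, Finset.mem_univ, if_true, Finset.sum_const, Finset.card_univ,
      nsmul_eq_mul, hcard]
    simp only [← Finset.mul_sum, ← Finset.sum_mul, hx, h1, hy', h4]
    have h5 : c * N = τ - r := div_mul_cancel₀ _ h0.ne'
    have h6 : (τ - r) ^ 2 / N = c * (τ - r) := by rw [hc]; ring
    rw [h6]
    linear_combination c * h5
  have h0' : 0 ≤ ∑ m, ∑ l, (F m l - x m * y l - y m * x l + (r + c) * (x m * x l) -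
      if m = l then c else 0) ^ 2 :=
    Finset.sum_nonneg fun _ _ => Finset.sum_nonneg fun _ _ => sq_nonneg _
  rw [key, sub_nonneg, div_le_iff₀ h0] at h0'
  linarith

lemma sq_sum_rotHess_le (hx : ∑ i, x i * x i = 1) (hF : ∀ i j, F i j = F j i) {N : ℝ}
    (hN : N = Fintype.card ι - 1) (h0 : 0 < N) :
    (1 / 2 * ∑ i, ∑ j, rotHess x p F i j i j) ^ 2 ≤
      N * (1 / 4 * ∑ i, ∑ j, ∑ k, ∑ l, rotHess x p F k l i j ^ 2 -
        (N - 1) * (1 / 2 * ∑ i, ∑ j, (x i * p j - x j * p i) ^ 2)) := by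
  rw [sum_rotHess_sq hx hF, sum_rotHess_diag hx, sum_wedge_sq hx]
  have h := sum_sq_ge_trace hx hF hN h0
  have hc : (Fintype.card ι : ℝ) = N + 1 := by rw [hN]; ring
  rw [hc]
  nlinarith

lemma sq_sum_rotHess_add_le (hx : ∑ i, x i * x i = 1) (hF : ∀ i j, F i j = F j i) {N : ℝ}
    (hN : N = Fintype.card ι - 1) (h0 : 0 < N) (β : ℝ) :
    (1 / 2 * ∑ i, ∑ j, (rotHess x p F i j i j + β * (x i * p j - x j * p i) ^ 2)) ^ 2 ≤
      N * (1 / 4 * ∑ i, ∑ j, ∑ k, ∑ l, (rotHess x p F k l i j +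
          β * ((x k * p l - x l * p k) * (x i * p j - x j * p i))) ^ 2 -
        (N - 1) * (1 / 2 * ∑ i, ∑ j, (x i * p j - x j * p i) ^ 2)) := by
  have h := sq_sum_rotHess_le (p := p) (F := fun m l => F m l + β * (p m * p l)) hx
    (fun i j => by rw [hF i j, mul_comm (p i)]) hN h0
  simp only [rotHess_add_rankOne] at h
  simpa only [pow_two (_ - _)] using h

end curvatureAlgebra

section curvatureDimension

/-- The carré du champ of the spherical Laplacian. -/
def rotGamma (g h : E n → ℝ) (x : E n) : ℝ :=
  1 / 2 * ∑ i, ∑ j, rotD i j g x * rotD i j h x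

/-- The spherical Laplacian, as half the sum of squares of the infinitesimal rotations. -/
def rotLap (g : E n → ℝ) (x : E n) : ℝ := 1 / 2 * ∑ i, ∑ j, rotD i j (rotD i j g) x

variable {f : E n → ℝ} {x : E n}

lemma rotD_eq_coord (i j : Fin n) : rotD i j f x =
    x i * fderiv ℝ f x (EuclideanSpace.single j 1) -
      x j * fderiv ℝ f x (EuclideanSpace.single i 1) := by
  simp [rotD, rotGen_apply]

lemma hasFDerivAt_rotD (hf : ContDiffAt ℝ 2 f x) (i j : Fin n) :
    HasFDerivAt (rotD i j f) ((fderiv ℝ f x).comp (rotGen i j) +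
      (fderiv ℝ (fderiv ℝ f) x).flip (rotGen i j x)) x := by
  have h1 : HasFDerivAt (fderiv ℝ f) (fderiv ℝ (fderiv ℝ f) x) x :=
    ((hf.fderiv_right (m := 1) (by norm_num)).differentiableAt one_ne_zero).hasFDerivAt
  exact h1.clm_apply (rotGen i j).hasFDerivAt

lemma rotD_rotD_eq (hf : ContDiffAt ℝ 2 f x) (k l i j : Fin n) :
    rotD k l (rotD i j f) x = fderiv ℝ f x (rotGen i j (rotGen k l x)) +
      fderiv ℝ (fderiv ℝ f) x (rotGen k l x) (rotGen i j x) := by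
  rw [rotD, (hasFDerivAt_rotD hf i j).fderiv]; simp

lemma rotD_rotD_eq_rotHess (hf : ContDiffAt ℝ 2 f x) (k l i j : Fin n) :
    rotD k l (rotD i j f) x = rotHess x (fun m => fderiv ℝ f x (EuclideanSpace.single m 1))
      (fun m l => fderiv ℝ (fderiv ℝ f) x (EuclideanSpace.single m 1)
        (EuclideanSpace.single l 1)) k l i j := by
  rw [rotD_rotD_eq hf]
  simp only [rotGen_apply, map_sub, map_smul, rotHess, rotGrad, FunLike.coe_sub, FunLike.coe_smul,
    Pi.sub_apply, Pi.smul_apply, smul_eq_mul,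
    PiLp.single_apply]
  have e : ∀ a b : Fin n, (if a = b then (1 : ℝ) else 0) = if b = a then 1 else 0 :=
    fun a b => by simp [eq_comm]
  rw [e i, e i, e j, e j]
  ring

/-- The curvature-dimension inequality on the sphere, for second derivatives shifted by a
multiple of the square of the gradient. -/
lemma curvature_dimension (hn : 2 ≤ n) (hx : x ∈ 𝕊) (hf : ContDiffAt ℝ 2 f x) (β : ℝ) :
    (rotLap f x + β * rotGamma f f x) ^ 2 ≤ ((n : ℝ) - 1) *
      (1 / 4 * ∑ i, ∑ j, ∑ k, ∑ l, (rotD k l (rotD i j f) x +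
        β * (rotD k l f x * rotD i j f x)) ^ 2 - ((n : ℝ) - 2) * rotGamma f f x) := by
  have hx' : ∑ i, x i * x i = 1 := by
    have := EuclideanSpace.norm_sq_eq x
    rw [mem_sphere_zero_iff_norm.1 hx] at this
    simpa [pow_two] using this.symm
  have hs : ∀ a b : Fin n, fderiv ℝ (fderiv ℝ f) x (EuclideanSpace.single a 1)
      (EuclideanSpace.single b 1) = fderiv ℝ (fderiv ℝ f) x (EuclideanSpace.single b 1)
      (EuclideanSpace.single a 1) := fun a b => (hf.isSymmSndFDerivAt (by simp)) _ _
  have hn' : (2 : ℝ) ≤ n := by exact_mod_cast hn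
  have h := sq_sum_rotHess_add_le (N := (n : ℝ) - 1)
    (p := fun m => fderiv ℝ f x (EuclideanSpace.single m 1)) hx' hs (by simp) (by linarith) β
  simp only [← rotD_rotD_eq_rotHess hf, ← rotD_eq_coord] at h
  have e1 : rotLap f x + β * rotGamma f f x =
      1 / 2 * ∑ i, ∑ j, (rotD i j (rotD i j f) x + β * rotD i j f x ^ 2) := by
    simp only [rotLap, rotGamma, Finset.sum_add_distrib, ← Finset.mul_sum, pow_two]; ring
  rw [e1]
  simp only [rotGamma, ← pow_two]
  convert h using 3
  ring

end curvatureDimension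

section commutation

variable {g : E n → ℝ} {x : E n}

lemma rotGen_bracket (i j k l : Fin n) (x : E n) :
    rotGen i j (rotGen k l x) - rotGen k l (rotGen i j x) =
      ((if i = l then (1 : ℝ) else 0) • rotGen k j x - (if i = k then (1 : ℝ) else 0) • rotGen l j x
      - (if j = l then (1 : ℝ) else 0) • rotGen k i x
      + (if j = k then (1 : ℝ) else 0) • rotGen l i x) := by
  rw [rotGen_apply i j, rotGen_apply k l (rotGen i j x)]
  simp only [rotGen_apply_coord]
  simp only [rotGen_apply]
  simp only [eq_comm (a := k) (b := i), eq_comm (a := k) (b := j), eq_comm (a := l) (b := i),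
    eq_comm (a := l) (b := j)]
  split_ifs <;> module

/-- The commutator of two infinitesimal rotations. -/
def rotBracket (k l i j : Fin n) (g : E n → ℝ) (x : E n) : ℝ :=
  (if i = l then (1 : ℝ) else 0) * rotD k j g x - (if i = k then (1 : ℝ) else 0) * rotD l j g x
    - (if j = l then (1 : ℝ) else 0) * rotD k i g x + (if j = k then (1 : ℝ) else 0) * rotD l i g x

lemma rotD_rotD_comm (hg : ContDiffAt ℝ 2 g x) (k l i j : Fin n) :
    rotD k l (rotD i j g) x = rotD i j (rotD k l g) x + rotBracket k l i j g x := by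
  have h := congrArg (fderiv ℝ g x) (rotGen_bracket i j k l x)
  simp only [map_sub, map_add, map_smul, smul_eq_mul] at h
  rw [rotD_rotD_eq hg, rotD_rotD_eq hg, (hg.isSymmSndFDerivAt (by simp)) (rotGen k l x)]
  simp only [rotBracket, rotD]
  linarith

lemma ContDiffAt.rotD {k l : ℕ∞ω} (hg : ContDiffAt ℝ k g x) (hl : l + 1 ≤ k) (i j : Fin n) :
    ContDiffAt ℝ l (rotD i j g) x :=
  (hg.fderiv_right hl).clm_apply (rotGen i j).contDiff.contDiffAt

lemma rotD_rotBracket (hg : ContDiffAt ℝ 2 g x) (k l i j : Fin n) :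
    rotD k l (rotBracket k l i j g) x =
      (if i = l then (1 : ℝ) else 0) * rotD k l (rotD k j g) x -
      (if i = k then (1 : ℝ) else 0) * rotD k l (rotD l j g) x
      - (if j = l then (1 : ℝ) else 0) * rotD k l (rotD k i g) x +
      (if j = k then (1 : ℝ) else 0) * rotD k l (rotD l i g) x := by
  have hd : ∀ a b (c : ℝ), DifferentiableAt ℝ (fun y => c * rotD a b g y) x := fun a b c =>
    ((ContDiffAt.rotD hg (l := 1) (by norm_num) a b).differentiableAt one_ne_zero).const_mul c
  have hd' : ∀ a b, DifferentiableAt ℝ (rotD a b g) x := fun a b =>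
    ((ContDiffAt.rotD hg (l := 1) (by norm_num) a b).differentiableAt one_ne_zero)
  unfold rotBracket
  rw [rotD_add _ _ (((hd _ _ _).fun_sub (hd _ _ _)).fun_sub (hd _ _ _)) (hd _ _ _),
    rotD_sub _ _ ((hd _ _ _).fun_sub (hd _ _ _)) (hd _ _ _), rotD_sub _ _ (hd _ _ _) (hd _ _ _)]
  simp only [rotD_const_mul _ _ (hd' _ _)]

lemma rotD_fun_swap (i j : Fin n) : rotD j i g = fun x => - rotD i j g x :=
  funext fun _ => rotD_swap i j

lemma sum_rotBracket_eq_zero (hg : ContDiffAt ℝ 2 g x) (i j : Fin n) :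
    ∑ k, ∑ l, (rotBracket k l i j (rotD k l g) x + rotD k l (rotBracket k l i j g) x) = 0 := by
  simp only [rotD_rotBracket hg]
  simp only [rotBracket, ite_mul, one_mul, zero_mul, Finset.sum_add_distrib,
    Finset.sum_sub_distrib]
  have hs : ∀ F : Fin n → Fin n → ℝ, ∀ a : Fin n,
      ∑ k, ∑ l, (if a = k then F k l else 0) = ∑ l, F a l := fun F a => by
    rw [Finset.sum_comm]; simp
  rw [hs, hs, hs, hs]
  simp only [Finset.sum_ite_eq, Finset.mem_univ, if_true]
  have e1 : ∀ l, rotD l j (rotD i l g) x = - rotD l j (rotD l i g) x := fun l => by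
    rw [rotD_fun_swap l i, rotD_neg]
  have e2 : ∀ l, rotD l i (rotD j l g) x = - rotD l i (rotD l j g) x := fun l => by
    rw [rotD_fun_swap l j, rotD_neg]
  have e3 : ∀ l, rotD i l (rotD l j g) x = - rotD l i (rotD l j g) x := fun l => rotD_swap l i
  have e4 : ∀ l, rotD j l (rotD l i g) x = - rotD l j (rotD l i g) x := fun l => rotD_swap l j
  simp only [e1, e2, e3, e4, Finset.sum_neg_distrib]
  ring

/-- The spherical Laplacian commutes with infinitesimal rotations. -/
lemma rotLap_rotD (hg : ContDiffAt ℝ 3 g x) (i j : Fin n) :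
    rotLap (rotD i j g) x = rotD i j (rotLap g) x := by
  have h2 : ContDiffAt ℝ 2 g x := hg.of_le (by norm_num)
  have hd : ∀ a b, ContDiffAt ℝ 2 (rotD a b g) x := fun a b =>
    ContDiffAt.rotD hg (by norm_num) a b
  have hd2 : ∀ a b c d, DifferentiableAt ℝ (rotD c d (rotD a b g)) x := fun a b c d =>
    (ContDiffAt.rotD (hd a b) (l := 1) (by norm_num) c d).differentiableAt one_ne_zero
  have hB : ∀ k l, DifferentiableAt ℝ (rotBracket k l i j g) x := fun k l => by
    have h' : ∀ a b (c : ℝ), DifferentiableAt ℝ (fun y => c * rotD a b g y) x := fun a b c =>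
      ((hd a b).differentiableAt two_ne_zero).const_mul c
    exact (((h' _ _ _).sub (h' _ _ _)).sub (h' _ _ _)).add (h' _ _ _)
  have key : ∀ k l, rotD k l (rotD k l (rotD i j g)) x = rotD i j (rotD k l (rotD k l g)) x +
      (rotBracket k l i j (rotD k l g) x + rotD k l (rotBracket k l i j g) x) := fun k l => by
    have h1 : rotD k l (rotD i j g) =ᶠ[𝓝 x]
        fun y => rotD i j (rotD k l g) y + rotBracket k l i j g y :=
      (h2.eventually (by simp)).mono fun y hy => rotD_rotD_comm hy k l i j
    rw [rotD_congr k l h1, rotD_add k l (hd2 _ _ _ _) (hB k l), rotD_rotD_comm (hd k l)]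
    ring
  have h3 : rotD i j (rotLap g) x =
      1 / 2 * ∑ k, ∑ l, rotD i j (rotD k l (rotD k l g)) x := by
    unfold rotLap
    rw [rotD_const_mul _ _ (.fun_sum fun k _ => .fun_sum fun l _ => hd2 _ _ _ _),
      rotD_sum _ _ (fun k _ => .fun_sum fun l _ => hd2 _ _ _ _)]
    simp only [rotD_sum _ _ (fun l _ => hd2 _ _ _ _)]
  rw [h3, rotLap]
  simp only [key, Finset.sum_add_distrib (ι := Fin n)]
  have := sum_rotBracket_eq_zero h2 i j
  simp only [Finset.sum_add_distrib] at this
  rw [this, add_zero]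

end commutation

section gammaCalculus

variable {f g h : E n → ℝ} {x : E n} {k l : ℕ∞ω}

lemma ContDiffAt.rotGamma (hg : ContDiffAt ℝ k g x) (hh : ContDiffAt ℝ k h x) (hl : l + 1 ≤ k) :
    ContDiffAt ℝ l (rotGamma g h) x :=
  contDiffAt_const.mul (ContDiffAt.sum fun i _ => ContDiffAt.sum fun j _ =>
    (ContDiffAt.rotD hg hl i j).mul (ContDiffAt.rotD hh hl i j))

lemma ContDiffAt.rotLap (hg : ContDiffAt ℝ k g x) (hl : l + 1 + 1 ≤ k) :
    ContDiffAt ℝ l (rotLap g) x :=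
  contDiffAt_const.mul (ContDiffAt.sum fun i _ => ContDiffAt.sum fun j _ =>
    (ContDiffAt.rotD (ContDiffAt.rotD hg hl i j) le_rfl i j))

lemma SphSmooth.rotGamma (hg : SphSmooth k g) (hh : SphSmooth k h) (hl : l + 1 ≤ k) :
    SphSmooth l (rotGamma g h) := fun x hx => ContDiffAt.rotGamma (hg x hx) (hh x hx) hl

lemma SphSmooth.rotLap (hg : SphSmooth k g) (hl : l + 1 + 1 ≤ k) :
    SphSmooth l (rotLap g) := fun x hx => ContDiffAt.rotLap (hg x hx) hl

lemma rotGamma_self_nonneg : 0 ≤ rotGamma g g x :=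
  mul_nonneg (by norm_num) (Finset.sum_nonneg fun _ _ => Finset.sum_nonneg fun _ _ =>
    mul_self_nonneg _)

lemma rotGamma_comm : rotGamma g h x = rotGamma h g x := by
  simp only [rotGamma, mul_comm]

lemma rotGamma_exp_left (hf : DifferentiableAt ℝ f x) :
    rotGamma (fun y => Real.exp (f y)) h x = Real.exp (f x) * rotGamma f h x := by
  simp only [rotGamma, rotD_exp _ _ hf, mul_assoc, ← Finset.mul_sum]; ring

lemma rotLap_mul (hg : ContDiffAt ℝ 2 g x) (hh : ContDiffAt ℝ 2 h x) :
    rotLap (fun y => g y * h y) x =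
      g x * rotLap h x + h x * rotLap g x + 2 * rotGamma g h x := by
  have h1 : ∀ i j, rotD i j (rotD i j fun y => g y * h y) x =
      g x * rotD i j (rotD i j h) x + h x * rotD i j (rotD i j g) x +
        2 * (rotD i j g x * rotD i j h x) := fun i j => by
    have e : rotD i j (fun y => g y * h y) =ᶠ[𝓝 x]
        fun y => g y * rotD i j h y + h y * rotD i j g y := by
      filter_upwards [hg.eventually (by simp), hh.eventually (by simp)] with y h1 h2
      exact rotD_mul i j (h1.differentiableAt two_ne_zero) (h2.differentiableAt two_ne_zero)
    have d1 := hg.differentiableAt two_ne_zero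
    have d2 := hh.differentiableAt two_ne_zero
    have d3 := (ContDiffAt.rotD hg (l := 1) (by norm_num) i j).differentiableAt one_ne_zero
    have d4 := (ContDiffAt.rotD hh (l := 1) (by norm_num) i j).differentiableAt one_ne_zero
    rw [rotD_congr i j e, rotD_add i j (d1.fun_mul d4) (d2.fun_mul d3), rotD_mul i j d1 d4,
      rotD_mul i j d2 d3]
    ring
  simp only [rotLap, rotGamma, h1, Finset.sum_add_distrib, ← Finset.mul_sum]
  ring

lemma rotLap_exp (hf : ContDiffAt ℝ 2 f x) :
    rotLap (fun y => Real.exp (f y)) x = Real.exp (f x) * (rotLap f x + rotGamma f f x) := by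
  have h1 : ∀ i j, rotD i j (rotD i j fun y => Real.exp (f y)) x =
      Real.exp (f x) * (rotD i j (rotD i j f) x + rotD i j f x * rotD i j f x) := fun i j => by
    have e : rotD i j (fun y => Real.exp (f y)) =ᶠ[𝓝 x]
        fun y => Real.exp (f y) * rotD i j f y := by
      filter_upwards [hf.eventually (by simp)] with y h1
      exact rotD_exp i j (h1.differentiableAt two_ne_zero)
    have d1 := hf.differentiableAt two_ne_zero
    have d3 := (ContDiffAt.rotD hf (l := 1) (by norm_num) i j).differentiableAt one_ne_zero
    rw [rotD_congr i j e, rotD_mul i j d1.exp d3, rotD_exp i j d1]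
    ring
  simp only [rotLap, rotGamma, h1, Finset.sum_add_distrib, ← Finset.mul_sum]
  ring

lemma rotLap_const_mul (hg : ContDiffAt ℝ 2 g x) (c : ℝ) :
    rotLap (fun y => c * g y) x = c * rotLap g x := by
  have h1 : ∀ i j, rotD i j (rotD i j fun y => c * g y) x = c * rotD i j (rotD i j g) x :=
    fun i j => by
    have e : rotD i j (fun y => c * g y) =ᶠ[𝓝 x] fun y => c * rotD i j g y := by
      filter_upwards [hg.eventually (by simp)] with y h1
      exact rotD_const_mul i j (h1.differentiableAt two_ne_zero) c
    have d3 := (ContDiffAt.rotD hg (l := 1) (by norm_num) i j).differentiableAt one_ne_zero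
    rw [rotD_congr i j e, rotD_const_mul i j d3]
  simp only [rotLap, h1, ← Finset.mul_sum]
  ring

lemma rotLap_sum {ι : Type*} {s : Finset ι} {G : ι → E n → ℝ}
    (hG : ∀ a ∈ s, ContDiffAt ℝ 2 (G a) x) :
    rotLap (fun y => ∑ a ∈ s, G a y) x = ∑ a ∈ s, rotLap (G a) x := by
  have h1 : ∀ i j, rotD i j (rotD i j fun y => ∑ a ∈ s, G a y) x =
      ∑ a ∈ s, rotD i j (rotD i j (G a)) x := fun i j => by
    have e : rotD i j (fun y => ∑ a ∈ s, G a y) =ᶠ[𝓝 x] fun y => ∑ a ∈ s, rotD i j (G a) y := by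
      have : ∀ᶠ y in 𝓝 x, ∀ a ∈ s, ContDiffAt ℝ 2 (G a) y :=
        (Filter.eventually_all_finset s).2 fun a ha => (hG a ha).eventually (by simp)
      filter_upwards [this] with y h1
      exact rotD_sum i j fun a ha => (h1 a ha).differentiableAt two_ne_zero
    rw [rotD_congr i j e, rotD_sum i j fun a ha =>
      (ContDiffAt.rotD (hG a ha) (l := 1) (by norm_num) i j).differentiableAt one_ne_zero]
  simp only [rotLap, h1]
  rw [← Finset.mul_sum, Finset.sum_comm (s := s)]
  simp only [Finset.sum_comm (s := s)]

lemma sum_sum_comm_pairs {ι : Type*} [Fintype ι] (F : ι → ι → ι → ι → ℝ) :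
    ∑ i, ∑ j, ∑ k, ∑ l, F i j k l = ∑ k, ∑ l, ∑ i, ∑ j, F i j k l := by
  calc _ = ∑ p : ι × ι, ∑ q : ι × ι, F p.1 p.2 q.1 q.2 := by simp only [Fintype.sum_prod_type]
    _ = ∑ q : ι × ι, ∑ p : ι × ι, F p.1 p.2 q.1 q.2 := Finset.sum_comm
    _ = _ := by simp only [Fintype.sum_prod_type]

lemma rotD_rotGamma_self (hf : ContDiffAt ℝ 2 f x) (k l : Fin n) :
    rotD k l (rotGamma f f) x = ∑ i, ∑ j, rotD i j f x * rotD k l (rotD i j f) x := by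
  have d : ∀ i j, DifferentiableAt ℝ (rotD i j f) x := fun i j =>
    (ContDiffAt.rotD hf (l := 1) (by norm_num) i j).differentiableAt one_ne_zero
  unfold rotGamma
  rw [rotD_const_mul _ _ (.fun_sum fun i _ => .fun_sum fun j _ => (d i j).fun_mul (d i j)),
    rotD_sum _ _ (fun i _ => .fun_sum fun j _ => (d i j).fun_mul (d i j))]
  simp only [rotD_sum k l fun j _ => (d _ j).fun_mul (d _ j), rotD_mul k l (d _ _) (d _ _),
    Finset.sum_add_distrib]
  ring

/-- Bochner's formula on the sphere. -/
lemma rotLap_rotGamma_self (hf : ContDiffAt ℝ 3 f x) :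
    rotLap (rotGamma f f) x = 2 * rotGamma f (rotLap f) x +
      1 / 2 * ∑ i, ∑ j, ∑ k, ∑ l, rotD k l (rotD i j f) x ^ 2 := by
  have d : ∀ i j, ContDiffAt ℝ 2 (rotD i j f) x := fun i j => ContDiffAt.rotD hf (by norm_num) i j
  have e : rotLap (rotGamma f f) x =
      1 / 2 * ∑ i, ∑ j, rotLap (fun y => rotD i j f y * rotD i j f y) x := by
    unfold rotGamma
    rw [rotLap_const_mul (.sum fun i _ => .sum fun j _ => (d i j).mul (d i j)),
      rotLap_sum (fun i _ => .sum fun j _ => (d i j).mul (d i j))]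
    simp only [rotLap_sum fun j _ => (d _ j).mul (d _ j)]
  rw [e]
  simp only [rotLap_mul (d _ _) (d _ _), rotLap_rotD hf]
  simp only [rotGamma, Finset.sum_add_distrib, ← pow_two, ← Finset.mul_sum]
  ring

lemma integral_rotGamma [NeZero n] (hg : SphSmooth 1 g) (hh : SphSmooth 2 h) :
    ∫ x, rotGamma g h x ∂sphMeasure n = - ∫ x, g x * rotLap h x ∂sphMeasure n := by
  have h0 : ∀ i j, SphSmooth 0 (rotD i j g) := fun i j => hg.rotD (by norm_num) i j
  have h1 : ∀ i j, SphSmooth 1 (rotD i j h) := fun i j => hh.rotD (by norm_num) i j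
  have h2 : ∀ i j, SphSmooth 0 (rotD i j (rotD i j h)) := fun i j => (h1 i j).rotD (by norm_num) i j
  have hg0 := hg.of_le (l := 0) (by norm_num)
  have i1 : ∀ i j, Integrable (fun x => rotD i j g x * rotD i j h x) (sphMeasure n) := fun i j =>
    integrable_of_continuousOn ((h0 i j).mul ((h1 i j).of_le (by norm_num))).continuousOn
  have i2 : ∀ i j, Integrable (fun x => g x * rotD i j (rotD i j h) x) (sphMeasure n) := fun i j =>
    integrable_of_continuousOn (hg0.mul (h2 i j)).continuousOn
  have e : ∀ x, g x * rotLap h x =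
      1 / 2 * ∑ i, ∑ j, g x * rotD i j (rotD i j h) x := fun x => by
    simp only [rotLap, ← Finset.mul_sum]; ring
  simp only [e, rotGamma]
  rw [integral_const_mul, integral_const_mul,
    integral_finsetSum _ fun i _ => integrable_finsetSum _ fun j _ => i1 i j,
    integral_finsetSum _ fun i _ => integrable_finsetSum _ fun j _ => i2 i j]
  simp only [integral_finsetSum _ fun j _ => i1 _ j, integral_finsetSum _ fun j _ => i2 _ j]
  have : ∀ i j, ∫ x, rotD i j g x * rotD i j h x ∂sphMeasure n =
      - ∫ x, g x * rotD i j (rotD i j h) x ∂sphMeasure n := fun i j => by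
    rw [integral_mul_rotD hg (h1 i j), neg_neg]
    simp only [mul_comm]
  simp only [this, Finset.sum_neg_distrib]
  ring

lemma integral_exp_mul_rotGamma [NeZero n] (hf : SphSmooth 2 f) (hh : SphSmooth 1 h) :
    ∫ x, Real.exp (f x) * rotGamma f h x ∂sphMeasure n =
      - ∫ x, h x * (Real.exp (f x) * (rotLap f x + rotGamma f f x)) ∂sphMeasure n := by
  have h1 := integral_rotGamma hh hf.exp
  rw [integral_congr_sphere fun x hx => rotGamma_comm.trans
    (rotGamma_exp_left (hf.differentiableAt two_ne_zero hx))] at h1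
  rw [h1, integral_congr_sphere fun x hx => by rw [rotLap_exp (hf x hx)]]

end gammaCalculus

section static

variable {f : E n → ℝ}

/-- The dissipation of the Fisher information dominates the Fisher information. -/
lemma fisher_dissipation_ge (hn : 3 ≤ n) (hf : SphSmooth 3 f) :
    ((n : ℝ) - 1) * ∫ x, Real.exp (f x) * rotGamma f f x ∂sphMeasure n ≤
      ∫ x, Real.exp (f x) * (rotLap f x ^ 2 + 3 / 2 * (rotLap f x * rotGamma f f x) +
        1 / 2 * rotGamma f f x ^ 2) ∂sphMeasure n := by
  have : NeZero n := ⟨by omega⟩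
  have hn' : (3 : ℝ) ≤ n := by exact_mod_cast hn
  have hf2 : SphSmooth 2 f := hf.of_le (by norm_num)
  have hΓ : SphSmooth 2 (rotGamma f f) := hf.rotGamma hf (by norm_num)
  have hΔ : SphSmooth 1 (rotLap f) := hf.rotLap (by norm_num)
  have cf : ContinuousOn f 𝕊 := hf.continuousOn
  have cE : ContinuousOn (fun x => Real.exp (f x)) 𝕊 := hf.exp.continuousOn
  have cΓ := hΓ.continuousOn
  have cΔ := hΔ.continuousOn
  have cD : ∀ i j k l, ContinuousOn (rotD k l (rotD i j f)) 𝕊 := fun i j k l =>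
    ((hf2.rotD (l := 1) (by norm_num) i j).rotD (l := 0) (by norm_num) k l).continuousOn
  set G2 : E n → ℝ := fun x => 1 / 4 * ∑ i, ∑ j, ∑ k, ∑ l, rotD k l (rotD i j f) x ^ 2 with hG2
  have cG2 : ContinuousOn G2 𝕊 := continuousOn_const.mul (continuousOn_finsetSum _ fun i _ =>
    continuousOn_finsetSum _ fun j _ => continuousOn_finsetSum _ fun k _ =>
    continuousOn_finsetSum _ fun l _ => (cD i j k l).pow 2)
  set μ := sphMeasure n
  set a := ∫ x, Real.exp (f x) * rotLap f x ^ 2 ∂μ with ha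
  set b := ∫ x, Real.exp (f x) * (rotLap f x * rotGamma f f x) ∂μ with hb
  set c := ∫ x, Real.exp (f x) * rotGamma f f x ^ 2 ∂μ with hc
  set J := ∫ x, Real.exp (f x) * rotGamma f f x ∂μ with hJ
  have ia : Integrable (fun x => Real.exp (f x) * rotLap f x ^ 2) μ :=
    integrable_of_continuousOn (cE.mul (cΔ.pow 2))
  have ib : Integrable (fun x => Real.exp (f x) * (rotLap f x * rotGamma f f x)) μ :=
    integrable_of_continuousOn (cE.mul (cΔ.mul cΓ))
  have ic : Integrable (fun x => Real.exp (f x) * rotGamma f f x ^ 2) μ :=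
    integrable_of_continuousOn (cE.mul (cΓ.pow 2))
  have iJ : Integrable (fun x => Real.exp (f x) * rotGamma f f x) μ :=
    integrable_of_continuousOn (cE.mul cΓ)
  have iG : Integrable (fun x => Real.exp (f x) * G2 x) μ :=
    integrable_of_continuousOn (cE.mul cG2)
  have cGΓ : ContinuousOn (rotGamma f (rotGamma f f)) 𝕊 :=
    ((hf.of_le (l := 1) (by norm_num)).rotGamma (l := 0) (hΓ.of_le (by norm_num))
      (by norm_num)).continuousOn
  have cGΔ : ContinuousOn (rotGamma f (rotLap f)) 𝕊 :=
    ((hf.of_le (l := 1) (by norm_num)).rotGamma (l := 0) hΔ (by norm_num)).continuousOn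
  have iGΓ : Integrable (fun x => Real.exp (f x) * rotGamma f (rotGamma f f) x) μ :=
    integrable_of_continuousOn (cE.mul cGΓ)
  have iGΔ : Integrable (fun x => Real.exp (f x) * rotGamma f (rotLap f) x) μ :=
    integrable_of_continuousOn (cE.mul cGΔ)
  have e1 : ∫ x, Real.exp (f x) * rotGamma f (rotGamma f f) x ∂μ = - (b + c) := by
    rw [integral_exp_mul_rotGamma hf2 (hΓ.of_le (by norm_num)), hb, hc, ← integral_add ib ic]
    congr 2; ext x; ring
  have e2 : ∫ x, Real.exp (f x) * rotGamma f (rotLap f) x ∂μ = - (a + b) := by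
    rw [integral_exp_mul_rotGamma hf2 hΔ, ha, hb, ← integral_add ia ib]
    congr 2; ext x; ring
  have e3 : ∫ x, Real.exp (f x) * G2 x ∂μ = a + 3 / 2 * b + 1 / 2 * c := by
    have h1 := integral_rotGamma (hf.exp.of_le (l := 1) (by norm_num)) hΓ
    rw [integral_congr_sphere fun x hx =>
      rotGamma_exp_left (hf.differentiableAt three_ne_zero hx), e1] at h1
    rw [integral_congr_sphere (h := fun x => 2 * (Real.exp (f x) * rotGamma f (rotLap f) x) +
      2 * (Real.exp (f x) * G2 x)) (fun x hx => by
        rw [rotLap_rotGamma_self (hf x hx)]; simp only [hG2]; ring),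
      integral_add (iGΔ.const_mul 2) (iG.const_mul 2), integral_const_mul, integral_const_mul,
      e2] at h1
    linarith
  have e4 : ∫ x, Real.exp (f x) * (rotLap f x ^ 2 + 3 / 2 * (rotLap f x * rotGamma f f x) +
        1 / 2 * rotGamma f f x ^ 2) ∂μ = a + 3 / 2 * b + 1 / 2 * c := by
    rw [ha, hb, hc, ← integral_const_mul, ← integral_const_mul, ← integral_add ia (ib.const_mul _),
      ← integral_add (ia.fun_add (ib.const_mul _)) (ic.const_mul _)]
    congr 1; ext x; ring
  have hc0 : 0 ≤ c := integral_nonneg fun x => by positivity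
  set β : ℝ := 3 / (2 * (n + 1)) with hβ
  have key : a + 2 * β * b + β ^ 2 * c ≤ ((n : ℝ) - 1) * (a + 3 / 2 * b + 1 / 2 * c +
      β * (- (b + c)) + β ^ 2 * c - ((n : ℝ) - 2) * J) := by
    rw [← e3, ← e1, ha, hb, hc, hJ]
    have eL : ∫ x, Real.exp (f x) * (rotLap f x + β * rotGamma f f x) ^ 2 ∂μ =
        a + 2 * β * b + β ^ 2 * c := by
      rw [ha, hb, hc, ← integral_const_mul, ← integral_const_mul,
        ← integral_add ia (ib.const_mul _), ← integral_add (ia.fun_add (ib.const_mul _))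
        (ic.const_mul _)]
      congr 1; ext x; ring
    have eR : ∫ x, Real.exp (f x) * (((n : ℝ) - 1) * (G2 x + β * rotGamma f (rotGamma f f) x +
        β ^ 2 * rotGamma f f x ^ 2 - ((n : ℝ) - 2) * rotGamma f f x)) ∂μ =
        ((n : ℝ) - 1) * (∫ x, Real.exp (f x) * G2 x ∂μ +
          β * ∫ x, Real.exp (f x) * rotGamma f (rotGamma f f) x ∂μ + β ^ 2 * c -
          ((n : ℝ) - 2) * J) := by
      rw [hc, hJ, ← integral_const_mul, ← integral_const_mul, ← integral_const_mul,
        ← integral_add iG (iGΓ.const_mul _), ← integral_add (iG.fun_add (iGΓ.const_mul _))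
        (ic.const_mul _), ← integral_sub ((iG.fun_add (iGΓ.const_mul _)).fun_add (ic.const_mul _))
        (iJ.const_mul _), ← integral_const_mul]
      congr 1; ext x; ring
    rw [← ha, ← hb, ← hc, ← hJ, ← eL, ← eR]
    refine integral_mono_sphere (cE.mul ((cΔ.add (continuousOn_const.mul cΓ)).pow 2))
      (cE.mul (continuousOn_const.mul (((cG2.add (continuousOn_const.mul cGΓ)).add
        (continuousOn_const.mul (cΓ.pow 2))).sub (continuousOn_const.mul cΓ)))) fun x hx => ?_
    refine mul_le_mul_of_nonneg_left ((curvature_dimension (by omega) hx (hf2 x hx) β).trans_eq ?_)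
      (Real.exp_pos _).le
    have q1 : rotGamma f (rotGamma f f) x = 1 / 2 * ∑ i, ∑ j, ∑ k, ∑ l,
        rotD k l (rotD i j f) x * (rotD k l f x * rotD i j f x) := by
      rw [rotGamma, sum_sum_comm_pairs]
      simp only [rotD_rotGamma_self (hf2 x hx), Finset.mul_sum]
      simp only [mul_comm, mul_left_comm]
    have q2 : rotGamma f f x ^ 2 = 1 / 4 * ∑ i, ∑ j, ∑ k, ∑ l,
        (rotD k l f x * rotD i j f x) ^ 2 := by
      have h1 : ∀ S : ℝ, (1 / 2 * S) ^ 2 = 1 / 4 * (S * S) := fun S => by ring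
      simp only [mul_pow, ← Finset.sum_mul, ← Finset.mul_sum]
      rw [rotGamma, h1]
      simp only [pow_two]
    have q3 : ∀ i j k l, (rotD k l (rotD i j f) x + β * (rotD k l f x * rotD i j f x)) ^ 2 =
        rotD k l (rotD i j f) x ^ 2 +
          2 * β * (rotD k l (rotD i j f) x * (rotD k l f x * rotD i j f x)) +
          β ^ 2 * (rotD k l f x * rotD i j f x) ^ 2 := fun i j k l => by ring
    rw [q1, q2]
    simp only [hG2, q3, Finset.sum_add_distrib, ← Finset.mul_sum]
    ring
  have hβ' : β * (n + 1) = 3 / 2 := by rw [hβ]; field_simp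
  rw [e4]
  have hD : ((n : ℝ) - 1) * β - ((n : ℝ) - 2) * β ^ 2 - 1 / 2 =
      ((n : ℝ) - 2) * (n - 5 / 4) / (n + 1) ^ 2 := by
    rw [hβ]; field_simp; ring
  have h5 : 0 ≤ c * (((n : ℝ) - 2) * (n - 5 / 4) / (n + 1) ^ 2) :=
    mul_nonneg hc0 (div_nonneg (by nlinarith) (by positivity))
  rw [← hD] at h5
  have h7 : 0 ≤ ((n : ℝ) - 2) * (a + 3 / 2 * b + 1 / 2 * c - ((n : ℝ) - 1) * J) := by
    linear_combination key + h5 - b * hβ'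
  have h8 := nonneg_of_mul_nonneg_right h7 (by linarith)
  linarith

end static

section maximumPrinciple

lemma secondDeriv_nonpos_of_isMax {φ φ' : ℝ → ℝ} {c : ℝ} (h1 : ∀ s, HasDerivAt φ (φ' s) s)
    (h2 : HasDerivAt φ' c 0) (hmax : ∀ s, φ s ≤ φ 0) : c ≤ 0 := by
  by_contra! hc
  have e1 : deriv φ = φ' := funext fun s => (h1 s).deriv
  have hM : IsLocalMax φ 0 := Eventually.of_forall hmax
  have h0 : deriv φ 0 = 0 := hM.deriv_eq_zero
  have hm : IsLocalMin φ 0 := isLocalMin_of_deriv_deriv_pos (by rwa [e1, h2.deriv]) h0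
    (h1 0).continuousAt
  have he : φ =ᶠ[𝓝 0] fun _ => φ 0 := by
    filter_upwards [hM, hm] with s a b using le_antisymm a b
  have he2 : φ' =ᶠ[𝓝 0] fun _ => 0 := by
    have := he.deriv
    rw [e1] at this
    simpa using this
  have := (h2.congr_of_eventuallyEq he2.symm).unique (hasDerivAt_const 0 (0 : ℝ))
  exact hc.ne' this

lemma rotLap_nonpos_of_isMax {g : E n → ℝ} (hg : SphSmooth 2 g) {x : E n} (hx : x ∈ 𝕊)
    (hmax : ∀ y ∈ 𝕊, g y ≤ g x) : rotLap g x ≤ 0 := by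
  refine mul_nonpos_of_nonneg_of_nonpos (by norm_num)
    (Finset.sum_nonpos fun i _ => Finset.sum_nonpos fun j _ => ?_)
  have h1 : ∀ s, HasDerivAt (fun s => g (rotFlow i j s x)) (rotD i j g (rotFlow i j s x)) s :=
    fun s => hasDerivAt_comp_rotFlow i j
      (hg.differentiableAt two_ne_zero (rotFlow_mem_sphere i j s hx))
  have h2 : HasDerivAt (fun s => rotD i j g (rotFlow i j s x)) (rotD i j (rotD i j g) x) 0 := by
    have := hasDerivAt_comp_rotFlow (g := rotD i j g) i j (s := 0) (x := x)
      (by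
        rw [rotFlow_zero]
        exact (hg.rotD (l := 1) (by norm_num) i j).differentiableAt one_ne_zero hx)
    rwa [rotFlow_zero] at this
  exact secondDeriv_nonpos_of_isMax h1 h2 fun s => by
    simpa using hmax _ (rotFlow_mem_sphere i j s hx)

/-- The parabolic maximum principle on the sphere. -/
lemma parabolic_maximum {w w' : ℝ → E n → ℝ} {T M : ℝ}
    (hc : ContinuousOn (Function.uncurry w) (Set.Icc 0 T ×ˢ 𝕊))
    (hs : ∀ t ∈ Set.Icc 0 T, SphSmooth 2 (w t))
    (hd : ∀ t ∈ Set.Icc 0 T, ∀ x ∈ 𝕊, HasDerivAt (fun s => w s x) (w' t x) t)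
    (hle : ∀ t ∈ Set.Icc 0 T, ∀ x ∈ 𝕊, w' t x ≤ rotLap (w t) x)
    (h0 : ∀ x ∈ 𝕊, w 0 x ≤ M) {t : ℝ} (ht : t ∈ Set.Icc 0 T) {x : E n} (hx : x ∈ 𝕊) :
    w t x ≤ M := by
  by_contra! hlt
  obtain ⟨ε, hε, hεt⟩ : ∃ ε > 0, M < w t x - ε * t := by
    refine ⟨(w t x - M) / (2 * (t + 1)), div_pos (by linarith) (by linarith [ht.1]), ?_⟩
    have : (w t x - M) / (2 * (t + 1)) * t ≤ (w t x - M) / 2 := by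
      rw [div_mul_eq_mul_div, div_le_div_iff₀ (by linarith [ht.1]) two_pos]
      nlinarith [ht.1]
    linarith
  have hcv : ContinuousOn (fun p : ℝ × E n => w p.1 p.2 - ε * p.1) (Set.Icc 0 T ×ˢ 𝕊) :=
    hc.sub (by fun_prop)
  obtain ⟨⟨t₁, x₁⟩, ⟨ht₁, hx₁⟩, hmax⟩ := (isCompact_Icc.prod
    (isCompact_sphere (0 : E n) 1)).exists_isMaxOn ⟨(t, x), ht, hx⟩ hcv
  have hm : ∀ s ∈ Set.Icc 0 T, ∀ y ∈ 𝕊, w s y - ε * s ≤ w t₁ x₁ - ε * t₁ :=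
    fun s hs y hy => hmax (show (s, y) ∈ Set.Icc 0 T ×ˢ 𝕊 from ⟨hs, hy⟩)
  have ht₁0 : 0 < t₁ := by
    rcases ht₁.1.eq_or_lt with h | h
    · have h1 := hm t ht x hx
      have h2 := h0 x₁ hx₁
      dsimp only at h
      rw [← h] at h1
      linarith
    · exact h
  have hL : rotLap (w t₁) x₁ ≤ 0 := rotLap_nonpos_of_isMax (hs t₁ ht₁) hx₁ fun y hy => by
    linarith [hm t₁ ht₁ y hy]
  have hd₁ : HasDerivAt (fun s => w s x₁ - ε * s) (w' t₁ x₁ - ε) t₁ := by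
    simpa using (hd t₁ ht₁ x₁ hx₁).fun_sub ((hasDerivAt_id t₁).const_mul ε)
  have hge : 0 ≤ w' t₁ x₁ - ε := by
    have ht2 := hd₁.tendsto_slope.mono_left (nhdsWithin_mono t₁ (s := Set.Iio t₁)
      fun s hs => ne_of_lt hs)
    refine ge_of_tendsto ht2 ?_
    filter_upwards [Ioo_mem_nhdsLT ht₁0] with s hs
    rw [slope_def_field]
    exact div_nonneg_of_nonpos (by linarith [hm s ⟨hs.1.le, hs.2.le.trans ht₁.2⟩ x₁ hx₁])
      (by linarith [hs.2])
  linarith [hle t₁ ht₁ x₁ hx₁]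

end maximumPrinciple

section heatFlow

lemma three_le_infty : (3 : ℕ∞ω) ≤ (∞ : ℕ∞ω) := WithTop.coe_le_coe.2 le_top

lemma two_le_infty : (2 : ℕ∞ω) ≤ (∞ : ℕ∞ω) := WithTop.coe_le_coe.2 le_top

lemma contDiff_rotD {g : E n → ℝ} (hg : ContDiff ℝ (∞ : ℕ∞ω) g) (i j : Fin n) :
    ContDiff ℝ (∞ : ℕ∞ω) (rotD i j g) :=
  contDiff_iff_contDiffAt.2 fun _ => ContDiffAt.rotD hg.contDiffAt (by simp) i j

/-- A solution of the heat equation on the sphere in a finite-dimensional space of functions. -/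
structure HeatSystem (n : ℕ) where
  /-- The dimension of the space of functions. -/
  d : ℕ
  /-- The functions. -/
  e : Fin d → E n → ℝ
  /-- The coordinates. -/
  c : ℝ → Fin d → ℝ
  /-- The derivatives of the coordinates. -/
  c' : ℝ → Fin d → ℝ
  contDiff_e : ∀ a, ContDiff ℝ (∞ : ℕ∞ω) (e a)
  hasDerivAt_c : ∀ a t, HasDerivAt (fun s => c s a) (c' t a) t
  heat : ∀ t x, ∑ a, c' t a * e a x = rotLap (fun y => ∑ a, c t a * e a y) x

namespace HeatSystem

variable (H : HeatSystem n)

/-- The solution defined by a heat system. -/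
def sol (t : ℝ) (x : E n) : ℝ := ∑ a, H.c t a * H.e a x

lemma contDiff_sol (t : ℝ) : ContDiff ℝ (∞ : ℕ∞ω) (H.sol t) :=
  ContDiff.sum fun a _ => contDiff_const.mul (H.contDiff_e a)

lemma contDiffAt_sol (t : ℝ) (x : E n) : ContDiffAt ℝ 3 (H.sol t) x :=
  (H.contDiff_sol t).contDiffAt.of_le three_le_infty

lemma sphSmooth (t : ℝ) : SphSmooth 3 (H.sol t) := fun x _ => H.contDiffAt_sol t x

lemma sphSmooth_two (t : ℝ) : SphSmooth 2 (H.sol t) := (H.sphSmooth t).of_le (by norm_num)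

lemma hasDerivAt_sol (t : ℝ) (x : E n) :
    HasDerivAt (fun s => H.sol s x) (rotLap (H.sol t) x) t := by
  have h : HasDerivAt (fun s => ∑ a, H.c s a * H.e a x) (∑ a, H.c' t a * H.e a x) t :=
    HasDerivAt.fun_sum fun a _ => (H.hasDerivAt_c a t).mul_const _
  rw [H.heat] at h
  exact h

lemma continuous_sol : Continuous fun p : ℝ × E n => H.sol p.1 p.2 := by
  have hc : ∀ a, Continuous fun s => H.c s a := fun a =>
    continuous_iff_continuousAt.2 fun t => (H.hasDerivAt_c a t).continuousAt
  exact continuous_finsetSum _ fun a _ =>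
    ((hc a).comp continuous_fst).mul ((H.contDiff_e a).continuous.comp continuous_snd)

lemma rotD_sum_mul (v : Fin H.d → ℝ) (i j : Fin n) (x : E n) :
    rotD i j (fun y => ∑ a, v a * H.e a y) x = ∑ a, v a * rotD i j (H.e a) x := by
  have hd : ∀ a, DifferentiableAt ℝ (H.e a) x := fun a =>
    (H.contDiff_e a).contDiffAt.differentiableAt (by simp)
  rw [rotD_sum i j fun a _ => (hd a).const_mul _]
  simp only [rotD_const_mul i j (hd _)]

/-- The infinitesimal rotation of a solution of the heat equation is again a solution. -/
def rot (i j : Fin n) : HeatSystem n where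
  d := H.d
  e a := rotD i j (H.e a)
  c := H.c
  c' := H.c'
  contDiff_e a := contDiff_rotD (H.contDiff_e a) i j
  hasDerivAt_c := H.hasDerivAt_c
  heat t x := by
    have h : (fun y => ∑ a, H.c' t a * H.e a y) = rotLap (H.sol t) := funext fun y => H.heat t y
    rw [← H.rotD_sum_mul, h, ← rotLap_rotD (H.contDiffAt_sol t x)]
    congr 1
    exact funext fun y => H.rotD_sum_mul (H.c t) i j y

lemma rot_sol (i j : Fin n) (t : ℝ) : (H.rot i j).sol t = rotD i j (H.sol t) :=
  funext fun x => (H.rotD_sum_mul (H.c t) i j x).symm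

lemma continuous_rotD_sol (i j : Fin n) : Continuous fun p : ℝ × E n => rotD i j (H.sol p.1) p.2 := by
  simpa only [rot_sol] using (H.rot i j).continuous_sol

lemma continuous_rotLap_sol : Continuous fun p : ℝ × E n => rotLap (H.sol p.1) p.2 := by
  refine continuous_const.mul (continuous_finsetSum _ fun i _ => continuous_finsetSum _ fun j _ => ?_)
  simpa only [rot_sol] using ((H.rot i j).rot i j).continuous_sol

lemma continuous_rotGamma_sol :
    Continuous fun p : ℝ × E n => rotGamma (H.sol p.1) (H.sol p.1) p.2 :=
  continuous_const.mul (continuous_finsetSum _ fun i _ => continuous_finsetSum _ fun j _ =>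
    (H.continuous_rotD_sol i j).mul (H.continuous_rotD_sol i j))

lemma continuous_rotGamma_rotLap_sol :
    Continuous fun p : ℝ × E n => rotGamma (H.sol p.1) (rotLap (H.sol p.1)) p.2 := by
  refine continuous_const.mul (continuous_finsetSum _ fun i _ => continuous_finsetSum _ fun j _ =>
    (H.continuous_rotD_sol i j).mul ?_)
  simp only [← rotLap_rotD (H.contDiffAt_sol _ _)]
  simpa only [rot_sol] using (H.rot i j).continuous_rotLap_sol

lemma hasDerivAt_rotGamma_sol (t : ℝ) (x : E n) :
    HasDerivAt (fun s => rotGamma (H.sol s) (H.sol s) x)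
      (2 * rotGamma (H.sol t) (rotLap (H.sol t)) x) t := by
  have h : ∀ i j, HasDerivAt (fun s => rotD i j (H.sol s) x)
      (rotD i j (rotLap (H.sol t)) x) t := fun i j => by
    have := (H.rot i j).hasDerivAt_sol t x
    simp only [rot_sol] at this
    rwa [rotLap_rotD (H.contDiffAt_sol t x)] at this
  have h2 : HasDerivAt (fun s => rotGamma (H.sol s) (H.sol s) x)
      (1 / 2 * ∑ i, ∑ j, (rotD i j (rotLap (H.sol t)) x * rotD i j (H.sol t) x +
        rotD i j (H.sol t) x * rotD i j (rotLap (H.sol t)) x)) t :=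
    (HasDerivAt.fun_sum fun i _ => HasDerivAt.fun_sum fun j _ =>
      (h i j).fun_mul (h i j)).const_mul _
  convert h2 using 1
  simp only [rotGamma, Finset.sum_add_distrib, mul_comm (rotD _ _ (rotLap _) _)]
  ring

/-- Positivity is preserved by the heat flow. -/
lemma le_sol {m : ℝ} (h0 : ∀ x ∈ 𝕊, m ≤ H.sol 0 x) {t : ℝ} (ht : 0 ≤ t) {x : E n} (hx : x ∈ 𝕊) :
    m ≤ H.sol t x := by
  have h := parabolic_maximum (w := fun t x => (-1) * H.sol t x)
    (w' := fun t x => (-1) * rotLap (H.sol t) x) (T := t) (M := -m)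
    (continuous_const.mul H.continuous_sol).continuousOn
    (fun t _ => (SphSmooth.const _).mul (H.sphSmooth_two t))
    (fun t _ x _ => (H.hasDerivAt_sol t x).const_mul _)
    (fun t _ x hx => by rw [rotLap_const_mul (H.sphSmooth_two t x hx)])
    (fun x hx => by linarith [h0 x hx]) ⟨ht, le_rfl⟩ hx
  linarith

lemma rotGamma_sol_le (hn : 2 ≤ n) {M : ℝ} (h0 : ∀ x ∈ 𝕊, rotGamma (H.sol 0) (H.sol 0) x ≤ M)
    {t : ℝ} (ht : 0 ≤ t) {x : E n} (hx : x ∈ 𝕊) :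
    rotGamma (H.sol t) (H.sol t) x ≤ M * Real.exp (-(2 * ((n : ℝ) - 2) * t)) := by
  have hn' : (2 : ℝ) ≤ n := by exact_mod_cast hn
  set κ : ℝ := 2 * ((n : ℝ) - 2) with hκ
  have hΓ : ∀ t, SphSmooth 2 (rotGamma (H.sol t) (H.sol t)) := fun t =>
    (H.sphSmooth t).rotGamma (k := 3) (H.sphSmooth t) (by norm_num)
  have h := parabolic_maximum (w := fun t x => Real.exp (κ * t) * rotGamma (H.sol t) (H.sol t) x)
    (w' := fun t x => κ * Real.exp (κ * t) * rotGamma (H.sol t) (H.sol t) x +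
      Real.exp (κ * t) * (2 * rotGamma (H.sol t) (rotLap (H.sol t)) x)) (T := t) (M := M)
    (Continuous.mul (by fun_prop) H.continuous_rotGamma_sol).continuousOn
    (fun t _ => (SphSmooth.const _).mul (hΓ t))
    (fun t _ x _ => by
      have h1 : HasDerivAt (fun s => Real.exp (κ * s)) (κ * Real.exp (κ * t)) t := by
        have := ((hasDerivAt_id t).const_mul κ).exp
        simpa [mul_comm] using this
      exact h1.fun_mul (H.hasDerivAt_rotGamma_sol t x))
    (fun t _ x hx => by
      rw [rotLap_const_mul (hΓ t x hx), rotLap_rotGamma_self (H.sphSmooth t x hx)]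
      have hcd := (sq_nonneg _).trans
        (curvature_dimension hn hx (H.sphSmooth_two t x hx) 0)
      have := nonneg_of_mul_nonneg_right hcd (by linarith)
      simp only [zero_mul, add_zero] at this
      have h2 := mul_nonneg (Real.exp_pos (κ * t)).le this
      rw [hκ] at *
      linarith)
    (fun x hx => by simpa using h0 x hx) ⟨ht, le_rfl⟩ hx
  rw [Real.exp_neg, ← div_eq_mul_inv, le_div_iff₀ (Real.exp_pos _)]
  linarith

end HeatSystem

/-- Existence of the heat flow in a finite-dimensional space of smooth functions which is
invariant under infinitesimal rotations. -/
lemma exists_heatSystem (V : Submodule ℝ (E n → ℝ)) [FiniteDimensional ℝ V]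
    (hV : ∀ g ∈ V, ContDiff ℝ (∞ : ℕ∞ω) g ∧ ∀ i j, rotD i j g ∈ V) {g : E n → ℝ} (hg : g ∈ V) :
    ∃ H : HeatSystem n, H.sol 0 = g := by
  have hL : ∀ g ∈ V, rotLap g ∈ V := fun g hg => by
    have : rotLap g = (1 / 2 : ℝ) • ∑ i, ∑ j, rotD i j (rotD i j g) := by
      ext x; simp [rotLap]
    rw [this]
    exact V.smul_mem _ (V.sum_mem fun i _ => V.sum_mem fun j _ => (hV _ ((hV g hg).2 i j)).2 i j)
  let b := Module.finBasis ℝ V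
  set d := Module.finrank ℝ V
  have hsum : ∀ v : Fin d → ℝ, ((b.equivFun.symm v : V) : E n → ℝ) =
      fun x => ∑ a, v a * (b a : E n → ℝ) x := fun v => by
    ext x; simp [Module.Basis.equivFun_symm_apply]
  let Lap : V →ₗ[ℝ] V :=
    { toFun v := ⟨rotLap v, hL v v.2⟩
      map_add' u v := by
        ext x
        have h1 : ∀ w : V, ContDiffAt ℝ 2 (w : E n → ℝ) x := fun w =>
          (hV w w.2).1.contDiffAt.of_le two_le_infty
        have := rotLap_sum (x := x) (s := Finset.univ)
          (G := fun k : Fin 2 => if k = 0 then (u : E n → ℝ) else v)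
          (fun a _ => by split_ifs <;> exact h1 _)
        simp only [Fin.sum_univ_two, if_true, one_ne_zero, if_false] at this
        exact this
      map_smul' r v := by
        ext x
        exact rotLap_const_mul ((hV v v.2).1.contDiffAt.of_le two_le_infty) r }
  let L : (Fin d → ℝ) →L[ℝ] (Fin d → ℝ) := LinearMap.toContinuousLinearMap
    (b.equivFun.toLinearMap ∘ₗ Lap ∘ₗ b.equivFun.symm.toLinearMap)
  let C : ℝ → Fin d → ℝ := fun t => (NormedSpace.exp (t • L)) (b.equivFun ⟨g, hg⟩)
  have hC : ∀ t, HasDerivAt C (L (C t)) t := fun t => by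
    have := (hasDerivAt_exp_smul_const' (𝕂 := ℝ) L t).clm_apply
      (hasDerivAt_const t (b.equivFun ⟨g, hg⟩))
    simpa [C] using this
  refine ⟨⟨d, fun a => b a, C, fun t => L (C t), fun a => (hV _ (b a).2).1,
    fun a t => (hasDerivAt_pi.1 (hC t)) a, fun t x => ?_⟩, ?_⟩
  · have h1 := congrFun (hsum (L (C t))) x
    rw [← hsum (C t), ← h1]
    simp [L, Lap]
  · have := hsum (C 0)
    unfold HeatSystem.sol
    simp only
    rw [← this]
    simp [C]

end heatFlow

section greatCircle

variable {g : E n → ℝ} {x y : E n}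

lemma fderiv_eq_inner_gradient (g : E n → ℝ) (x v : E n) : fderiv ℝ g x v = ⟪gradient g x, v⟫ :=
  inner_gradient_left.symm

lemma rotGamma_self_eq (hx : x ∈ 𝕊) :
    rotGamma g g x = ‖gradient g x‖ ^ 2 - ⟪x, gradient g x⟫ ^ 2 := by
  have hx' : ∑ i, x i * x i = 1 := by
    have := EuclideanSpace.norm_sq_eq x
    rw [mem_sphere_zero_iff_norm.1 hx] at this
    simpa [pow_two] using this.symm
  have h := sum_wedge_sq hx' fun i => gradient g x i
  have hn : ‖gradient g x‖ ^ 2 = ∑ i, gradient g x i * gradient g x i := by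
    rw [EuclideanSpace.norm_sq_eq]; simp [pow_two]
  have hi : ⟪x, gradient g x⟫ = ∑ i, x i * gradient g x i := by
    rw [PiLp.inner_apply]; simp [mul_comm]
  have hr : ∀ i j, rotD i j g x = x i * gradient g x j - x j * gradient g x i := fun i j => by
    rw [rotD_eq_coord, fderiv_eq_inner_gradient, fderiv_eq_inner_gradient,
      EuclideanSpace.inner_single_right, EuclideanSpace.inner_single_right]
    simp
  simp only [rotGamma, hr, ← pow_two]
  rw [h, hn, hi]; ring

lemma norm_sub_inner_smul_sq (hx : ‖x‖ = 1) (p : E n) :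
    ‖p - ⟪x, p⟫ • x‖ ^ 2 = ‖p‖ ^ 2 - ⟪x, p⟫ ^ 2 := by
  rw [norm_sub_sq_real, inner_smul_right, norm_smul, hx, real_inner_comm, Real.norm_eq_abs, mul_one,
    sq_abs]
  ring

lemma fderiv_sq_le_rotGamma (hx : x ∈ 𝕊) {v : E n} (hv : ‖v‖ = 1) (hxv : ⟪x, v⟫ = 0) :
    (fderiv ℝ g x v) ^ 2 ≤ rotGamma g g x := by
  rw [rotGamma_self_eq hx, ← norm_sub_inner_smul_sq (mem_sphere_zero_iff_norm.1 hx),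
    fderiv_eq_inner_gradient]
  have h : ⟪gradient g x, v⟫ = ⟪gradient g x - ⟪x, gradient g x⟫ • x, v⟫ := by
    rw [inner_sub_left, inner_smul_left, hxv]; simp
  rw [h, sq_le_sq, abs_norm]
  simpa [hv] using abs_real_inner_le_norm (gradient g x - ⟪x, gradient g x⟫ • x) v

lemma exists_unit_orthogonal (hn : 2 ≤ n) (x : E n) : ∃ v : E n, ‖v‖ = 1 ∧ ⟪x, v⟫ = 0 := by
  have hfr : Module.finrank ℝ (Submodule.span ℝ {x}) < Module.finrank ℝ (E n) := by
    rw [finrank_euclideanSpace_fin]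
    exact ((finrank_span_le_card {x}).trans (by simp)).trans_lt (lt_of_lt_of_le one_lt_two hn)
  have hne : (Submodule.span ℝ {x})ᗮ ≠ ⊥ := fun h => by
    rw [Submodule.orthogonal_eq_bot_iff] at h
    rw [h, finrank_top] at hfr
    exact lt_irrefl _ hfr
  obtain ⟨w, hw, hw0⟩ := Submodule.exists_mem_ne_zero_of_ne_bot hne
  refine ⟨‖w‖⁻¹ • w, by simp [norm_smul, hw0], ?_⟩
  rw [inner_smul_right, Submodule.mem_orthogonal_singleton_iff_inner_right.1 hw, mul_zero]

lemma exists_great_circle (hn : 2 ≤ n) (hx : x ∈ 𝕊) (hy : y ∈ 𝕊) :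
    ∃ v : E n, ∃ φ ∈ Set.Icc 0 Real.pi, ‖v‖ = 1 ∧ ⟪x, v⟫ = 0 ∧
      y = Real.cos φ • x + Real.sin φ • v := by
  rw [mem_sphere_zero_iff_norm] at hx hy
  set c := ⟪x, y⟫ with hc
  have hc1 : |c| ≤ 1 := by simpa [hx, hy] using abs_real_inner_le_norm x y
  obtain ⟨hc2, hc3⟩ := abs_le.1 hc1
  have hr : ‖y - c • x‖ ^ 2 = 1 - c ^ 2 := by rw [norm_sub_inner_smul_sq hx, hy, ← hc]; norm_num
  have hr' : ‖y - c • x‖ = √(1 - c ^ 2) := by rw [← hr, Real.sqrt_sq (norm_nonneg _)]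
  have hox : ⟪x, y - c • x⟫ = 0 := by
    rw [inner_sub_right, inner_smul_right, real_inner_self_eq_norm_sq, hx, ← hc]; ring
  obtain ⟨v, hv, hxv, hyv⟩ : ∃ v : E n, ‖v‖ = 1 ∧ ⟪x, v⟫ = 0 ∧ y - c • x = ‖y - c • x‖ • v := by
    by_cases h0 : y - c • x = 0
    · obtain ⟨v, hv, hxv⟩ := exists_unit_orthogonal hn x
      exact ⟨v, hv, hxv, by simp [h0]⟩
    · refine ⟨‖y - c • x‖⁻¹ • (y - c • x), by simp [norm_smul, h0], ?_, ?_⟩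
      · rw [inner_smul_right, hox, mul_zero]
      · rw [smul_smul, mul_inv_cancel₀ (norm_ne_zero_iff.2 h0), one_smul]
  refine ⟨v, Real.arccos c, ⟨Real.arccos_nonneg c, Real.arccos_le_pi c⟩, hv, hxv, ?_⟩
  rw [Real.cos_arccos hc2 hc3, Real.sin_arccos, ← hr', ← hyv]
  abel

lemma abs_sub_le_of_rotGamma_le (hn : 2 ≤ n) (hg : SphSmooth 1 g) {M : ℝ} (hM : 0 ≤ M)
    (h : ∀ x ∈ 𝕊, rotGamma g g x ≤ M ^ 2) (hx : x ∈ 𝕊) (hy : y ∈ 𝕊) :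
    |g y - g x| ≤ M * Real.pi := by
  obtain ⟨v, φ, hφ, hv, hxv, rfl⟩ := exists_great_circle hn hx hy
  have hx1 : ‖x‖ = 1 := mem_sphere_zero_iff_norm.1 hx
  have hxx : ⟪x, x⟫ = 1 := by rw [real_inner_self_eq_norm_sq, hx1]; norm_num
  have hvv : ⟪v, v⟫ = 1 := by rw [real_inner_self_eq_norm_sq, hv]; norm_num
  have hvx : ⟪v, x⟫ = 0 := by rw [real_inner_comm, hxv]
  set γ : ℝ → E n := fun s => Real.cos s • x + Real.sin s • v
  set γ' : ℝ → E n := fun s => (-Real.sin s) • x + Real.cos s • v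
  have hγ : ∀ s, γ s ∈ 𝕊 := fun s => by
    rw [mem_sphere_zero_iff_norm, ← sq_eq_sq₀ (norm_nonneg _) zero_le_one,
      ← real_inner_self_eq_norm_sq]
    simp only [γ, inner_add_left, inner_add_right, inner_smul_left, inner_smul_right, hxx, hvv, hxv,
      hvx, RCLike.conj_to_real]
    linarith [Real.sin_sq_add_cos_sq s]
  have hγ' : ∀ s, ‖γ' s‖ = 1 := fun s => by
    rw [← sq_eq_sq₀ (norm_nonneg _) zero_le_one, ← real_inner_self_eq_norm_sq]
    simp only [γ', inner_add_left, inner_add_right, inner_smul_left, inner_smul_right, hxx, hvv,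
      hxv, hvx, RCLike.conj_to_real]
    linarith [Real.sin_sq_add_cos_sq s]
  have hγγ' : ∀ s, ⟪γ s, γ' s⟫ = 0 := fun s => by
    simp only [γ, γ', inner_add_left, inner_add_right, inner_smul_left, inner_smul_right, hxx, hvv,
      hxv, hvx, RCLike.conj_to_real]
    ring
  have hd : ∀ s, HasDerivAt (fun s => g (γ s)) (fderiv ℝ g (γ s) (γ' s)) s := fun s =>
    (hg.differentiableAt one_ne_zero (hγ s)).hasFDerivAt.comp_hasDerivAt s
      (((Real.hasDerivAt_cos s).smul_const x).add ((Real.hasDerivAt_sin s).smul_const v))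
  have hb : ∀ s, ‖fderiv ℝ g (γ s) (γ' s)‖ ≤ M := fun s => by
    rw [Real.norm_eq_abs]
    exact abs_le_of_sq_le_sq ((fderiv_sq_le_rotGamma (hγ s) (hγ' s) (hγγ' s)).trans (h _ (hγ s))) hM
  have := (convex_univ (𝕜 := ℝ) (E := ℝ)).norm_image_sub_le_of_norm_hasDerivWithin_le
    (fun s _ => (hd s).hasDerivWithinAt) (fun s _ => hb s) (Set.mem_univ 0) (Set.mem_univ φ)
  simp only [γ, Real.cos_zero, Real.sin_zero, one_smul, zero_smul, add_zero, sub_zero,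
    Real.norm_eq_abs] at this
  refine this.trans ?_
  rw [abs_of_nonneg hφ.1]
  exact mul_le_mul_of_nonneg_left hφ.2 hM

end greatCircle

section fisher

variable {u h : E n → ℝ} {x : E n}

lemma rotLap_congr {g h : E n → ℝ} (H : g =ᶠ[𝓝 x] h) : rotLap g x = rotLap h x := by
  unfold rotLap
  congr 1
  refine Finset.sum_congr rfl fun i _ => Finset.sum_congr rfl fun j _ => ?_
  exact rotD_congr i j (H.eventuallyEq_nhds.mono fun y hy => rotD_congr i j hy)

lemma rotGamma_log_left (hu : DifferentiableAt ℝ u x) (h0 : u x ≠ 0) :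
    rotGamma (fun y => Real.log (u y)) h x = rotGamma u h x / u x := by
  simp only [rotGamma, rotD_log _ _ hu h0, div_mul_eq_mul_div, ← Finset.sum_div]
  ring

lemma rotGamma_add_const_left (c : ℝ) :
    rotGamma (fun y => u y + c) h x = rotGamma u h x := by
  have : ∀ i j, rotD i j (fun y => u y + c) x = rotD i j u x := fun i j => by
    simp [rotD, fderiv_add_const]
  simp only [rotGamma, this]

lemma rotLap_eq_of_log (hu : ContDiffAt ℝ 2 u x) (h0 : 0 < u x) :
    rotLap u x = u x * (rotLap (fun y => Real.log (u y)) x +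
      rotGamma (fun y => Real.log (u y)) (fun y => Real.log (u y)) x) := by
  have h := rotLap_exp (hu.log h0.ne')
  rw [Real.exp_log h0] at h
  rw [← h]
  refine rotLap_congr ?_
  filter_upwards [hu.continuousAt.eventually (lt_mem_nhds h0)] with y hy
  rw [Real.exp_log hy]

lemma integral_log_add_one_mul_rotLap [NeZero n] (hu : SphSmooth 2 u) (h0 : ∀ x ∈ 𝕊, 0 < u x) :
    ∫ x, (Real.log (u x) + 1) * rotLap u x ∂sphMeasure n =
      -∫ x, rotGamma u u x / u x ∂sphMeasure n := by
  have hl : SphSmooth 1 fun y => Real.log (u y) + 1 :=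
    ((hu.log h0).of_le (by norm_num)).add (SphSmooth.const 1)
  rw [← neg_eq_iff_eq_neg, ← integral_rotGamma hl hu]
  refine integral_congr_sphere fun x hx => ?_
  rw [rotGamma_add_const_left, rotGamma_log_left (hu.differentiableAt two_ne_zero hx) (h0 x hx).ne']

lemma fisher_derivative_le (hn : 3 ≤ n) (hu : SphSmooth 3 u) (h0 : ∀ x ∈ 𝕊, 0 < u x) :
    ∫ x, (2 * rotGamma u (rotLap u) x * u x - rotGamma u u x * rotLap u x) / u x ^ 2 ∂sphMeasure n ≤
      -(2 * ((n : ℝ) - 1)) * ∫ x, rotGamma u u x / u x ∂sphMeasure n := by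
  have : NeZero n := ⟨by omega⟩
  set f : E n → ℝ := fun y => Real.log (u y) with hf
  have hu2 : SphSmooth 2 u := hu.of_le (by norm_num)
  have hfs : SphSmooth 3 f := hu.log h0
  have hf2 : SphSmooth 2 f := hfs.of_le (by norm_num)
  have hL : SphSmooth 1 (rotLap u) := hu.rotLap (by norm_num)
  have hLf : SphSmooth 1 (rotLap f) := hfs.rotLap (by norm_num)
  have hΓ : SphSmooth 1 (rotGamma f f) := hf2.rotGamma hf2 (by norm_num)
  have hΓL : SphSmooth 0 (rotGamma (rotLap u) f) :=
    hL.rotGamma (hfs.of_le (by norm_num)) (by norm_num)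
  have hd : ∀ x ∈ 𝕊, DifferentiableAt ℝ u x := fun x hx => hu.differentiableAt three_ne_zero hx
  have e1 : ∀ h : E n → ℝ, ∀ x ∈ 𝕊, rotGamma f h x = rotGamma u h x / u x := fun h x hx =>
    rotGamma_log_left (hd x hx) (h0 x hx).ne'
  have e2 : ∀ x ∈ 𝕊, rotGamma f f x = rotGamma u u x / u x ^ 2 := fun x hx => by
    rw [e1 _ x hx, rotGamma_comm, e1 _ x hx, div_div, pow_two]
  have e3 : ∀ x ∈ 𝕊, Real.exp (f x) = u x := fun x hx => Real.exp_log (h0 x hx)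
  have e4 : ∀ x ∈ 𝕊, rotLap u x = u x * (rotLap f x + rotGamma f f x) := fun x hx =>
    rotLap_eq_of_log (hu2 x hx) (h0 x hx)
  have key := fisher_dissipation_ge hn hfs
  have i1 : ∫ x, (2 * rotGamma u (rotLap u) x * u x - rotGamma u u x * rotLap u x) / u x ^ 2
      ∂sphMeasure n = ∫ x, (2 * rotGamma (rotLap u) f x - rotGamma f f x * rotLap u x)
      ∂sphMeasure n := by
    refine integral_congr_sphere fun x hx => ?_
    have := (h0 x hx).ne'
    rw [rotGamma_comm (g := rotLap u), e1 _ x hx, e2 x hx]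
    field_simp
  have i2 := integral_rotGamma hL hf2
  have c1 : ContinuousOn (fun x => 2 * rotGamma (rotLap u) f x) 𝕊 :=
    continuousOn_const.mul hΓL.continuousOn
  have c2 := (hΓ.mul hL).continuousOn
  have c3 : ContinuousOn (fun x => 2 * (rotLap u x * rotLap f x)) 𝕊 :=
    continuousOn_const.mul (hL.mul hLf).continuousOn
  have i3 : ∫ x, (2 * rotGamma (rotLap u) f x - rotGamma f f x * rotLap u x) ∂sphMeasure n =
      -2 * ∫ x, Real.exp (f x) * (rotLap f x ^ 2 + 3 / 2 * (rotLap f x * rotGamma f f x) +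
        1 / 2 * rotGamma f f x ^ 2) ∂sphMeasure n := by
    have s1 : ∫ x, 2 * rotGamma (rotLap u) f x ∂sphMeasure n =
        -∫ x, 2 * (rotLap u x * rotLap f x) ∂sphMeasure n := by
      rw [integral_const_mul, i2, integral_const_mul]; ring
    rw [integral_sub (integrable_of_continuousOn c1) (integrable_of_continuousOn c2), s1,
      ← neg_add', ← integral_add (integrable_of_continuousOn c3) (integrable_of_continuousOn c2),
      ← integral_const_mul, ← integral_neg]
    refine integral_congr_sphere fun x hx => ?_
    rw [e3 x hx, e4 x hx]; ring
  have i4 : ∫ x, Real.exp (f x) * rotGamma f f x ∂sphMeasure n =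
      ∫ x, rotGamma u u x / u x ∂sphMeasure n := by
    refine integral_congr_sphere fun x hx => ?_
    have := (h0 x hx).ne'
    rw [e3 x hx, e2 x hx]; field_simp
  rw [i1, i3, ← i4]
  linarith

end fisher

lemma continuousOn_integral_sphere [NeZero n] {F : ℝ → E n → ℝ} {a : ℝ}
    (hF : ContinuousOn (Function.uncurry F) (Set.Ici a ×ˢ 𝕊)) :
    ContinuousOn (fun t => ∫ x, F t x ∂sphMeasure n) (Set.Ici a) := by
  intro t₀ ht₀
  obtain ⟨C, hC⟩ := ((isCompact_Icc (a := a) (b := t₀ + 1)).prod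
    (isCompact_sphere (0 : E n) 1)).exists_bound_of_continuousOn
    (hF.mono (Set.prod_mono Set.Icc_subset_Ici_self le_rfl))
  have hc : ∀ t ∈ Set.Ici a, ContinuousOn (F t) 𝕊 := fun t ht =>
    hF.comp (f := fun x => (t, x)) (by fun_prop) fun x hx => ⟨ht, hx⟩
  refine continuousWithinAt_of_dominated (bound := fun _ => C) ?_ ?_ (integrable_const C) ?_
  · exact eventually_nhdsWithin_of_forall fun t ht => aestronglyMeasurable_of_continuousOn (hc t ht)
  · have h1 : ∀ᶠ t in 𝓝[Set.Ici a] t₀, t < t₀ + 1 :=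
      nhdsWithin_le_nhds (eventually_lt_nhds (lt_add_one t₀))
    filter_upwards [h1, self_mem_nhdsWithin] with t h1 h2
    exact ae_mem_sphere.mono fun x hx => hC (t, x) ⟨⟨h2, h1.le⟩, hx⟩
  · refine ae_mem_sphere.mono fun x hx => ?_
    exact (hF (t₀, x) ⟨ht₀, hx⟩).comp (f := fun t => (t, x)) (by fun_prop) fun t ht => ⟨ht, hx⟩

/-- The entropy functional on the sphere. -/
def sphEnt (g : E n → ℝ) : ℝ :=
  ∫ x, g x * Real.log (g x) ∂sphMeasure n -
    (∫ x, g x ∂sphMeasure n) * Real.log (∫ x, g x ∂sphMeasure n)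

lemma mul_log_le {u m : ℝ} (hu : 0 < u) (hm : 0 < m) :
    u * Real.log u ≤ u * Real.log m + (u - m) + (u - m) ^ 2 / m := by
  have h := Real.log_le_sub_one_of_pos (div_pos hu hm)
  rw [Real.log_div hu.ne' hm.ne'] at h
  have h2 := mul_le_mul_of_nonneg_left h hu.le
  have : (u - m) ^ 2 / m = u * (u / m - 1) - (u - m) := by field_simp
  linarith

namespace HeatSystem

variable (H : HeatSystem n)

lemma integral_sol [NeZero n] (t : ℝ) :
    ∫ x, H.sol t x ∂sphMeasure n = ∫ x, H.sol 0 x ∂sphMeasure n := by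
  have hd : ∀ t, HasDerivAt (fun t => ∫ x, H.sol t x ∂sphMeasure n) 0 t := fun t => by
    have h := hasDerivAt_integral_sphere (F := H.sol) (F' := fun t => rotLap (H.sol t)) (t₀ := t)
      one_pos (fun t _ => (H.sphSmooth t).continuousOn) H.continuous_rotLap_sol.continuousOn
      (fun t _ x _ => H.hasDerivAt_sol t x)
    have h0 := integral_rotGamma (SphSmooth.const (n := n) 1) (H.sphSmooth_two t)
    have h1 : ∀ x, rotGamma (fun _ => (1 : ℝ)) (H.sol t) x = 0 := fun x => by
      simp [rotGamma, rotD_const]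
    simp only [h1, one_mul, integral_zero] at h0
    rwa [show ∫ x, rotLap (H.sol t) x ∂sphMeasure n = 0 by linarith] at h
  exact is_const_of_deriv_eq_zero (fun s => (hd s).differentiableAt) (fun s => (hd s).deriv) t 0

lemma abs_sol_sub_integral_le [NeZero n] (hn : 2 ≤ n) {M : ℝ}
    (hM : 0 ≤ M) (h0 : ∀ x ∈ 𝕊, rotGamma (H.sol 0) (H.sol 0) x ≤ M ^ 2) {t : ℝ} (ht : 0 ≤ t)
    {x : E n} (hx : x ∈ 𝕊) :
    |H.sol t x - ∫ y, H.sol 0 y ∂sphMeasure n| ≤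
      M * Real.exp (-(((n : ℝ) - 2) * t)) * Real.pi := by
  have h1 : ∀ x ∈ 𝕊, rotGamma (H.sol t) (H.sol t) x ≤
      (M * Real.exp (-(((n : ℝ) - 2) * t))) ^ 2 := fun x hx => by
    refine (H.rotGamma_sol_le hn h0 ht hx).trans_eq ?_
    rw [mul_pow, ← Real.exp_nat_mul]; congr 2; push_cast; ring
  have h2 : ∀ y ∈ 𝕊, ‖H.sol t x - H.sol t y‖ ≤ M * Real.exp (-(((n : ℝ) - 2) * t)) * Real.pi :=
    fun y hy => abs_sub_le_of_rotGamma_le hn ((H.sphSmooth t).of_le (by norm_num))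
      (by positivity) h1 hy hx
  have hi : Integrable (H.sol t) (sphMeasure n) :=
    integrable_of_continuousOn (H.sphSmooth t).continuousOn
  have h3 := norm_integral_le_of_norm_le_const (ae_mem_sphere.mono h2)
  rw [integral_sub (integrable_const _) hi, H.integral_sol] at h3
  simpa using h3

lemma sol_pos (h0 : ∀ x ∈ 𝕊, 0 < H.sol 0 x) {t : ℝ} (ht : 0 ≤ t) {x : E n} (hx : x ∈ 𝕊) : 0 < H.sol t x := by
  obtain ⟨y, hy, hmin⟩ := (isCompact_sphere (0 : E n) 1).exists_isMinOn ⟨x, hx⟩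
    (H.sphSmooth 0).continuousOn
  exact (h0 y hy).trans_le (H.le_sol (fun z hz => hmin hz) ht hx)

/-- The logarithmic Sobolev inequality for initial data of the heat flow. -/
lemma sphEnt_le (h0 : ∀ x ∈ 𝕊, 0 < H.sol 0 x) (hn : 3 ≤ n) :
    sphEnt (H.sol 0) ≤ 1 / (2 * ((n : ℝ) - 1)) *
      ∫ x, rotGamma (H.sol 0) (H.sol 0) x / H.sol 0 x ∂sphMeasure n := by
  have : NeZero n := ⟨by omega⟩
  have hn' : (3 : ℝ) ≤ n := by exact_mod_cast hn
  have hN : 0 < 2 * ((n : ℝ) - 1) := by linarith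
  have hpos : ∀ t ∈ Set.Ici (0 : ℝ), ∀ x ∈ 𝕊, 0 < H.sol t x := fun t ht x hx => H.sol_pos h0 ht hx
  set Φ : ℝ → ℝ := fun t => ∫ x, H.sol t x * Real.log (H.sol t x) ∂sphMeasure n with hΦ
  set J : ℝ → ℝ := fun t => ∫ x, rotGamma (H.sol t) (H.sol t) x / H.sol t x ∂sphMeasure n with hJ
  have cu : ContinuousOn (fun p : ℝ × E n => H.sol p.1 p.2) (Set.Ici 0 ×ˢ 𝕊) :=
    H.continuous_sol.continuousOn
  have cl : ContinuousOn (fun p : ℝ × E n => Real.log (H.sol p.1 p.2)) (Set.Ici 0 ×ˢ 𝕊) :=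
    cu.log fun p hp => (hpos p.1 hp.1 p.2 hp.2).ne'
  have cL : ContinuousOn (fun p : ℝ × E n => rotLap (H.sol p.1) p.2) (Set.Ici 0 ×ˢ 𝕊) :=
    H.continuous_rotLap_sol.continuousOn
  have cΓ : ContinuousOn (fun p : ℝ × E n => rotGamma (H.sol p.1) (H.sol p.1) p.2)
      (Set.Ici 0 ×ˢ 𝕊) := H.continuous_rotGamma_sol.continuousOn
  have cΓL : ContinuousOn (fun p : ℝ × E n => rotGamma (H.sol p.1) (rotLap (H.sol p.1)) p.2)
      (Set.Ici 0 ×ˢ 𝕊) := H.continuous_rotGamma_rotLap_sol.continuousOn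
  have cΦ : ContinuousOn (Function.uncurry fun t x => H.sol t x * Real.log (H.sol t x))
      (Set.Ici 0 ×ˢ 𝕊) := cu.mul cl
  have cJ : ContinuousOn (Function.uncurry fun t x => rotGamma (H.sol t) (H.sol t) x / H.sol t x)
      (Set.Ici 0 ×ˢ 𝕊) := cΓ.div cu fun p hp => (hpos p.1 hp.1 p.2 hp.2).ne'
  have slice : ∀ {F : ℝ → E n → ℝ}, ContinuousOn (Function.uncurry F) (Set.Ici 0 ×ˢ 𝕊) →
      ∀ t ∈ Set.Ici (0 : ℝ), ContinuousOn (F t) 𝕊 := fun hF t ht =>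
    hF.comp (f := fun x => (t, x)) (by fun_prop) fun x hx => ⟨ht, hx⟩
  have ball : ∀ t : ℝ, 0 < t → Metric.closedBall t t ⊆ Set.Ici 0 := fun t _ s hs => by
    rw [Real.closedBall_eq_Icc] at hs
    simpa using hs.1
  have dΦ : ∀ t, 0 < t → HasDerivAt Φ (-J t) t := fun t ht => by
    have h := hasDerivAt_integral_sphere (t₀ := t) (δ := t)
      (F := fun t x => H.sol t x * Real.log (H.sol t x))
      (F' := fun t x => (Real.log (H.sol t x) + 1) * rotLap (H.sol t) x) ht
      (fun s hs => slice cΦ s (ball t ht hs))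
      (((cl.fun_add continuousOn_const).fun_mul cL).mono (Set.prod_mono (ball t ht) le_rfl))
      (fun s hs x hx => by
        have hp := hpos s (ball t ht hs) x hx
        refine ((H.hasDerivAt_sol s x).fun_mul ((H.hasDerivAt_sol s x).log hp.ne')).congr_deriv ?_
        field_simp)
    rwa [integral_log_add_one_mul_rotLap (H.sphSmooth_two t) (hpos t ht.le)] at h
  have dJ : ∀ t, 0 < t → ∃ J', J' ≤ -(2 * ((n : ℝ) - 1)) * J t ∧ HasDerivAt J J' t := fun t ht => by
    refine ⟨_, fisher_derivative_le hn (H.sphSmooth t) (hpos t ht.le), ?_⟩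
    exact hasDerivAt_integral_sphere (t₀ := t) (δ := t)
      (F := fun t x => rotGamma (H.sol t) (H.sol t) x / H.sol t x)
      (F' := fun t x => (2 * rotGamma (H.sol t) (rotLap (H.sol t)) x * H.sol t x -
        rotGamma (H.sol t) (H.sol t) x * rotLap (H.sol t) x) / H.sol t x ^ 2) ht
      (fun s hs => slice cJ s (ball t ht hs))
      (((((continuousOn_const.fun_mul cΓL).fun_mul cu).fun_sub (cΓ.fun_mul cL)).div (cu.fun_pow 2) fun p hp =>
        pow_ne_zero 2 (hpos p.1 hp.1 p.2 hp.2).ne').mono (Set.prod_mono (ball t ht) le_rfl))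
      (fun s hs x hx =>
        (H.hasDerivAt_rotGamma_sol s x).fun_div (H.hasDerivAt_sol s x)
          (hpos s (ball t ht hs) x hx).ne')
  have hmono : MonotoneOn (fun t => Φ t - 1 / (2 * ((n : ℝ) - 1)) * J t) (Set.Ici 0) := by
    choose! J' hJ' hdJ using dJ
    have hder : ∀ t, 0 < t → HasDerivAt (fun t => Φ t - 1 / (2 * ((n : ℝ) - 1)) * J t)
        (-J t - 1 / (2 * ((n : ℝ) - 1)) * J' t) t := fun t ht =>
      (dΦ t ht).sub ((hdJ t ht).const_mul _)
    refine monotoneOn_of_deriv_nonneg (convex_Ici 0)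
      ((continuousOn_integral_sphere cΦ).sub
        (continuousOn_const.mul (continuousOn_integral_sphere cJ))) ?_ ?_
    · rw [interior_Ici]
      exact fun t ht => (hder t ht).differentiableAt.differentiableWithinAt
    · rw [interior_Ici]
      intro t ht
      rw [(hder t ht).deriv]
      have := mul_le_mul_of_nonneg_left (hJ' t ht) (one_div_nonneg.2 hN.le)
      rw [← mul_assoc, mul_neg, one_div_mul_cancel hN.ne'] at this
      linarith
  have hJ0 : ∀ t, 0 ≤ t → 0 ≤ J t := fun t ht =>
    integral_nonneg_of_ae (ae_mem_sphere.mono fun x hx =>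
      div_nonneg rotGamma_self_nonneg (hpos t ht x hx).le)
  set m := ∫ x, H.sol 0 x ∂sphMeasure n with hm
  obtain ⟨x₀, hx₀⟩ : (𝕊).Nonempty := (NormedSpace.sphere_nonempty (x := (0 : E n))).2 zero_le_one
  obtain ⟨M, hM⟩ := (isCompact_sphere (0 : E n) 1).exists_bound_of_continuousOn
    ((H.sphSmooth 0).rotGamma (H.sphSmooth 0) (l := 0) (by norm_num)).continuousOn
  have hM' : ∀ x ∈ 𝕊, rotGamma (H.sol 0) (H.sol 0) x ≤ √M ^ 2 := fun x hx => by
    have := hM x hx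
    rw [Real.sq_sqrt ((norm_nonneg _).trans this)]
    exact (le_abs_self _).trans this
  have hm0 : 0 < m := by
    obtain ⟨y, hy, hmin⟩ := (isCompact_sphere (0 : E n) 1).exists_isMinOn ⟨x₀, hx₀⟩
      (H.sphSmooth 0).continuousOn
    refine (h0 y hy).trans_le ?_
    have := integral_mono_sphere continuousOn_const (H.sphSmooth 0).continuousOn
      (fun z hz => hmin hz)
    simpa using this
  have hΦle : ∀ t, 0 ≤ t → Φ t ≤ m * Real.log m +
      (√M * Real.exp (-(((n : ℝ) - 2) * t)) * Real.pi) ^ 2 / m := fun t ht => by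
    have hcs : ContinuousOn (H.sol t) 𝕊 := (H.sphSmooth t).continuousOn
    have h1 : Φ t ≤ ∫ x, (H.sol t x * Real.log m + (H.sol t x - m) +
        (√M * Real.exp (-(((n : ℝ) - 2) * t)) * Real.pi) ^ 2 / m) ∂sphMeasure n := by
      refine integral_mono_sphere (slice cΦ t ht) (by fun_prop) fun x hx => ?_
      refine (mul_log_le (hpos t ht x hx) hm0).trans ?_
      have := H.abs_sol_sub_integral_le (by omega) (Real.sqrt_nonneg M) hM' ht hx
      have := pow_le_pow_left₀ (abs_nonneg _) this 2
      rw [sq_abs] at this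
      gcongr
    have hi : Integrable (H.sol t) (sphMeasure n) := integrable_of_continuousOn hcs
    have hi2 : Integrable (fun x => H.sol t x - m) (sphMeasure n) := hi.sub (integrable_const _)
    rw [integral_add ((hi.mul_const _).fun_add hi2) (integrable_const _),
      integral_add (hi.mul_const _) hi2, integral_sub hi (integrable_const _), integral_mul_const,
      H.integral_sol t, ← hm] at h1
    simpa using h1
  have hlim : Tendsto (fun t : ℝ => m * Real.log m +
      (√M * Real.exp (-(((n : ℝ) - 2) * t)) * Real.pi) ^ 2 / m) atTop
      (𝓝 (m * Real.log m + (√M * 0 * Real.pi) ^ 2 / m)) := by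
    refine Tendsto.const_add _ (Tendsto.div_const (Tendsto.pow (Tendsto.mul_const _
      (Tendsto.const_mul _ ?_)) 2) _)
    refine Real.tendsto_exp_neg_atTop_nhds_zero.comp ?_
    exact tendsto_id.const_mul_atTop (by linarith)
  have hfin : Φ 0 - 1 / (2 * ((n : ℝ) - 1)) * J 0 ≤
      m * Real.log m + (√M * 0 * Real.pi) ^ 2 / m := by
    refine ge_of_tendsto hlim ?_
    filter_upwards [eventually_ge_atTop 0] with t ht
    have h1 := hmono (Set.mem_Ici.2 le_rfl) ht ht
    have h2 := mul_nonneg (one_div_nonneg.2 hN.le) (hJ0 t ht)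
    have h3 := hΦle t ht
    simp only at h1
    linarith
  simp only [mul_zero, zero_mul, ne_eq, OfNat.ofNat_ne_zero, not_false_eq_true, zero_pow, zero_div,
    add_zero] at hfin
  unfold sphEnt
  linarith

end HeatSystem

section polynomials

/-- The constant function one and the coordinate functions. -/
def affineCoord : Option (Fin n) → E n → ℝ
  | none => fun _ => 1
  | some i => fun x => x i

/-- The space of restrictions of affine functions. -/
def affineSpace (n : ℕ) : Submodule ℝ (E n → ℝ) := Submodule.span ℝ (Set.range affineCoord)

lemma affineCoord_mem (o : Option (Fin n)) : affineCoord o ∈ affineSpace n :=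
  Submodule.subset_span ⟨o, rfl⟩

lemma contDiff_affineCoord (o : Option (Fin n)) : ContDiff ℝ (∞ : ℕ∞ω) (affineCoord o) := by
  cases o with
  | none => exact contDiff_const
  | some m => exact (EuclideanSpace.proj m : E n →L[ℝ] ℝ).contDiff

lemma rotD_affineCoord (i j m : Fin n) : rotD i j (affineCoord (some m)) =
    (if m = j then (1 : ℝ) else 0) • affineCoord (some i) -
      (if m = i then (1 : ℝ) else 0) • affineCoord (some j) := by
  ext x
  have : fderiv ℝ (affineCoord (some m)) x = (EuclideanSpace.proj m : E n →L[ℝ] ℝ) :=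
    (EuclideanSpace.proj m : E n →L[ℝ] ℝ).fderiv
  rw [rotD, this]
  simp only [Pi.sub_apply, Pi.smul_apply]
  simp [rotGen_apply_coord, affineCoord]

lemma affineSpace_closed {g : E n → ℝ} (hg : g ∈ affineSpace n) :
    ContDiff ℝ (∞ : ℕ∞ω) g ∧ ∀ i j, rotD i j g ∈ affineSpace n := by
  induction hg using Submodule.span_induction with
  | mem g hg =>
    obtain ⟨o, rfl⟩ := hg
    refine ⟨contDiff_affineCoord o, fun i j => ?_⟩
    cases o with
    | none =>
      have : rotD i j (affineCoord none) = 0 := funext fun x => rotD_const i j 1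
      rw [this]; exact Submodule.zero_mem _
    | some m =>
      rw [rotD_affineCoord]
      exact Submodule.sub_mem _ (Submodule.smul_mem _ _ (affineCoord_mem _))
        (Submodule.smul_mem _ _ (affineCoord_mem _))
  | zero =>
    refine ⟨contDiff_const, fun i j => ?_⟩
    have : rotD i j (0 : E n → ℝ) = 0 := funext fun x => rotD_const i j 0
    rw [this]; exact Submodule.zero_mem _
  | add g h _ _ hg hh =>
    refine ⟨hg.1.add hh.1, fun i j => ?_⟩
    have : rotD i j (g + h) = rotD i j g + rotD i j h := funext fun x =>
      rotD_add i j (hg.1.differentiable (by simp) x) (hh.1.differentiable (by simp) x)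
    rw [this]; exact Submodule.add_mem _ (hg.2 i j) (hh.2 i j)
  | smul r g _ hg =>
    refine ⟨contDiff_const.mul hg.1, fun i j => ?_⟩
    have : rotD i j (r • g) = r • rotD i j g := funext fun x =>
      rotD_const_mul i j (hg.1.differentiable (by simp) x) r
    rw [this]; exact Submodule.smul_mem _ _ (hg.2 i j)

lemma affineSpace_pow_closed {k : ℕ} {g : E n → ℝ} (hg : g ∈ affineSpace n ^ k) :
    ContDiff ℝ (∞ : ℕ∞ω) g ∧ ∀ i j, rotD i j g ∈ affineSpace n ^ k := by
  induction hg using Submodule.pow_induction_on_left' with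
  | algebraMap r =>
    refine ⟨contDiff_const, fun i j => ?_⟩
    have : rotD i j (algebraMap ℝ (E n → ℝ) r) = 0 := funext fun x => rotD_const i j r
    rw [this]; exact Submodule.zero_mem _
  | add g h k _ _ hg hh =>
    refine ⟨hg.1.add hh.1, fun i j => ?_⟩
    have : rotD i j (g + h) = rotD i j g + rotD i j h := funext fun x =>
      rotD_add i j (hg.1.differentiable (by simp) x) (hh.1.differentiable (by simp) x)
    rw [this]; exact Submodule.add_mem _ (hg.2 i j) (hh.2 i j)
  | mem_mul m hm k g hg' hg =>
    obtain ⟨hm1, hm2⟩ := affineSpace_closed hm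
    refine ⟨hm1.mul hg.1, fun i j => ?_⟩
    have : rotD i j (m * g) = m * rotD i j g + rotD i j m * g := funext fun x =>
      (rotD_mul i j (hm1.differentiable (by simp) x) (hg.1.differentiable (by simp) x)).trans
        (by simp [mul_comm])
    rw [this, Nat.succ_eq_add_one, pow_succ']
    exact Submodule.add_mem _ (Submodule.mul_mem_mul hm (hg.2 i j))
      (Submodule.mul_mem_mul (hm2 i j) hg')

instance finiteDimensional_affineSpace_pow (k : ℕ) :
    FiniteDimensional ℝ ↥(affineSpace n ^ k) :=
  Module.Finite.iff_fg.2 (Submodule.FG.pow (Submodule.fg_span (Set.finite_range _)) k)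

lemma prod_affineCoord_mem {k : ℕ} (φ : Fin k → Option (Fin n)) :
    (fun x => ∏ i, affineCoord (φ i) x) ∈ affineSpace n ^ k := by
  induction k with
  | zero =>
    simp only [Finset.univ_eq_empty, Finset.prod_empty, pow_zero]
    exact Submodule.one_le.1 le_rfl
  | succ k ih =>
    rw [pow_succ']
    have : (fun x => ∏ i, affineCoord (φ i) x) =
        affineCoord (φ 0) * fun x => ∏ i : Fin k, affineCoord (φ i.succ) x := by
      ext x; simp [Fin.prod_univ_succ]
    rw [this]
    exact Submodule.mul_mem_mul (affineCoord_mem _) (ih _)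

lemma one_add_inner_pow (k : ℕ) (x y : E n) : (1 + ⟪x, y⟫) ^ k =
    ∑ φ : Fin k → Option (Fin n), (∏ i, affineCoord (φ i) x) * ∏ i, affineCoord (φ i) y := by
  have : 1 + ⟪x, y⟫ = ∑ o : Option (Fin n), affineCoord o x * affineCoord o y := by
    rw [Fintype.sum_option, PiLp.inner_apply]
    simp [affineCoord, mul_comm]
  rw [this, Fintype.sum_pow]
  simp only [Finset.prod_mul_distrib]

end polynomials

section zonal

variable {h : E n → ℝ} {x y : E n} {k : ℕ}

lemma one_add_inner_nonneg (hx : x ∈ 𝕊) (hy : y ∈ 𝕊) : 0 ≤ 1 + ⟪x, y⟫ := by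
  have := neg_le_of_abs_le (abs_real_inner_le_norm x y)
  rw [mem_sphere_zero_iff_norm.1 hx, mem_sphere_zero_iff_norm.1 hy] at this
  linarith

lemma one_add_inner_lt (hx : x ∈ 𝕊) (hy : y ∈ 𝕊) (hne : y ≠ x) : 1 + ⟪x, y⟫ < 1 + ⟪x, x⟫ := by
  rw [mem_sphere_zero_iff_norm] at hx hy
  have := inner_lt_one_iff_real_of_norm_eq_one hx hy
  rw [real_inner_self_eq_norm_sq, hx]
  linarith [this.2 hne.symm]

variable [NeZero n]

/-- The total mass of the kernel `(1 + ⟪x, y⟫) ^ k`. -/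
def zonalMass (n : ℕ) [NeZero n] (k : ℕ) : ℝ :=
  ∫ y, (1 + ⟪(EuclideanSpace.single 0 1 : E n), y⟫) ^ k ∂sphMeasure n

/-- The average of `h` with respect to a kernel concentrated around `x`. -/
def zonalAvg (k : ℕ) (h : E n → ℝ) (x : E n) : ℝ :=
  (zonalMass n k)⁻¹ * ∫ y, (1 + ⟪x, y⟫) ^ k * h y ∂sphMeasure n

lemma integral_one_add_inner_pow (k : ℕ) (hx : x ∈ 𝕊) :
    ∫ y, (1 + ⟪x, y⟫) ^ k ∂sphMeasure n = zonalMass n k := by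
  set e : E n := EuclideanSpace.single 0 1
  have hxe : ‖x‖ = ‖e‖ := by rw [mem_sphere_zero_iff_norm.1 hx]; simp [e]
  set R : E n ≃ₗᵢ[ℝ] E n := (ℝ ∙ (x - e))ᗮ.reflection with hR
  have hRx : R x = e := Submodule.reflection_sub hxe
  rw [zonalMass, ← integral_comp_isometry R (fun y => (1 + ⟪(EuclideanSpace.single 0 1 : E n), y⟫) ^ k)]
  refine integral_congr_ae (Eventually.of_forall fun y => ?_)
  simp only
  rw [show ⟪(EuclideanSpace.single 0 1 : E n), R y⟫ = ⟪R x, R y⟫ by rw [hRx], R.inner_map_map]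

lemma tendsto_zonal (hh : ContinuousOn h 𝕊) (hx : x ∈ 𝕊) :
    Tendsto (fun k => zonalAvg k h x) atTop (𝓝 (h x)) := by
  have := tendsto_setIntegral_pow_smul_of_unique_maximum_of_isCompact_of_measure_nhdsWithin_pos
    (μ := sphMeasure n) (s := 𝕊) (x₀ := x) (c := fun y => 1 + ⟪x, y⟫) (g := h)
    (isCompact_sphere _ _)
    (fun u hu hxu => by
      rw [← Measure.restrict_apply' Metric.isClosed_sphere.measurableSet, restrict_sphere]
      exact sphMeasure_pos_of_isOpen hu hxu hx)
    (by fun_prop) (fun y hy => one_add_inner_lt hx hy) (fun y hy => one_add_inner_nonneg hx hy)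
    (by rw [real_inner_self_eq_norm_sq]; positivity) hx
    (hh.integrableOn_compact (isCompact_sphere _ _)) (hh x hx)
  simpa only [restrict_sphere, integral_one_add_inner_pow _ hx, smul_eq_mul, zonalAvg] using this

lemma zonalMass_pos (k : ℕ) : 0 < zonalMass n k := by
  set e : E n := EuclideanSpace.single 0 1 with he
  have hes : e ∈ 𝕊 := by simp [he]
  have hc : Continuous fun y : E n => (1 + ⟪e, y⟫) ^ k := by fun_prop
  unfold zonalMass
  rw [integral_pos_iff_support_of_nonneg_ae
    (ae_mem_sphere.mono fun y hy => pow_nonneg (one_add_inner_nonneg hes hy) k)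
    (integrable_of_continuousOn hc.continuousOn)]
  refine sphMeasure_pos_of_isOpen (x := e) (isOpen_ne_fun hc continuous_const) ?_ hes
  change (1 + ⟪e, e⟫) ^ k ≠ 0
  rw [real_inner_self_eq_norm_sq]
  positivity

lemma zonalAvg_const (c : ℝ) (hx : x ∈ 𝕊) : zonalAvg k (fun _ : E n => c) x = c := by
  rw [zonalAvg, integral_mul_const, integral_one_add_inner_pow k hx,
    inv_mul_cancel_left₀ (zonalMass_pos k).ne']

lemma zonalAvg_mono {h₁ h₂ : E n → ℝ} (hh₁ : ContinuousOn h₁ 𝕊) (hh₂ : ContinuousOn h₂ 𝕊)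
    (H : ∀ y ∈ 𝕊, h₁ y ≤ h₂ y) (hx : x ∈ 𝕊) : zonalAvg k h₁ x ≤ zonalAvg k h₂ x := by
  refine mul_le_mul_of_nonneg_left (integral_mono_sphere (by fun_prop) (by fun_prop) fun y hy => ?_)
    (inv_nonneg.2 (zonalMass_pos k).le)
  exact mul_le_mul_of_nonneg_left (H y hy) (pow_nonneg (one_add_inner_nonneg hx hy) k)

lemma zonalAvg_mem (hh : ContinuousOn h 𝕊) : zonalAvg k h ∈ affineSpace n ^ k := by
  have : zonalAvg k h = (zonalMass n k)⁻¹ • ∑ φ : Fin k → Option (Fin n),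
      (∫ y, (∏ i, affineCoord (φ i) y) * h y ∂sphMeasure n) •
        fun x => ∏ i, affineCoord (φ i) x := by
    ext x
    simp only [zonalAvg, one_add_inner_pow, Finset.sum_mul, Pi.smul_apply, Finset.sum_apply,
      smul_eq_mul]
    rw [integral_finsetSum]
    · congr 1
      refine Finset.sum_congr rfl fun φ _ => ?_
      simp_rw [mul_assoc]
      rw [integral_const_mul, mul_comm]
    · intro φ _
      refine integrable_of_continuousOn (ContinuousOn.mul (ContinuousOn.mul continuousOn_const ?_) hh)
      exact (continuous_finsetProd _ fun i _ => (contDiff_affineCoord _).continuous).continuousOn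
  rw [this]
  exact Submodule.smul_mem _ _ (Submodule.sum_mem _ fun φ _ =>
    Submodule.smul_mem _ _ (prod_affineCoord_mem φ))

lemma contDiff_zonalAvg (hh : ContinuousOn h 𝕊) : ContDiff ℝ (∞ : ℕ∞ω) (zonalAvg k h) :=
  (affineSpace_pow_closed (zonalAvg_mem hh)).1

lemma rotD_zonalAvg (hh : SphSmooth 1 h) (i j : Fin n) :
    rotD i j (zonalAvg k h) x = zonalAvg k (rotD i j h) x := by
  have h1 : HasDerivAt (fun s => zonalAvg k h (rotFlow i j s x)) (rotD i j (zonalAvg k h) x) 0 := by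
    have := hasDerivAt_comp_rotFlow (s := 0) (x := x) i j
      ((contDiff_zonalAvg (k := k) hh.continuousOn).differentiable (by simp) (rotFlow i j 0 x))
    rwa [rotFlow_zero] at this
  have h2 : ∀ s, zonalAvg k h (rotFlow i j s x) =
      (zonalMass n k)⁻¹ * ∫ y, (1 + ⟪x, y⟫) ^ k * h (rotFlow i j s y) ∂sphMeasure n := fun s => by
    rw [zonalAvg, ← integral_comp_isometry (rotIsometry i j s)]
    congr 2
    ext y
    rw [← rotIsometry_apply, LinearIsometryEquiv.inner_map_map, rotIsometry_apply]
  have h3 := hasDerivAt_integral_sphere (F := fun s y => (1 + ⟪x, y⟫) ^ k * h (rotFlow i j s y))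
    (F' := fun s y => (1 + ⟪x, y⟫) ^ k * rotD i j h (rotFlow i j s y)) (t₀ := 0) one_pos
    (fun t _ => ContinuousOn.mul (by fun_prop)
      (hh.continuousOn.comp (rotFlow i j t).continuous.continuousOn
        fun x hx => rotFlow_mem_sphere i j t hx))
    (ContinuousOn.mul (by fun_prop)
      ((hh.rotD (l := 0) (by simp) i j).continuousOn.comp (continuous_rotFlow i j).continuousOn
        fun p hp => rotFlow_mem_sphere i j p.1 hp.2))
    (fun t _ y hy => (hasDerivAt_comp_rotFlow i j
      (hh.differentiableAt one_ne_zero (rotFlow_mem_sphere i j t hy))).const_mul _)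
  have h4 := h3.const_mul (zonalMass n k)⁻¹
  simp only [← h2, rotFlow_zero] at h4
  exact h1.unique h4

end zonal

section logSobolev

variable [NeZero n] {h : E n → ℝ}

lemma tendsto_integral_sphere {F : ℕ → E n → ℝ} {G : E n → ℝ} {C : ℝ}
    (hF : ∀ k, ContinuousOn (F k) 𝕊) (hC : ∀ k, ∀ x ∈ 𝕊, |F k x| ≤ C)
    (hlim : ∀ x ∈ 𝕊, Tendsto (fun k => F k x) atTop (𝓝 (G x))) :
    Tendsto (fun k => ∫ x, F k x ∂sphMeasure n) atTop (𝓝 (∫ x, G x ∂sphMeasure n)) :=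
  tendsto_integral_of_dominated_convergence (fun _ => C)
    (fun k => aestronglyMeasurable_of_continuousOn (hF k)) (integrable_const C)
    (fun k => ae_mem_sphere.mono (hC k)) (ae_mem_sphere.mono hlim)

lemma abs_zonalAvg_le {k : ℕ} (hh : ContinuousOn h 𝕊) {C : ℝ} (hC : ∀ x ∈ 𝕊, |h x| ≤ C)
    {x : E n} (hx : x ∈ 𝕊) : |zonalAvg k h x| ≤ C := by
  rw [abs_le]
  constructor
  · rw [← zonalAvg_const (k := k) (-C) hx]
    exact zonalAvg_mono continuousOn_const hh (fun y hy => neg_le_of_abs_le (hC y hy)) hx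
  · rw [← zonalAvg_const (k := k) C hx]
    exact zonalAvg_mono hh continuousOn_const (fun y hy => le_of_abs_le (hC y hy)) hx

/-- The logarithmic Sobolev inequality on the sphere. -/
lemma sphEnt_le (hn : 3 ≤ n) (hh : SphSmooth 1 h) (h0 : ∀ x ∈ 𝕊, 0 < h x) :
    sphEnt h ≤ 1 / (2 * ((n : ℝ) - 1)) * ∫ x, rotGamma h h x / h x ∂sphMeasure n := by
  have hc := hh.continuousOn
  obtain ⟨e, he⟩ : (𝕊).Nonempty := ⟨EuclideanSpace.single 0 1, by simp⟩
  obtain ⟨m, hm, hmh⟩ : ∃ m > 0, ∀ x ∈ 𝕊, m ≤ h x := by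
    obtain ⟨y, hy, hmin⟩ := (isCompact_sphere (0 : E n) 1).exists_isMinOn ⟨e, he⟩ hc
    exact ⟨h y, h0 y hy, fun x hx => hmin hx⟩
  obtain ⟨M, hM⟩ := (isCompact_sphere (0 : E n) 1).exists_bound_of_continuousOn hc
  have hrc : ∀ i j, ContinuousOn (rotD i j h) 𝕊 := fun i j =>
    (hh.rotD (l := 0) (by simp) i j).continuousOn
  choose D hD using fun i j =>
    (isCompact_sphere (0 : E n) 1).exists_bound_of_continuousOn (hrc i j)
  set g : ℕ → E n → ℝ := fun k => zonalAvg k h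
  have hgs : ∀ k, SphSmooth 1 (g k) := fun k x _ =>
    ((contDiff_zonalAvg hc).of_le (by simp)).contDiffAt
  have hgc : ∀ k, ContinuousOn (g k) 𝕊 := fun k => (hgs k).continuousOn
  have hgm : ∀ k, ∀ x ∈ 𝕊, m ≤ g k x := fun k x hx => by
    rw [← zonalAvg_const (k := k) m hx]
    exact zonalAvg_mono continuousOn_const hc hmh hx
  have hgM : ∀ k, ∀ x ∈ 𝕊, |g k x| ≤ M := fun k x hx => abs_zonalAvg_le hc hM hx
  have hlim : ∀ x ∈ 𝕊, Tendsto (fun k => g k x) atTop (𝓝 (h x)) := fun x hx => tendsto_zonal hc hx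
  have hΓ : ∀ k x, rotGamma (g k) (g k) x =
      1 / 2 * ∑ i, ∑ j, zonalAvg k (rotD i j h) x * zonalAvg k (rotD i j h) x := fun k x => by
    simp only [rotGamma, g, rotD_zonalAvg hh]
  have hΓlim : ∀ x ∈ 𝕊, Tendsto (fun k => rotGamma (g k) (g k) x) atTop (𝓝 (rotGamma h h x)) := by
    intro x hx
    simp only [hΓ]
    exact (tendsto_finsetSum _ fun i _ => tendsto_finsetSum _ fun j _ =>
      (tendsto_zonal (hrc i j) hx).mul (tendsto_zonal (hrc i j) hx)).const_mul _
  have hΓle : ∀ k, ∀ x ∈ 𝕊, rotGamma (g k) (g k) x ≤ 1 / 2 * ∑ i, ∑ j, D i j * D i j := by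
    intro k x hx
    rw [hΓ]
    refine mul_le_mul_of_nonneg_left (Finset.sum_le_sum fun i _ => Finset.sum_le_sum fun j _ => ?_)
      (by norm_num)
    rw [← abs_mul_abs_self]
    exact mul_self_le_mul_self (abs_nonneg _) (abs_zonalAvg_le (hrc i j) (hD i j) hx)
  obtain ⟨L, hL⟩ := (isCompact_Icc (a := m) (b := M)).exists_bound_of_continuousOn
    Real.continuous_mul_log.continuousOn
  have hlsi : ∀ k, sphEnt (g k) ≤
      1 / (2 * ((n : ℝ) - 1)) * ∫ x, rotGamma (g k) (g k) x / g k x ∂sphMeasure n := by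
    intro k
    obtain ⟨H, hH⟩ := exists_heatSystem (affineSpace n ^ k) (fun _ => affineSpace_pow_closed)
      (zonalAvg_mem (k := k) hc)
    have := H.sphEnt_le (hH ▸ fun x hx => hm.trans_le (hgm k x hx)) hn
    rwa [hH] at this
  unfold sphEnt at hlsi ⊢
  refine le_of_tendsto_of_tendsto' (b := (atTop : Filter ℕ)) (Tendsto.sub ?_ ?_) (Tendsto.const_mul _ ?_) hlsi
  · refine tendsto_integral_sphere (C := L)
      (fun k => Real.continuous_mul_log.comp_continuousOn (hgc k)) (fun k x hx => ?_) fun x hx => ?_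
    · exact hL _ ⟨hgm k x hx, le_of_abs_le (hgM k x hx)⟩
    · exact (Real.continuous_mul_log.tendsto _).comp (hlim x hx)
  · exact (Real.continuous_mul_log.tendsto _).comp (tendsto_integral_sphere hgc hgM hlim)
  · refine tendsto_integral_sphere (C := (1 / 2 * ∑ i, ∑ j, D i j * D i j) / m)
      (fun k => ContinuousOn.div (((hgs k).rotGamma (hgs k) (l := 0) (by simp)).continuousOn) (hgc k)
        fun x hx => (hm.trans_le (hgm k x hx)).ne') (fun k x hx => ?_) fun x hx => ?_
    · rw [abs_of_nonneg (div_nonneg rotGamma_self_nonneg (hm.le.trans (hgm k x hx)))]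
      have := hgm k x hx
      exact div_le_div₀ (rotGamma_self_nonneg.trans (hΓle k x hx)) (hΓle k x hx) hm this
    · exact (hΓlim x hx).div (hlim x hx) (h0 x hx).ne'

end logSobolev

section poincare

lemma le_one_add_mul_log_one_add {y : ℝ} (hy : |y| ≤ 1 / 2) :
    y + y ^ 2 / 2 - 4 * |y| ^ 3 ≤ (1 + y) * Real.log (1 + y) := by
  have h := Real.abs_log_sub_add_sum_range_le (x := -y) (by rw [abs_neg]; linarith) 2
  simp only [Finset.sum_range_succ, Finset.sum_range_zero, abs_neg, sub_neg_eq_add] at h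
  have h3 : |y| ^ 3 / (1 - |y|) ≤ 2 * |y| ^ 3 := by
    rw [div_le_iff₀ (by linarith)]
    nlinarith [pow_nonneg (abs_nonneg y) 3]
  have h1 := (abs_le.1 (h.trans h3)).1
  have h2 : y - y ^ 2 / 2 - 2 * |y| ^ 3 ≤ Real.log (1 + y) := by
    norm_num at h1
    linarith
  have h4 := (abs_le.1 hy)
  have h5 := mul_le_mul_of_nonneg_left h2 (by linarith : 0 ≤ 1 + y)
  have h6 : y ^ 3 ≤ |y| ^ 3 := by rw [← abs_pow]; exact le_abs_self _
  nlinarith [pow_nonneg (abs_nonneg y) 3]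

lemma rotGamma_const_mul_self {g : E n → ℝ} {x : E n} (hg : DifferentiableAt ℝ g x) (c : ℝ) :
    rotGamma (fun y => c * g y) (fun y => c * g y) x = c ^ 2 * rotGamma g g x := by
  simp only [rotGamma, rotD_const_mul _ _ hg, Finset.mul_sum]
  exact Finset.sum_congr rfl fun i _ => Finset.sum_congr rfl fun j _ => by ring

lemma rotGamma_one_add_const_mul_self {g : E n → ℝ} {x : E n} (hg : DifferentiableAt ℝ g x)
    (c : ℝ) : rotGamma (fun y => 1 + c * g y) (fun y => 1 + c * g y) x =
      c ^ 2 * rotGamma g g x := by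
  have : (fun y => 1 + c * g y) = fun y => c * g y + 1 := funext fun y => add_comm _ _
  rw [this, rotGamma_add_const_left, rotGamma_comm, rotGamma_add_const_left,
    rotGamma_const_mul_self hg]

/-- The Poincaré inequality on the sphere. -/
lemma poincare_of_three_le [NeZero n] (hn : 3 ≤ n) {g : E n → ℝ} (hg : SphSmooth 1 g)
    (h0 : ∫ x, g x ∂sphMeasure n = 0) :
    ∫ x, g x ^ 2 ∂sphMeasure n ≤ 1 / ((n : ℝ) - 1) * ∫ x, rotGamma g g x ∂sphMeasure n := by
  have hN : (0 : ℝ) < (n : ℝ) - 1 := by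
    have : (3 : ℝ) ≤ n := by exact_mod_cast hn
    linarith
  have hc := hg.continuousOn
  obtain ⟨M, hM⟩ := (isCompact_sphere (0 : E n) 1).exists_bound_of_continuousOn hc
  have hM0 : 0 ≤ M := (norm_nonneg _).trans
    (hM (EuclideanSpace.single 0 1) (by simp))
  have hΓc : ContinuousOn (rotGamma g g) 𝕊 := (hg.rotGamma hg (l := 0) (by simp)).continuousOn
  set V := ∫ x, g x ^ 2 ∂sphMeasure n with hV
  set G := ∫ x, rotGamma g g x ∂sphMeasure n with hG
  have key : ∀ ε : ℝ, 0 < ε → ε * M < 1 / 2 →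
      V / 2 - 4 * ε * M ^ 3 ≤ 1 / (2 * ((n : ℝ) - 1)) * (G / (1 - ε * M)) := by
    intro ε hε hεM
    have hεg : ∀ x ∈ 𝕊, |ε * g x| ≤ ε * M := fun x hx => by
      rw [abs_mul, abs_of_pos hε]
      exact mul_le_mul_of_nonneg_left (hM x hx) hε.le
    have hlow : ∀ x ∈ 𝕊, 1 - ε * M ≤ 1 + ε * g x := fun x hx => by
      linarith [(abs_le.1 (hεg x hx)).1]
    have hpos : ∀ x ∈ 𝕊, 0 < 1 + ε * g x := fun x hx => by linarith [hlow x hx]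
    have hs : SphSmooth 1 (fun x => 1 + ε * g x) := (SphSmooth.const 1).add ((SphSmooth.const ε).mul hg)
    have hlsi := sphEnt_le hn hs hpos
    have hmean : ∫ x, (1 + ε * g x) ∂sphMeasure n = 1 := by
      rw [integral_add (integrable_const _) ((integrable_of_continuousOn hc).const_mul ε),
        integral_const_mul, h0]
      simp
    rw [sphEnt, hmean, Real.log_one, mul_zero, sub_zero] at hlsi
    have hl : ε ^ 2 * (V / 2 - 4 * ε * M ^ 3) ≤
        ∫ x, (1 + ε * g x) * Real.log (1 + ε * g x) ∂sphMeasure n := by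
      have e : ∫ x, (ε * g x + (ε ^ 2 / 2 * g x ^ 2 - 4 * (ε * M) ^ 3)) ∂sphMeasure n =
          ε ^ 2 * (V / 2 - 4 * ε * M ^ 3) := by
        have hi : Integrable (fun x => ε ^ 2 / 2 * g x ^ 2 - 4 * (ε * M) ^ 3) (sphMeasure n) :=
          integrable_of_continuousOn (by fun_prop)
        rw [integral_add ((integrable_of_continuousOn hc).const_mul ε) hi,
          integral_sub ((integrable_of_continuousOn (hc.fun_pow 2)).const_mul _) (integrable_const _),
          integral_const_mul, integral_const_mul, h0, ← hV]
        simp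
        ring
      rw [← e]
      refine integral_mono_sphere (by fun_prop) ?_ fun x hx => ?_
      · exact hs.continuousOn.fun_mul (hs.continuousOn.log fun x hx => (hpos x hx).ne')
      · have h1 := le_one_add_mul_log_one_add ((hεg x hx).trans hεM.le)
        have h2 : |ε * g x| ^ 3 ≤ (ε * M) ^ 3 := pow_le_pow_left₀ (abs_nonneg _) (hεg x hx) 3
        rw [mul_pow] at h1
        linarith
    have hu : ∫ x, rotGamma (fun x => 1 + ε * g x) (fun x => 1 + ε * g x) x / (1 + ε * g x)
        ∂sphMeasure n ≤ ε ^ 2 * (G / (1 - ε * M)) := by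
      rw [hG, ← integral_div, ← integral_const_mul]
      refine integral_mono_sphere
        (ContinuousOn.div (hs.rotGamma hs (l := 0) (by simp)).continuousOn hs.continuousOn
          fun x hx => (hpos x hx).ne') (by fun_prop) fun x hx => ?_
      rw [rotGamma_one_add_const_mul_self (hg.differentiableAt one_ne_zero hx), mul_div_assoc]
      exact mul_le_mul_of_nonneg_left (div_le_div_of_nonneg_left rotGamma_self_nonneg
        (by linarith) (hlow x hx)) (sq_nonneg ε)
    have h3 := hl.trans (hlsi.trans (mul_le_mul_of_nonneg_left hu (by positivity)))
    rw [mul_left_comm] at h3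
    exact le_of_mul_le_mul_left h3 (by positivity)
  have hlim : V / 2 - 4 * 0 * M ^ 3 ≤ 1 / (2 * ((n : ℝ) - 1)) * (G / (1 - 0 * M)) := by
    have ht1 : Tendsto (fun ε : ℝ => V / 2 - 4 * ε * M ^ 3) (𝓝[>] 0) (𝓝 (V / 2 - 4 * 0 * M ^ 3)) :=
      ((by fun_prop : Continuous fun ε : ℝ => V / 2 - 4 * ε * M ^ 3).tendsto 0).mono_left
        nhdsWithin_le_nhds
    have ht2 : Tendsto (fun ε : ℝ => 1 / (2 * ((n : ℝ) - 1)) * (G / (1 - ε * M))) (𝓝[>] 0)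
        (𝓝 (1 / (2 * ((n : ℝ) - 1)) * (G / (1 - 0 * M)))) := by
      refine Tendsto.mono_left ?_ nhdsWithin_le_nhds
      refine Tendsto.const_mul _ (Tendsto.div tendsto_const_nhds ?_ (by simp))
      exact (by fun_prop : Continuous fun ε : ℝ => 1 - ε * M).tendsto 0
    refine le_of_tendsto_of_tendsto ht1 ht2 ?_
    have hsmall : ∀ᶠ ε : ℝ in 𝓝[>] 0, ε * M < 1 / 2 := by
      refine nhdsWithin_le_nhds ?_
      exact ((by fun_prop : Continuous fun ε : ℝ => ε * M).tendsto 0).eventually_lt_const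
        (by norm_num)
    filter_upwards [hsmall, self_mem_nhdsWithin] with ε h1 h2 using key ε h2 h1
  have e : 1 / ((n : ℝ) - 1) * G = 2 * (1 / (2 * ((n : ℝ) - 1)) * (G / (1 - 0 * M))) := by
    field_simp
    ring
  rw [e]
  linarith

end poincare

section herbst

/-- If `k t / t` is nonincreasing, then it is at most `k' 0`. -/
lemma le_mul_deriv_zero {k k' : ℝ → ℝ} {T : ℝ} (hT : 0 < T)
    (hk : ∀ t ∈ Set.Icc 0 T, HasDerivAt k (k' t) t)
    (h0 : k 0 = 0) (h : ∀ t ∈ Set.Ioo 0 T, t * k' t ≤ k t) : k T ≤ T * k' 0 := by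
  have hd : ∀ t ∈ Set.Ioc 0 T, HasDerivAt (fun t => k t / t) ((k' t * t - k t * 1) / t ^ 2) t :=
    fun t ht => (hk t ⟨ht.1.le, ht.2⟩).fun_div (hasDerivAt_id t) ht.1.ne'
  have hanti : AntitoneOn (fun t => k t / t) (Set.Ioc 0 T) := by
    refine antitoneOn_of_deriv_nonpos (convex_Ioc 0 T)
      (fun t ht => (hd t ht).continuousAt.continuousWithinAt) ?_ ?_
    · rw [interior_Ioc]
      exact fun t ht => (hd t ⟨ht.1, ht.2.le⟩).differentiableAt.differentiableWithinAt
    · rw [interior_Ioc]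
      intro t ht
      rw [(hd t ⟨ht.1, ht.2.le⟩).deriv]
      refine div_nonpos_of_nonpos_of_nonneg ?_ (sq_nonneg t)
      linarith [h t ht]
  have hlim : Tendsto (fun t => k t / t) (𝓝[>] 0) (𝓝 (k' 0)) := by
    have := (hasDerivAt_iff_tendsto_slope_zero.1 (hk 0 ⟨le_rfl, hT.le⟩)).mono_left
      (nhdsWithin_mono (0 : ℝ) fun t (ht : 0 < t) => ht.ne')
    refine this.congr fun t => ?_
    simp [h0, div_eq_inv_mul]
  have h1 : k T / T ≤ k' 0 := by
    refine ge_of_tendsto hlim ?_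
    filter_upwards [Ioo_mem_nhdsGT hT] with t ht
    exact hanti ⟨ht.1, ht.2.le⟩ ⟨hT, le_rfl⟩ ht.2.le
  rwa [div_le_iff₀' hT] at h1

variable {f w u : E n → ℝ} {t : ℝ}

/-- The logarithmic Laplace transform of `u`. -/
def logLaplace (u : E n → ℝ) (t : ℝ) : ℝ := Real.log (∫ x, Real.exp (t * u x) ∂sphMeasure n)

/-- The mean of `v` under the exponentially tilted measure. -/
def tiltedMean (u : E n → ℝ) (t : ℝ) (v : E n → ℝ) : ℝ :=
  (∫ x, v x * Real.exp (t * u x) ∂sphMeasure n) / ∫ x, Real.exp (t * u x) ∂sphMeasure n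

lemma tiltedMean_const_mul (v : E n → ℝ) (c : ℝ) :
    tiltedMean u t (fun x => c * v x) = c * tiltedMean u t v := by
  simp only [tiltedMean, mul_assoc, integral_const_mul, mul_div_assoc]

variable [NeZero n]

lemma integral_exp_pos' (hu : ContinuousOn u 𝕊) (t : ℝ) :
    0 < ∫ x, Real.exp (t * u x) ∂sphMeasure n :=
  integral_exp_pos (integrable_of_continuousOn (by fun_prop))

lemma exp_logLaplace (hu : ContinuousOn u 𝕊) (t : ℝ) :
    Real.exp (logLaplace u t) = ∫ x, Real.exp (t * u x) ∂sphMeasure n :=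
  Real.exp_log (integral_exp_pos' hu t)

lemma logLaplace_zero : logLaplace u 0 = 0 := by
  simp [logLaplace]

lemma tiltedMean_zero (v : E n → ℝ) : tiltedMean u 0 v = ∫ x, v x ∂sphMeasure n := by
  simp [tiltedMean]

lemma tiltedMean_mono {v₁ v₂ : E n → ℝ} (hu : ContinuousOn u 𝕊) (h₁ : ContinuousOn v₁ 𝕊)
    (h₂ : ContinuousOn v₂ 𝕊) (h : ∀ x ∈ 𝕊, v₁ x ≤ v₂ x) :
    tiltedMean u t v₁ ≤ tiltedMean u t v₂ :=
  div_le_div_of_nonneg_right (integral_mono_sphere (by fun_prop) (by fun_prop) fun x hx =>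
    mul_le_mul_of_nonneg_right (h x hx) (Real.exp_pos _).le) (integral_exp_pos' hu t).le

lemma hasDerivAt_logLaplace (hu : ContinuousOn u 𝕊) (t : ℝ) :
    HasDerivAt (logLaplace u) (tiltedMean u t u) t := by
  have h := hasDerivAt_integral_sphere (F := fun t x => Real.exp (t * u x))
    (F' := fun t x => u x * Real.exp (t * u x)) (t₀ := t) one_pos
    (fun t _ => by fun_prop)
    (by
      have : ContinuousOn (fun p : ℝ × E n => u p.2) (Metric.closedBall t 1 ×ˢ 𝕊) :=
        hu.comp continuousOn_snd fun p hp => hp.2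
      exact ContinuousOn.mul this (Real.continuous_exp.comp_continuousOn
        (ContinuousOn.mul continuousOn_fst this)))
    (fun t _ x _ => by
      have := ((hasDerivAt_id t).mul_const (u x)).exp
      simpa [mul_comm] using this)
  exact h.log (integral_exp_pos' hu t).ne'

/-- The exponential form of the logarithmic Sobolev inequality. -/
lemma mul_tiltedMean_sub_logLaplace_le (hn : 3 ≤ n) (hu : SphSmooth 1 u) (t : ℝ) :
    t * tiltedMean u t u - logLaplace u t ≤
      t ^ 2 / (2 * ((n : ℝ) - 1)) * tiltedMean u t (rotGamma u u) := by
  have hc := hu.continuousOn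
  have hs : SphSmooth 1 (fun x => Real.exp (t * u x)) := ((SphSmooth.const t).mul hu).exp
  have h := sphEnt_le hn hs fun x _ => Real.exp_pos _
  have hM := integral_exp_pos' hc t
  have e1 : sphEnt (fun x => Real.exp (t * u x)) =
      (t * tiltedMean u t u - logLaplace u t) * ∫ x, Real.exp (t * u x) ∂sphMeasure n := by
    rw [sphEnt, sub_mul, tiltedMean, mul_assoc, div_mul_cancel₀ _ hM.ne', ← integral_const_mul,
      logLaplace, mul_comm (Real.log _)]
    congr 2
    ext x
    rw [Real.log_exp]; ring
  have e2 : ∫ x, rotGamma (fun x => Real.exp (t * u x)) (fun x => Real.exp (t * u x)) x /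
      Real.exp (t * u x) ∂sphMeasure n =
      t ^ 2 * tiltedMean u t (rotGamma u u) * ∫ x, Real.exp (t * u x) ∂sphMeasure n := by
    rw [tiltedMean, mul_assoc, div_mul_cancel₀ _ hM.ne', ← integral_const_mul]
    refine integral_congr_sphere fun x hx => ?_
    have hd : DifferentiableAt ℝ (fun x => t * u x) x :=
      (hu.differentiableAt one_ne_zero hx).const_mul t
    rw [rotGamma_exp_left hd, rotGamma_comm, rotGamma_exp_left hd,
      rotGamma_const_mul_self (hu.differentiableAt one_ne_zero hx),
      div_eq_iff (Real.exp_pos _).ne']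
    ring
  rw [e1, e2, ← mul_assoc] at h
  have h' := le_of_mul_le_mul_right h hM
  calc _ ≤ _ := h'
    _ = _ := by ring

lemma logLaplace_le_of_rotGamma_le (hn : 3 ≤ n) (hw : SphSmooth 1 w)
    (h : ∀ x ∈ 𝕊, rotGamma w w x ≤ 4 * w x) {s : ℝ} (hs : 0 ≤ s) (hs' : 2 * s / ((n : ℝ) - 1) < 1) :
    logLaplace w s * (1 - 2 * s / ((n : ℝ) - 1)) ≤ s * ∫ x, w x ∂sphMeasure n := by
  have hN : (0 : ℝ) < (n : ℝ) - 1 := by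
    have : (3 : ℝ) ≤ n := by exact_mod_cast hn
    linarith
  rcases hs.eq_or_lt with rfl | hs
  · simp [logLaplace_zero]
  have hc := hw.continuousOn
  have key := le_mul_deriv_zero (k := fun s => logLaplace w s * (1 - 2 * s / ((n : ℝ) - 1)))
    (k' := fun s => tiltedMean w s w * (1 - 2 * s / ((n : ℝ) - 1)) +
      logLaplace w s * (-(2 * 1 / ((n : ℝ) - 1)))) hs
    (fun t _ => (hasDerivAt_logLaplace hc t).mul
      ((((hasDerivAt_id t).const_mul 2).div_const _).const_sub 1)) (by simp [logLaplace_zero]) ?_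
  · simpa [logLaplace_zero, tiltedMean_zero] using key
  · intro t ht
    have h1 := mul_tiltedMean_sub_logLaplace_le hn hw t
    have h2 : tiltedMean w t (rotGamma w w) ≤ 4 * tiltedMean w t w := by
      rw [← tiltedMean_const_mul]
      exact tiltedMean_mono hc (hw.rotGamma hw (l := 0) (by simp)).continuousOn (by fun_prop) h
    have h3 := h1.trans (mul_le_mul_of_nonneg_left h2 (by positivity))
    have h4 : t ^ 2 / (2 * ((n : ℝ) - 1)) * (4 * tiltedMean w t w) =
      t * (2 * t / ((n : ℝ) - 1) * tiltedMean w t w) := by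
        field_simp
        ring
    rw [h4] at h3
    have h5 : t * (2 * 1 / ((n : ℝ) - 1)) = 2 * t / ((n : ℝ) - 1) := by ring
    linear_combination h3 - logLaplace w t * h5

/-- The Gibbs variational principle. -/
lemma mul_tiltedMean_le (hf : ContinuousOn f 𝕊) (hw : ContinuousOn w 𝕊) (s t : ℝ) :
    s * tiltedMean f t w ≤ t * tiltedMean f t f - logLaplace f t + logLaplace w s := by
  have hMf := integral_exp_pos' hf t
  have hMw := integral_exp_pos' hw s
  have hp : ∀ x, Real.exp (t * f x) * (∫ x, Real.exp (t * f x) ∂sphMeasure n)⁻¹ *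
      (s * w x - logLaplace w s - (t * f x - logLaplace f t) + 1) ≤
      Real.exp (s * w x) * (∫ x, Real.exp (s * w x) ∂sphMeasure n)⁻¹ := by
    intro x
    rw [← exp_logLaplace hf, ← exp_logLaplace hw, ← Real.exp_neg, ← Real.exp_neg, ← Real.exp_add,
      ← Real.exp_add]
    have h1 := Real.add_one_le_exp (s * w x - logLaplace w s - (t * f x - logLaplace f t))
    have h2 := mul_le_mul_of_nonneg_left h1 (Real.exp_pos (t * f x + -logLaplace f t)).le
    rw [← Real.exp_add] at h2
    rwa [show t * f x + -logLaplace f t + (s * w x - logLaplace w s - (t * f x - logLaplace f t)) =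
      s * w x + -logLaplace w s by ring] at h2
  have h1 := integral_mono_sphere (by fun_prop) (by fun_prop) fun x (_ : x ∈ 𝕊) => hp x
  rw [integral_mul_const, mul_inv_cancel₀ hMw.ne'] at h1
  set p : E n → ℝ := fun x => Real.exp (t * f x) with hpdef
  have hpc : ContinuousOn p 𝕊 := by fun_prop
  have hte : ∀ v, tiltedMean f t v = (∫ x, v x * p x ∂sphMeasure n) / ∫ x, p x ∂sphMeasure n :=
    fun _ => rfl
  have e : ∫ x, p x * (∫ x, p x ∂sphMeasure n)⁻¹ *
      (s * w x - logLaplace w s - (t * f x - logLaplace f t) + 1) ∂sphMeasure n =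
      s * tiltedMean f t w - t * tiltedMean f t f + (1 - logLaplace w s + logLaplace f t) := by
    have : ∀ x, p x * (∫ x, p x ∂sphMeasure n)⁻¹ *
      (s * w x - logLaplace w s - (t * f x - logLaplace f t) + 1) =
        (s * (w x * p x) - t * (f x * p x) + (1 - logLaplace w s + logLaplace f t) * p x) *
          (∫ x, p x ∂sphMeasure n)⁻¹ := fun x => by ring
    simp_rw [this]
    rw [integral_mul_const, integral_add (integrable_of_continuousOn (by fun_prop))
      (integrable_of_continuousOn (by fun_prop)), integral_sub (integrable_of_continuousOn
      (by fun_prop)) (integrable_of_continuousOn (by fun_prop)), integral_const_mul,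
      integral_const_mul, integral_const_mul, hte, hte]
    field_simp
  rw [e] at h1
  linarith

/-- Exponential integrability in terms of the square of the gradient. -/
lemma integral_exp_le (hn : 3 ≤ n) (hf : SphSmooth 1 f) (hw : SphSmooth 1 w)
    (h0 : ∫ x, f x ∂sphMeasure n = 0) (hfw : ∀ x ∈ 𝕊, rotGamma f f x ≤ w x)
    (h : ∀ x ∈ 𝕊, rotGamma w w x ≤ 4 * w x) :
    ∫ x, Real.exp (((n : ℝ) - 1) / 2 * f x) ∂sphMeasure n ≤
      Real.exp (((n : ℝ) - 1) / 2 * ∫ x, w x ∂sphMeasure n) := by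
  set N : ℝ := (n : ℝ) - 1 with hNdef
  have hN : 0 < N := by
    have : (3 : ℝ) ≤ n := by exact_mod_cast hn
    linarith
  have hfc := hf.continuousOn
  have hwc := hw.continuousOn
  set W := ∫ x, w x ∂sphMeasure n with hW
  have key := le_mul_deriv_zero (k := fun t => logLaplace f t - 2 * W / N * t ^ 2)
    (k' := fun t => tiltedMean f t f - 2 * W / N * (2 * t)) (T := N / 2) (by positivity)
    (fun t _ => (hasDerivAt_logLaplace hfc t).fun_sub (((hasDerivAt_pow 2 t).const_mul _).congr_deriv
      (by norm_num))) (by simp [logLaplace_zero]) ?_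
  · simp only [tiltedMean_zero, h0, mul_zero, sub_zero] at key
    rw [← exp_logLaplace hfc, Real.exp_le_exp]
    have : 2 * W / N * (N / 2) ^ 2 = N / 2 * W := by field_simp
    linarith
  · intro t ht
    have hW0 : 0 ≤ W := integral_nonneg_of_ae (ae_mem_sphere.mono fun x hx =>
      rotGamma_self_nonneg.trans (hfw x hx))
    have h1 := mul_tiltedMean_sub_logLaplace_le hn hf t
    have h2 : tiltedMean f t (rotGamma f f) ≤ tiltedMean f t w :=
      tiltedMean_mono hfc (hf.rotGamma hf (l := 0) (by simp)).continuousOn hwc hfw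
    have h3 := mul_tiltedMean_le hfc hwc (t ^ 2 / N) t
    have h4 : 2 * (t ^ 2 / N) / N ≤ 1 / 2 := by
      rw [← mul_div_assoc, div_div, div_le_div_iff₀ (by positivity) (by positivity)]
      nlinarith [ht.1, ht.2]
    have h5 := logLaplace_le_of_rotGamma_le hn hw h (s := t ^ 2 / N) (by positivity)
      (by rw [← hNdef]; linarith)
    rw [← hNdef] at h1 h5
    have h6 := mul_le_mul_of_nonneg_left h2 (by positivity : 0 ≤ t ^ 2 / (2 * N))
    have h7 : t ^ 2 / (2 * N) * tiltedMean f t w = 1 / 2 * (t ^ 2 / N * tiltedMean f t w) := by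
      field_simp
    have h8 : logLaplace w (t ^ 2 / N) ≤ 2 * (t ^ 2 / N * W) := by
      by_contra! hcon
      have : 0 ≤ t ^ 2 / N * W := by positivity
      nlinarith
    have h9 : 2 * W / N * t ^ 2 = 2 * (t ^ 2 / N * W) := by ring
    nlinarith

end herbst

section gradientField

variable {f : E n → ℝ} {x : E n}

lemma gradient_apply_eq (f : E n → ℝ) (x : E n) (i : Fin n) :
    gradient f x i = fderiv ℝ f x (EuclideanSpace.single i 1) := by
  rw [fderiv_eq_inner_gradient, EuclideanSpace.inner_single_right]
  simp

lemma norm_gradient (f : E n → ℝ) (x : E n) : ‖gradient f x‖ = ‖fderiv ℝ f x‖ := by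
  simp [gradient]

lemma ContDiffAt.gradient {k l : ℕ∞ω} (hf : ContDiffAt ℝ k f x) (hl : l + 1 ≤ k) :
    ContDiffAt ℝ l (gradient f) x :=
  (InnerProductSpace.toDual ℝ (E n)).symm.toContinuousLinearEquiv.contDiff.contDiffAt.comp x
    (hf.fderiv_right hl)

lemma contDiffAt_gradient (hf : ContDiffAt ℝ 2 f x) : ContDiffAt ℝ 1 (gradient f) x :=
  ContDiffAt.gradient hf (by norm_num)

lemma sphSmooth_gradient_apply (hf : SphSmooth 2 f) (i : Fin n) :
    SphSmooth 1 (fun x => gradient f x i) := fun x hx =>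
  (EuclideanSpace.proj i : E n →L[ℝ] ℝ).contDiff.contDiffAt.comp x (contDiffAt_gradient (hf x hx))

lemma sphSmooth_norm_gradient_sq (hf : SphSmooth 2 f) :
    SphSmooth 1 (fun x => ‖gradient f x‖ ^ 2) := fun x hx =>
  (contDiffAt_gradient (hf x hx)).norm_sq ℝ

lemma continuousOn_gradient (hf : SphSmooth 1 f) : ContinuousOn (gradient f) 𝕊 := fun x hx =>
  (ContDiffAt.gradient (l := 0) (hf x hx) (by simp)).continuousAt.continuousWithinAt

lemma continuousOn_apply {v : E n → E n} {s : Set (E n)} (hv : ContinuousOn v s) (i : Fin n) :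
    ContinuousOn (fun x => v x i) s :=
  (EuclideanSpace.proj i : E n →L[ℝ] ℝ).continuous.comp_continuousOn hv

lemma sphSmooth_coord {k : ℕ∞ω} (i : Fin n) : SphSmooth k (fun x : E n => x i) := fun _ _ =>
  (EuclideanSpace.proj i : E n →L[ℝ] ℝ).contDiff.contDiffAt

lemma rotGamma_self_le (hx : x ∈ 𝕊) : rotGamma f f x ≤ ‖gradient f x‖ ^ 2 := by
  rw [rotGamma_self_eq hx]
  linarith [sq_nonneg ⟪x, gradient f x⟫]

lemma rotGamma_norm_gradient_sq_le (hf : SphSmooth 2 f) (hx : x ∈ 𝕊) (hop : ‖hess f x‖ ≤ 1) :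
    rotGamma (fun x => ‖gradient f x‖ ^ 2) (fun x => ‖gradient f x‖ ^ 2) x ≤
      4 * ‖gradient f x‖ ^ 2 := by
  refine (rotGamma_self_le hx).trans ?_
  have hd : HasFDerivAt (gradient f) (hess f x) x :=
    ((contDiffAt_gradient (hf x hx)).differentiableAt one_ne_zero).hasFDerivAt
  rw [norm_gradient, hd.norm_sq.fderiv]
  have h1 : ‖(2 : ℝ) • (innerSL ℝ (gradient f x)).comp (hess f x)‖ ≤ 2 * ‖gradient f x‖ := by
    rw [norm_smul, Real.norm_ofNat]
    refine mul_le_mul_of_nonneg_left ?_ zero_le_two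
    refine (ContinuousLinearMap.opNorm_comp_le _ _).trans ?_
    rw [innerSL_apply_norm]
    exact mul_le_of_le_one_right (norm_nonneg _) hop
  have h2 := pow_le_pow_left₀ (norm_nonneg _) h1 2
  calc _ ≤ _ := by simpa [two_smul] using h2
    _ = _ := by ring

lemma sum_rotGamma_gradient_le (hf : SphSmooth 2 f) (hx : x ∈ 𝕊) :
    ∑ i, rotGamma (fun x => gradient f x i) (fun x => gradient f x i) x ≤ hsNormSq (hess f x) := by
  have hd : HasFDerivAt (gradient f) (hess f x) x :=
    ((contDiffAt_gradient (hf x hx)).differentiableAt one_ne_zero).hasFDerivAt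
  have hp : ∀ i v, fderiv ℝ (fun x => gradient f x i) x v = hess f x v i := fun i v => by
    have := ((EuclideanSpace.proj i : E n →L[ℝ] ℝ).hasFDerivAt.comp x hd).fderiv
    exact congrArg (fun A => A v) this
  calc _ ≤ ∑ i, ∑ j, (hess f x (EuclideanSpace.single j 1) i) ^ 2 := by
        refine Finset.sum_le_sum fun i _ => (rotGamma_self_le hx).trans (le_of_eq ?_)
        rw [EuclideanSpace.real_norm_sq_eq]
        refine Finset.sum_congr rfl fun j _ => ?_
        rw [gradient_apply_eq, hp]
    _ = hsNormSq (hess f x) := by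
        rw [Finset.sum_comm, hsNormSq]
        refine Finset.sum_congr rfl fun j _ => ?_
        rw [EuclideanSpace.real_norm_sq_eq]

lemma continuousOn_hsNormSq (hf : SphSmooth 2 f) : ContinuousOn (fun x => hsNormSq (hess f x)) 𝕊 := by
  have : ContinuousOn (hess f) 𝕊 := fun x hx =>
    ((contDiffAt_gradient (hf x hx)).fderiv_right (m := 0) (by norm_num)).continuousAt.continuousWithinAt
  unfold hsNormSq
  exact continuousOn_finsetSum _ fun i _ => ((this.clm_apply continuousOn_const).norm).pow 2

variable [NeZero n]

/-- The mean of the spherical gradient. -/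
lemma integral_sgrad (hf : SphSmooth 1 f) (i : Fin n) :
    ∫ x, (gradient f x i - x i * ⟪x, gradient f x⟫) ∂sphMeasure n =
      ((n : ℝ) - 1) * ∫ x, x i * f x ∂sphMeasure n := by
  have hxf : ∀ j, SphSmooth 1 (fun x : E n => x j * f x) := fun j => (sphSmooth_coord j).mul hf
  have h0 : ∫ x, ∑ j, rotD j i (fun x => x j * f x) x ∂sphMeasure n = 0 := by
    rw [integral_finsetSum _ fun j _ =>
      integrable_of_continuousOn ((hxf j).rotD (l := 0) (by simp) j i).continuousOn]
    exact Finset.sum_eq_zero fun j _ => integral_rotD_eq_zero (hxf j) j i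
  have h1 : ∀ x ∈ 𝕊, ∑ j, rotD j i (fun x => x j * f x) x =
      (gradient f x i - x i * ⟪x, gradient f x⟫) - ((n : ℝ) - 1) * (x i * f x) := by
    intro x hx
    have hxx : ∑ j, x j * x j = 1 := by
      have := mem_sphere_zero_iff_norm.1 hx
      have h2 := EuclideanSpace.real_norm_sq_eq x
      rw [this] at h2
      simpa [sq] using h2.symm
    have h3 : ∀ j, rotD j i (fun x : E n => x j) x = x j * (if j = i then 1 else 0) - x i := by
      intro j
      have : fderiv ℝ (fun x : E n => x j) x = EuclideanSpace.proj j :=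
        (EuclideanSpace.proj j : E n →L[ℝ] ℝ).fderiv
      rw [rotD, this]
      change rotGen j i x j = _
      rw [rotGen_apply_coord]
      simp
    have h4 : ∀ j, rotD j i (fun x => x j * f x) x = (x j * x j) * gradient f x i -
        x i * (gradient f x j * x j) + f x * (x j * (if j = i then 1 else 0) - x i) := fun j => by
      rw [rotD_mul _ _ ((sphSmooth_coord j (k := 1)).differentiableAt one_ne_zero hx)
        (hf.differentiableAt one_ne_zero hx), h3, rotD_eq_coord, gradient_apply_eq,
        gradient_apply_eq]
      ring
    simp only [h4, Finset.sum_add_distrib, Finset.sum_sub_distrib, ← Finset.mul_sum,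
      ← Finset.sum_mul, hxx]
    rw [PiLp.inner_apply]
    simp
    ring
  have hc := continuousOn_gradient hf
  have hci := continuousOn_apply hc i
  have hfc := hf.continuousOn
  have hxi : ContinuousOn (fun x : E n => x i) 𝕊 := continuousOn_apply continuousOn_id i
  rw [integral_congr_sphere h1, integral_sub (integrable_of_continuousOn (by fun_prop))
    (integrable_of_continuousOn (by fun_prop)), integral_const_mul, sub_eq_zero] at h0
  exact h0

end gradientField

section meanGradient

lemma inner_eq_sum (v w : E n) : ⟪v, w⟫ = ∑ i, v i * w i := by
  rw [PiLp.inner_apply]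
  exact Finset.sum_congr rfl fun i _ => by simp [mul_comm]

variable {f : E n → ℝ} [NeZero n]

lemma integral_inner_sgrad (hf : SphSmooth 1 f) (v : E n) :
    ∫ x, (⟪v, gradient f x⟫ - ⟪v, x⟫ * ⟪x, gradient f x⟫) ∂sphMeasure n =
      ((n : ℝ) - 1) * ∫ x, ⟪v, x⟫ * f x ∂sphMeasure n := by
  have hc := continuousOn_gradient hf
  have hci := continuousOn_apply hc
  have hfc := hf.continuousOn
  have hxi : ∀ i, ContinuousOn (fun x : E n => x i) 𝕊 := continuousOn_apply continuousOn_id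
  have e1 : ∀ x : E n, ⟪v, gradient f x⟫ - ⟪v, x⟫ * ⟪x, gradient f x⟫ =
      ∑ i, v i * (gradient f x i - x i * ⟪x, gradient f x⟫) := fun x => by
    rw [inner_eq_sum v, inner_eq_sum v, Finset.sum_mul, ← Finset.sum_sub_distrib]
    exact Finset.sum_congr rfl fun i _ => by ring
  have e2 : ∀ x : E n, ⟪v, x⟫ * f x = ∑ i, v i * (x i * f x) := fun x => by
    rw [inner_eq_sum v, Finset.sum_mul]
    exact Finset.sum_congr rfl fun i _ => by ring
  simp_rw [e1, e2]
  rw [integral_finsetSum _ fun i _ => integrable_of_continuousOn (by fun_prop),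
    integral_finsetSum _ fun i _ => integrable_of_continuousOn (by fun_prop), Finset.mul_sum]
  refine Finset.sum_congr rfl fun i _ => ?_
  rw [integral_const_mul, integral_const_mul, integral_sgrad hf]
  ring

lemma integral_inner_sq (v : E n) :
    (n : ℝ) * ∫ x, ⟪v, x⟫ ^ 2 ∂sphMeasure n = ‖v‖ ^ 2 := by
  have hs : SphSmooth 1 (fun x : E n => ⟪v, x⟫) := fun x _ =>
    (innerSL ℝ v).contDiff.contDiffAt
  have hg : ∀ x, gradient (fun x : E n => ⟪v, x⟫) x = v := fun x => by
    have : HasGradientAt (fun x : E n => ⟪v, x⟫) v x := (innerSL ℝ v).hasFDerivAt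
    exact this.gradient
  have h := integral_inner_sgrad hs v
  simp only [hg, real_inner_self_eq_norm_sq, real_inner_comm v] at h
  simp only [← sq] at h ⊢
  rw [integral_sub (integrable_const _) (integrable_of_continuousOn (by fun_prop))] at h
  simp at h
  linarith

/-- The mean of the gradient over the sphere. -/
def meanGradient (f : E n → ℝ) : E n := WithLp.toLp 2 fun i => ∫ x, gradient f x i ∂sphMeasure n

lemma integral_inner_gradient (hf : SphSmooth 1 f) (v : E n) :
    ∫ x, ⟪v, gradient f x⟫ ∂sphMeasure n = ⟪v, meanGradient f⟫ := by
  have hci := continuousOn_apply (continuousOn_gradient hf)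
  simp_rw [inner_eq_sum v]
  rw [integral_finsetSum _ fun i _ => integrable_of_continuousOn (by fun_prop)]
  exact Finset.sum_congr rfl fun i _ => by rw [integral_const_mul]; rfl

lemma integral_norm_gradient_sq (hf : SphSmooth 1 f) :
    ∫ x, ‖gradient f x‖ ^ 2 ∂sphMeasure n =
      ‖meanGradient f‖ ^ 2 + ∫ x, ‖gradient f x - meanGradient f‖ ^ 2 ∂sphMeasure n := by
  have hc := continuousOn_gradient hf
  set m := meanGradient f
  have e : ∀ x, ‖gradient f x‖ ^ 2 =
      (2 * ⟪m, gradient f x⟫ - ‖m‖ ^ 2) + ‖gradient f x - m‖ ^ 2 := fun x => by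
    rw [norm_sub_sq_real, real_inner_comm m]; ring
  rw [integral_congr_ae (Eventually.of_forall e),
    integral_add (integrable_of_continuousOn (by fun_prop)) (integrable_of_continuousOn (by fun_prop)),
    integral_sub (integrable_of_continuousOn (by fun_prop)) (integrable_const _),
    integral_const_mul, integral_inner_gradient hf, real_inner_self_eq_norm_sq]
  simp
  ring

lemma integral_inner_mul_inner (hf : SphSmooth 1 f)
    (hlin : ∀ v : E n, ∫ θ, ⟪v, θ⟫ * f θ ∂sphMeasure n = 0) :
    ∫ x, ⟪meanGradient f, x⟫ * ⟪x, gradient f x⟫ ∂sphMeasure n = ‖meanGradient f‖ ^ 2 := by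
  have hc := continuousOn_gradient hf
  have h := integral_inner_sgrad hf (meanGradient f)
  rw [hlin, mul_zero, integral_sub (integrable_of_continuousOn (by fun_prop))
    (integrable_of_continuousOn (by fun_prop)), integral_inner_gradient hf,
    real_inner_self_eq_norm_sq] at h
  linarith

lemma norm_meanGradient_sq_le (hn : 2 ≤ n) (hf : SphSmooth 1 f)
    (hlin : ∀ v : E n, ∫ θ, ⟪v, θ⟫ * f θ ∂sphMeasure n = 0) :
    ‖meanGradient f‖ ^ 2 ≤ (n : ℝ) / ((n : ℝ) - 1) ^ 2 *
      ∫ x, ‖gradient f x - meanGradient f‖ ^ 2 ∂sphMeasure n := by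
  have hn' : (2 : ℝ) ≤ n := by exact_mod_cast hn
  have hc := continuousOn_gradient hf
  have h1 := integral_inner_mul_inner hf hlin
  have h2 := integral_inner_sq (meanGradient f)
  set m := meanGradient f
  set N : ℝ := (n : ℝ) - 1 with hN
  have hN0 : 0 < N := by rw [hN]; linarith
  have hpt : ∀ x ∈ 𝕊, ⟪m, x⟫ * ⟪x, gradient f x⟫ ≤
      (1 + N / 2) * ⟪m, x⟫ ^ 2 + 1 / (2 * N) * ‖gradient f x - m‖ ^ 2 := fun x hx => by
    have h3 : ⟪x, gradient f x⟫ = ⟪m, x⟫ + ⟪x, gradient f x - m⟫ := by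
      rw [inner_sub_right, real_inner_comm m]; ring
    have h4 : ⟪x, gradient f x - m⟫ ^ 2 ≤ ‖gradient f x - m‖ ^ 2 := by
      have := abs_real_inner_le_norm x (gradient f x - m)
      rw [mem_sphere_zero_iff_norm.1 hx, one_mul] at this
      exact sq_le_sq' (neg_le_of_abs_le this) (le_of_abs_le this)
    set r := ⟪x, gradient f x - m⟫
    have h5 : ⟪m, x⟫ * r ≤ N / 2 * ⟪m, x⟫ ^ 2 + 1 / (2 * N) * r ^ 2 := by
      have : 0 ≤ 1 / (2 * N) * (N * ⟪m, x⟫ - r) ^ 2 := by positivity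
      have e : 1 / (2 * N) * (N * ⟪m, x⟫ - r) ^ 2 =
        N / 2 * ⟪m, x⟫ ^ 2 + 1 / (2 * N) * r ^ 2 - ⟪m, x⟫ * r := by field_simp; ring
      linarith
    have h6 := mul_le_mul_of_nonneg_left h4 (by positivity : 0 ≤ 1 / (2 * N))
    rw [h3]
    linarith
  have h7 := integral_mono_sphere (by fun_prop) (by fun_prop) hpt
  rw [h1, integral_add (integrable_of_continuousOn (by fun_prop))
    (integrable_of_continuousOn (by fun_prop)), integral_const_mul, integral_const_mul] at h7
  set S := ∫ x, ‖gradient f x - m‖ ^ 2 ∂sphMeasure n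
  set Q := ∫ x, ⟪m, x⟫ ^ 2 ∂sphMeasure n
  have hnN : (n : ℝ) = N + 1 := by rw [hN]; ring
  rw [← h2, hnN] at h7 ⊢
  have h8 : N / 2 * Q ≤ 1 / (2 * N) * S := by linarith
  have h9 : Q ≤ 1 / N ^ 2 * S := by
    have := mul_le_mul_of_nonneg_left h8 (by positivity : 0 ≤ 2 / N)
    calc Q = 2 / N * (N / 2 * Q) := by field_simp
      _ ≤ _ := this
      _ = _ := by field_simp
  calc (N + 1) * Q ≤ (N + 1) * (1 / N ^ 2 * S) := mul_le_mul_of_nonneg_left h9 (by positivity)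
    _ = _ := by ring

lemma integral_rotGamma_self_le (hf : SphSmooth 1 f)
    (hlin : ∀ v : E n, ∫ θ, ⟪v, θ⟫ * f θ ∂sphMeasure n = 0) :
    ∫ x, rotGamma f f x ∂sphMeasure n ≤
      ∫ x, ‖gradient f x - meanGradient f‖ ^ 2 ∂sphMeasure n := by
  have hc := continuousOn_gradient hf
  have h1 := integral_inner_mul_inner hf hlin
  have h2 := integral_inner_gradient hf (meanGradient f)
  set m := meanGradient f
  have hpt : ∀ x ∈ 𝕊, rotGamma f f x ≤ ‖gradient f x - m‖ ^ 2 +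
      2 * (⟪m, gradient f x⟫ - ⟪m, x⟫ * ⟪x, gradient f x⟫) := fun x hx => by
    rw [rotGamma_self_eq hx, norm_sub_sq_real, real_inner_comm m]
    have h := sq_nonneg ‖m - ⟪x, gradient f x⟫ • x‖
    rw [norm_sub_sq_real, norm_smul, mem_sphere_zero_iff_norm.1 hx, mul_one, Real.norm_eq_abs,
      sq_abs, real_inner_smul_right] at h
    linarith
  refine (integral_mono_sphere (hf.rotGamma hf (l := 0) (by simp)).continuousOn
    (by fun_prop) hpt).trans_eq ?_
  rw [integral_add (integrable_of_continuousOn (by fun_prop))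
    (integrable_of_continuousOn (by fun_prop)), integral_const_mul,
    integral_sub (integrable_of_continuousOn (by fun_prop))
    (integrable_of_continuousOn (by fun_prop)), h1, h2, real_inner_self_eq_norm_sq]
  ring

lemma integral_norm_gradient_sub_sq_le (hf : SphSmooth 2 f) {C b : ℝ} (hC : 0 ≤ C)
    (hP : ∀ g : E n → ℝ, SphSmooth 1 g → ∫ x, g x ∂sphMeasure n = 0 →
      ∫ x, g x ^ 2 ∂sphMeasure n ≤ C * ∫ x, rotGamma g g x ∂sphMeasure n)
    (hHS : ∫ θ, hsNormSq (hess f θ) ∂sphMeasure n ≤ b ^ 2) :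
    ∫ x, ‖gradient f x - meanGradient f‖ ^ 2 ∂sphMeasure n ≤ C * b ^ 2 := by
  have hs := sphSmooth_gradient_apply hf
  have hsc : ∀ i, ContinuousOn (fun x => gradient f x i) 𝕊 := fun i => (hs i).continuousOn
  have hΓc : ∀ i, ContinuousOn (rotGamma (fun x => gradient f x i) (fun x => gradient f x i)) 𝕊 :=
    fun i => ((hs i).rotGamma (hs i) (l := 0) (by simp)).continuousOn
  set m := meanGradient f with hm
  have hi : ∀ i, ∫ x, (gradient f x i - m i) ^ 2 ∂sphMeasure n ≤
      C * ∫ x, rotGamma (fun x => gradient f x i) (fun x => gradient f x i) x ∂sphMeasure n := by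
    intro i
    have h := hP (fun x => gradient f x i + - m i) ((hs i).add (SphSmooth.const _)) (by
      rw [integral_add (integrable_of_continuousOn (hsc i)) (integrable_const _)]
      simp [hm, meanGradient])
    have e : ∀ x, rotGamma (fun x => gradient f x i + - m i) (fun x => gradient f x i + - m i) x =
        rotGamma (fun x => gradient f x i) (fun x => gradient f x i) x := fun x => by
      rw [rotGamma_add_const_left, rotGamma_comm, rotGamma_add_const_left]
    simp only [e] at h
    simpa only [← sub_eq_add_neg] using h
  calc _ = ∑ i, ∫ x, (gradient f x i - m i) ^ 2 ∂sphMeasure n := by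
        rw [← integral_finsetSum _ fun i _ => integrable_of_continuousOn (by fun_prop)]
        refine integral_congr_ae (Eventually.of_forall fun x => ?_)
        exact EuclideanSpace.real_norm_sq_eq _
    _ ≤ ∑ i, C * ∫ x, rotGamma (fun x => gradient f x i) (fun x => gradient f x i) x
          ∂sphMeasure n := Finset.sum_le_sum fun i _ => hi i
    _ = C * ∫ x, ∑ i, rotGamma (fun x => gradient f x i) (fun x => gradient f x i) x
          ∂sphMeasure n := by
        rw [← Finset.mul_sum, integral_finsetSum _ fun i _ => integrable_of_continuousOn (hΓc i)]
    _ ≤ C * b ^ 2 := by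
        refine mul_le_mul_of_nonneg_left (le_trans ?_ hHS) hC
        exact integral_mono_sphere (continuousOn_finsetSum _ fun i _ => hΓc i)
          (continuousOn_hsNormSq hf) fun x hx => sum_rotGamma_gradient_le hf hx

end meanGradient

section threeLe

variable {f : E n → ℝ}

lemma rotGamma_neg_self {x : E n} :
    rotGamma (fun y => -f y) (fun y => -f y) x = rotGamma f f x := by
  have h : ∀ i j, rotD i j (fun y => -f y) x = -rotD i j f x := fun i j => by
    simp [rotD, fderiv_fun_neg]
  simp only [rotGamma, h, neg_mul_neg]

lemma exp_mul_le_of_mem_Icc {t y : ℝ} (h0 : 0 ≤ t) (h1 : t ≤ 1) :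
    Real.exp (t * y) ≤ t * Real.exp y + (1 - t) := by
  have := convexOn_exp.2 (Set.mem_univ y) (Set.mem_univ 0) h0 (sub_nonneg.2 h1) (by ring)
  simpa using this

variable [NeZero n]

lemma integral_exp_abs_le {g : E n → ℝ} (hg : ContinuousOn g 𝕊) {b : ℝ}
    (h1 : ∫ x, Real.exp (g x) ∂sphMeasure n ≤ Real.exp (2 * b ^ 2))
    (h2 : ∫ x, Real.exp (-g x) ∂sphMeasure n ≤ Real.exp (2 * b ^ 2)) :
    ∫ x, Real.exp (1 / (1 + 4 * b ^ 2) * |g x|) ∂sphMeasure n ≤ 2 := by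
  set t : ℝ := 1 / (1 + 4 * b ^ 2) with ht
  have hpos : 0 < 1 + 4 * b ^ 2 := by positivity
  have ht0 : 0 ≤ t := by positivity
  have ht1 : t ≤ 1 := by rw [ht, div_le_one hpos]; nlinarith [sq_nonneg b]
  set k : ℝ := Real.log 2 + 2 * b ^ 2 with hk
  have hi1 : Integrable (fun x => Real.exp (g x)) (sphMeasure n) :=
    integrable_of_continuousOn (by fun_prop)
  have hi2 : Integrable (fun x => Real.exp (-g x)) (sphMeasure n) :=
    integrable_of_continuousOn (by fun_prop)
  have hek : Real.exp k = 2 * Real.exp (2 * b ^ 2) := by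
    rw [hk, Real.exp_add, Real.exp_log two_pos]
  have hpt : ∀ x ∈ 𝕊, Real.exp (t * |g x|) ≤
      Real.exp (t * k) * (t * Real.exp (-k) * (Real.exp (g x) + Real.exp (-g x)) + (1 - t)) := by
    intro x _
    have e1 : Real.exp (t * |g x|) = Real.exp (t * k) * Real.exp (t * (|g x| - k)) := by
      rw [← Real.exp_add]; ring_nf
    have e2 : Real.exp |g x| ≤ Real.exp (g x) + Real.exp (-g x) := by
      rcases abs_cases (g x) with ⟨h, _⟩ | ⟨h, _⟩ <;> rw [h] <;>
        linarith [Real.exp_pos (g x), Real.exp_pos (-g x)]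
    rw [e1]
    refine mul_le_mul_of_nonneg_left ((exp_mul_le_of_mem_Icc ht0 ht1).trans ?_) (Real.exp_pos _).le
    rw [sub_eq_add_neg, Real.exp_add, mul_assoc, mul_comm (Real.exp (-k))]
    gcongr
  have hI := integral_mono_sphere (n := n) (g := fun x => Real.exp (t * |g x|)) (by fun_prop)
    (by fun_prop) hpt
  have hval : ∫ x, Real.exp (t * k) *
      (t * Real.exp (-k) * (Real.exp (g x) + Real.exp (-g x)) + (1 - t)) ∂sphMeasure n ≤
      Real.exp (t * k) := by
    rw [integral_const_mul, integral_add (by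
      have : Integrable (fun x => Real.exp (g x) + Real.exp (-g x)) (sphMeasure n) := hi1.add hi2
      exact this.const_mul _) (integrable_const _), integral_const_mul, integral_add hi1 hi2,
      integral_const]
    simp only [probReal_univ, smul_eq_mul, one_mul]
    have h3 : Real.exp (-k) * ((∫ x, Real.exp (g x) ∂sphMeasure n) +
        ∫ x, Real.exp (-g x) ∂sphMeasure n) ≤ 1 := by
      rw [Real.exp_neg, inv_mul_le_iff₀ (Real.exp_pos _), hek]
      linarith
    have h4 := mul_le_mul_of_nonneg_left h3 ht0
    rw [← mul_assoc] at h4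
    have := mul_le_mul_of_nonneg_left (show t * Real.exp (-k) *
      ((∫ x, Real.exp (g x) ∂sphMeasure n) + ∫ x, Real.exp (-g x) ∂sphMeasure n) + (1 - t) ≤ 1 by
        linarith) (Real.exp_pos (t * k)).le
    simpa using this
  have htk : t * k ≤ Real.log 2 := by
    rw [ht, hk, one_div, inv_mul_le_iff₀ hpos]
    nlinarith [Real.log_two_gt_d9, sq_nonneg b]
  calc _ ≤ _ := hI
    _ ≤ _ := hval
    _ ≤ Real.exp (Real.log 2) := Real.exp_le_exp.2 htk
    _ = 2 := Real.exp_log two_pos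

lemma integral_exp_abs_le_of_three_le (hn : 3 ≤ n) (hf : SphSmooth 2 f)
    (hmean : ∫ θ, f θ ∂sphMeasure n = 0)
    (hlin : ∀ v : E n, ∫ θ, ⟪v, θ⟫ * f θ ∂sphMeasure n = 0) {b : ℝ}
    (hop : ∀ θ ∈ 𝕊, ‖hess f θ‖ ≤ 1)
    (hHS : ∫ θ, hsNormSq (hess f θ) ∂sphMeasure n ≤ b ^ 2) :
    ∫ θ, Real.exp (((n : ℝ) - 1) / (2 * (1 + 4 * b ^ 2)) * |f θ|) ∂sphMeasure n ≤ 2 := by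
  have hn' : (3 : ℝ) ≤ n := by exact_mod_cast hn
  have hN : 0 < (n : ℝ) - 1 := by linarith
  have hf1 : SphSmooth 1 f := hf.of_le (by norm_num)
  have hfc := hf.continuousOn
  have hS := integral_norm_gradient_sub_sq_le hf (C := 1 / ((n : ℝ) - 1)) (by positivity)
    (fun g hg h0 => poincare_of_three_le hn hg h0) hHS
  have hm := norm_meanGradient_sq_le (by omega) hf1 hlin
  have hw := integral_norm_gradient_sq hf1
  have hEw : ((n : ℝ) - 1) / 2 * ∫ x, ‖gradient f x‖ ^ 2 ∂sphMeasure n ≤ 2 * b ^ 2 := by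
    set S := ∫ x, ‖gradient f x - meanGradient f‖ ^ 2 ∂sphMeasure n
    have hc : (n : ℝ) / ((n : ℝ) - 1) ^ 2 ≤ 3 := by
      rw [div_le_iff₀ (by positivity)]; nlinarith
    have hS0 : 0 ≤ S := integral_nonneg fun x => by positivity
    have h4 : ((n : ℝ) - 1) * S ≤ b ^ 2 := by
      have := mul_le_mul_of_nonneg_left hS hN.le
      rwa [← mul_assoc, mul_one_div_cancel hN.ne', one_mul] at this
    have h5 : ∫ x, ‖gradient f x‖ ^ 2 ∂sphMeasure n ≤ 4 * S := by
      have := mul_le_mul_of_nonneg_right hc hS0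
      linarith
    nlinarith
  have hΓ : ∀ x ∈ 𝕊, rotGamma f f x ≤ ‖gradient f x‖ ^ 2 := fun x hx => rotGamma_self_le hx
  have hΓΓ := fun x hx => rotGamma_norm_gradient_sq_le hf (x := x) hx (hop x hx)
  have h1 := integral_exp_le hn hf1 (sphSmooth_norm_gradient_sq hf) hmean hΓ hΓΓ
  have h2 := integral_exp_le hn hf1.neg (sphSmooth_norm_gradient_sq hf)
    (by rw [integral_neg, hmean, neg_zero]) (fun x hx => by
      rw [rotGamma_neg_self]; exact hΓ x hx) hΓΓ
  have := integral_exp_abs_le (g := fun x => ((n : ℝ) - 1) / 2 * f x) (by fun_prop)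
    (h1.trans (Real.exp_le_exp.2 hEw)) (by
      simpa only [mul_neg] using h2.trans (Real.exp_le_exp.2 hEw))
  refine le_of_eq_of_le (integral_congr_ae (Eventually.of_forall fun x => ?_)) this
  simp only [abs_mul, abs_of_pos (half_pos hN)]
  congr 1
  field_simp

end threeLe

section circle

lemma rotFlow_two_apply (s : ℝ) (x : E 2) :
    rotFlow 0 1 s x = !₂[Real.cos s * x 0 - Real.sin s * x 1,
      Real.cos s * x 1 + Real.sin s * x 0] := by
  ext m
  fin_cases m <;> simp [rotFlow_apply, rotGen_apply_coord] <;> ring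

lemma rotFlow_two_add (s t : ℝ) (x : E 2) :
    rotFlow 0 1 s (rotFlow 0 1 t x) = rotFlow 0 1 (s + t) x := by
  simp only [rotFlow_two_apply, Real.cos_add, Real.sin_add]
  ext m
  fin_cases m <;> simp <;> ring

lemma exists_eq_rotFlow_two {x y : E 2} (hx : x ∈ Metric.sphere (0 : E 2) 1)
    (hy : y ∈ Metric.sphere (0 : E 2) 1) : ∃ s, y = rotFlow 0 1 s x := by
  obtain ⟨v, φ, -, hv, hxv, rfl⟩ := exists_great_circle le_rfl hx hy
  rw [mem_sphere_zero_iff_norm] at hx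
  have hx2 : x 0 ^ 2 + x 1 ^ 2 = 1 := by
    rw [← Fin.sum_univ_two (fun i => x i ^ 2), ← EuclideanSpace.real_norm_sq_eq, hx, one_pow]
  have hv2 : v 0 ^ 2 + v 1 ^ 2 = 1 := by
    rw [← Fin.sum_univ_two (fun i => v i ^ 2), ← EuclideanSpace.real_norm_sq_eq, hv, one_pow]
  have hxv2 : x 0 * v 0 + x 1 * v 1 = 0 := by
    simpa [inner_eq_sum, Fin.sum_univ_two] using hxv
  set t := x 0 * v 1 - x 1 * v 0 with ht
  have ht2 : t ^ 2 = 1 := by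
    have : t ^ 2 + (x 0 * v 0 + x 1 * v 1) ^ 2 = (x 0 ^ 2 + x 1 ^ 2) * (v 0 ^ 2 + v 1 ^ 2) := by
      rw [ht]; ring
    rw [hxv2, hx2, hv2] at this; linarith
  have h0 : v 0 = -t * x 1 := by
    rw [ht]; linear_combination (-(v 0)) * hx2 + x 0 * hxv2
  have h1 : v 1 = t * x 0 := by
    rw [ht]; linear_combination (-(v 1)) * hx2 + x 1 * hxv2
  rcases sq_eq_one_iff.1 ht2 with h | h
  · refine ⟨φ, ?_⟩
    rw [rotFlow_two_apply]
    ext m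
    fin_cases m
    · simp [h0, h]; ring
    · simp [h1, h]
  · refine ⟨-φ, ?_⟩
    rw [rotFlow_two_apply]
    ext m
    fin_cases m <;> simp [h0, h1, h]

lemma integral_rotFlow_two {h : E 2 → ℝ} (hh : ContinuousOn h (Metric.sphere (0 : E 2) 1))
    {x : E 2} (hx : x ∈ Metric.sphere (0 : E 2) 1) :
    ∫ s in (0 : ℝ)..(2 * Real.pi), h (rotFlow 0 1 s x) =
      2 * Real.pi * ∫ y, h y ∂sphMeasure 2 := by
  have hR : Continuous fun p : Metric.sphere (0 : E 2) 1 × ℝ =>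
      rotFlow 0 1 p.2 (p.1 : E 2) := by
    simp only [rotFlow_apply]; fun_prop
  have hc : Continuous fun p : Metric.sphere (0 : E 2) 1 × ℝ => h (rotFlow 0 1 p.2 p.1) :=
    hh.comp_continuous hR fun p => rotFlow_mem_sphere 0 1 p.2 p.1.2
  have hc1 : ∀ y ∈ Metric.sphere (0 : E 2) 1, Continuous fun s => h (rotFlow 0 1 s y) :=
    fun y hy => hh.comp_continuous (by simp only [rotFlow_apply]; fun_prop)
      fun s => rotFlow_mem_sphere 0 1 s hy
  have hF : ∀ t, ContinuousOn (fun y => ∫ s in (0 : ℝ)..t, h (rotFlow 0 1 s y))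
      (Metric.sphere (0 : E 2) 1) := fun t => by
    rw [continuousOn_iff_continuous_domRestrict]
    exact intervalIntegral.continuous_parametric_intervalIntegral_of_continuous'
      (f := fun (y : Metric.sphere (0 : E 2) 1) (s : ℝ) => h (rotFlow 0 1 s y)) hc 0 t
  have hF' : ∀ t₀ : ℝ, ContinuousOn (Function.uncurry fun (t : ℝ) y => h (rotFlow 0 1 t y))
      (Metric.closedBall t₀ 1 ×ˢ Metric.sphere (0 : E 2) 1) := fun t₀ =>
    hh.comp (continuous_rotFlow 0 1).continuousOn fun p hp => rotFlow_mem_sphere 0 1 p.1 hp.2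
  have hder : ∀ t, ∀ y ∈ Metric.sphere (0 : E 2) 1,
      HasDerivAt (fun t => ∫ s in (0 : ℝ)..t, h (rotFlow 0 1 s y)) (h (rotFlow 0 1 t y)) t :=
    fun t y hy => ((hc1 y hy).integral_hasStrictDerivAt 0 t).hasDerivAt
  have hd : ∀ t, HasDerivAt (fun t => ∫ y, (∫ s in (0 : ℝ)..t, h (rotFlow 0 1 s y)) ∂sphMeasure 2)
      (∫ y, h y ∂sphMeasure 2) t := fun t => by
    have e : ∫ y, h (rotFlow 0 1 t y) ∂sphMeasure 2 = ∫ y, h y ∂sphMeasure 2 :=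
      integral_comp_isometry (rotIsometry 0 1 t) h
    rw [← e]
    exact hasDerivAt_integral_sphere one_pos (fun t _ => hF t) (hF' t) fun t _ => hder t
  have h1 := intervalIntegral.integral_eq_sub_of_hasDerivAt (a := 0) (b := 2 * Real.pi)
    (fun t _ => hd t) (by simp)
  have h2 : ∫ y, (∫ s in (0 : ℝ)..(2 * Real.pi), h (rotFlow 0 1 s y)) ∂sphMeasure 2 =
      ∫ _, (∫ s in (0 : ℝ)..(2 * Real.pi), h (rotFlow 0 1 s x)) ∂sphMeasure 2 := by
    refine integral_congr_sphere fun y hy => ?_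
    obtain ⟨α, rfl⟩ := exists_eq_rotFlow_two hx hy
    have hp : Function.Periodic (fun s => h (rotFlow 0 1 s x)) (2 * Real.pi) := fun s => by
      simp [rotFlow_two_apply]
    simp only [rotFlow_two_add]
    rw [intervalIntegral.integral_comp_add_right (fun s => h (rotFlow 0 1 s x)),
      zero_add, add_comm (2 * Real.pi), hp.intervalIntegral_add_eq α 0, zero_add]
  rw [h2] at h1
  simpa using h1.symm

lemma sq_sub_integral_le {g : E 2 → ℝ} (hg : SphSmooth 1 g) {x : E 2}
    (hx : x ∈ Metric.sphere (0 : E 2) 1) :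
    (g x - ∫ y, g y ∂sphMeasure 2) ^ 2 ≤
      Real.pi ^ 2 / 3 * ∫ y, rotGamma g g y ∂sphMeasure 2 := by
  have hLc : ContinuousOn (rotD 0 1 g) (Metric.sphere (0 : E 2) 1) :=
    (hg.rotD (l := 0) (by simp) 0 1).continuousOn
  have hmem : ∀ s, rotFlow 0 1 s x ∈ Metric.sphere (0 : E 2) 1 :=
    fun s => rotFlow_mem_sphere 0 1 s hx
  have hfl : Continuous fun s => rotFlow 0 1 s x := by
    simp only [rotFlow_apply]; fun_prop
  have hu : Continuous fun s => g (rotFlow 0 1 s x) := hg.continuousOn.comp_continuous hfl hmem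
  have hv : Continuous fun s => rotD 0 1 g (rotFlow 0 1 s x) := hLc.comp_continuous hfl hmem
  have hΓ : ∀ y, rotGamma g g y = rotD 0 1 g y ^ 2 := fun y => by
    simp only [rotGamma, Fin.sum_univ_two, rotD_self, rotD_swap (i := 0) (j := 1)]
    ring
  have hd : ∀ s, HasDerivAt (fun s => g (rotFlow 0 1 s x)) (rotD 0 1 g (rotFlow 0 1 s x)) s :=
    fun s => hasDerivAt_comp_rotFlow 0 1 (hg.differentiableAt one_ne_zero (hmem s))
  have hg1 := integral_rotFlow_two hg.continuousOn hx
  have hg2 := integral_rotFlow_two (hLc.pow 2) hx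
  set u : ℝ → ℝ := fun s => g (rotFlow 0 1 s x) with hudef
  set v : ℝ → ℝ := fun s => rotD 0 1 g (rotFlow 0 1 s x) with hvdef
  have hu0 : u 0 = g x := by simp [hudef]
  have hu1 : u (2 * Real.pi) = g x := by
    have : x = rotFlow 0 1 (2 * Real.pi) x := by
      rw [rotFlow_two_apply]; ext m; fin_cases m <;> simp
    rw [hudef]; simp only [← this]
  have hparts : ∫ s in (0 : ℝ)..(2 * Real.pi), (s - Real.pi) * v s =
      2 * Real.pi * (g x - ∫ y, g y ∂sphMeasure 2) := by
    have h := intervalIntegral.integral_eq_sub_of_hasDerivAt (a := 0) (b := 2 * Real.pi)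
      (f := fun s => (s - Real.pi) * u s) (f' := fun s => 1 * u s + (s - Real.pi) * v s)
      (fun s _ => ((hasDerivAt_id s).sub_const Real.pi).mul (hd s))
      (Continuous.intervalIntegrable (by fun_prop) _ _)
    rw [intervalIntegral.integral_add (Continuous.intervalIntegrable (by fun_prop) _ _)
      (Continuous.intervalIntegrable (by fun_prop) _ _), hu0, hu1] at h
    simp only [one_mul] at h
    linarith
  have hsq : ∫ s in (0 : ℝ)..(2 * Real.pi), (s - Real.pi) ^ 2 = 2 * Real.pi ^ 3 / 3 := by
    rw [intervalIntegral.integral_comp_sub_right (fun s => s ^ 2), integral_pow]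
    norm_num; ring
  set D := g x - ∫ y, g y ∂sphMeasure 2 with hD
  set K := ∫ y, rotD 0 1 g y ^ 2 ∂sphMeasure 2 with hK
  have hπ := Real.pi_pos
  have hnn : 0 ≤ ∫ s in (0 : ℝ)..(2 * Real.pi),
      (3 / Real.pi ^ 2 * D * (s - Real.pi) - v s) ^ 2 :=
    intervalIntegral.integral_nonneg (by positivity) fun s _ => sq_nonneg _
  have e : ∀ s, (3 / Real.pi ^ 2 * D * (s - Real.pi) - v s) ^ 2 =
      ((3 / Real.pi ^ 2 * D) ^ 2 * (s - Real.pi) ^ 2 -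
        2 * (3 / Real.pi ^ 2 * D) * ((s - Real.pi) * v s)) + v s ^ 2 := fun s => by ring
  simp only [e] at hnn
  rw [intervalIntegral.integral_add (Continuous.intervalIntegrable (by fun_prop) _ _)
      (Continuous.intervalIntegrable (by fun_prop) _ _),
    intervalIntegral.integral_sub (Continuous.intervalIntegrable (by fun_prop) _ _)
      (Continuous.intervalIntegrable (by fun_prop) _ _),
    intervalIntegral.integral_const_mul, intervalIntegral.integral_const_mul, hsq, hparts,
    show ∫ s in (0 : ℝ)..(2 * Real.pi), v s ^ 2 = 2 * Real.pi * K from hg2] at hnn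
  simp only [hΓ]
  have e2 : (3 / Real.pi ^ 2 * D) ^ 2 * (2 * Real.pi ^ 3 / 3) -
      2 * (3 / Real.pi ^ 2 * D) * (2 * Real.pi * D) + 2 * Real.pi * K =
      6 / Real.pi * (Real.pi ^ 2 / 3 * K - D ^ 2) := by
    field_simp; ring
  rw [e2] at hnn
  exact sub_nonneg.1 (nonneg_of_mul_nonneg_right hnn (by positivity))

lemma poincare_two {g : E 2 → ℝ} (hg : SphSmooth 1 g) (h0 : ∫ x, g x ∂sphMeasure 2 = 0) :
    ∫ x, g x ^ 2 ∂sphMeasure 2 ≤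
      Real.pi ^ 2 / 3 * ∫ x, rotGamma g g x ∂sphMeasure 2 := by
  have hc := hg.continuousOn
  have := integral_mono_sphere (g := fun x => g x ^ 2) (h := fun _ =>
    Real.pi ^ 2 / 3 * ∫ x, rotGamma g g x ∂sphMeasure 2) (by fun_prop) (by fun_prop)
    fun x hx => by simpa [h0] using sq_sub_integral_le hg hx
  simpa using this

lemma integral_exp_abs_le_of_two {f : E 2 → ℝ} (hf : SphSmooth 2 f)
    (hmean : ∫ θ, f θ ∂sphMeasure 2 = 0)
    (hlin : ∀ v : E 2, ∫ θ, ⟪v, θ⟫ * f θ ∂sphMeasure 2 = 0) {b : ℝ} (hb : 0 ≤ b)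
    (hHS : ∫ θ, hsNormSq (hess f θ) ∂sphMeasure 2 ≤ b ^ 2) :
    ∫ θ, Real.exp (1 / (2 * (1 + 4 * b ^ 2)) * |f θ|) ∂sphMeasure 2 ≤ 2 := by
  have hf1 : SphSmooth 1 f := hf.of_le (by norm_num)
  have hfc := hf.continuousOn
  have hS := integral_norm_gradient_sub_sq_le hf (C := Real.pi ^ 2 / 3) (by positivity)
    (fun g hg h0 => poincare_two hg h0) hHS
  have hΓ := integral_rotGamma_self_le hf1 hlin
  have hpt : ∀ x ∈ Metric.sphere (0 : E 2) 1,
      Real.exp (1 / (2 * (1 + 4 * b ^ 2)) * |f x|) ≤ 2 := fun x hx => by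
    have h := sq_sub_integral_le hf1 hx
    rw [hmean, sub_zero] at h
    have hfx : |f x| ≤ Real.pi ^ 2 / 3 * b := by
      refine abs_le_of_sq_le_sq (h.trans ?_) (by positivity)
      have := mul_le_mul_of_nonneg_left (hΓ.trans hS)
        (show 0 ≤ Real.pi ^ 2 / 3 by positivity)
      linarith
    have hpi : Real.pi ^ 2 / 3 ≤ 3.31 := by nlinarith [Real.pi_lt_d2, Real.pi_pos]
    have hfx2 : |f x| ≤ 3.31 * b := hfx.trans (mul_le_mul_of_nonneg_right hpi hb)
    have hle : 1 / (2 * (1 + 4 * b ^ 2)) * |f x| ≤ Real.log 2 := by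
      rw [one_div, inv_mul_le_iff₀ (by positivity)]
      nlinarith [Real.log_two_gt_d9, sq_nonneg (2 * b - 1), sq_nonneg b]
    calc _ ≤ Real.exp (Real.log 2) := Real.exp_le_exp.2 hle
      _ = 2 := Real.exp_log two_pos
  have := integral_mono_sphere (g := fun x => Real.exp (1 / (2 * (1 + 4 * b ^ 2)) * |f x|))
    (h := fun _ => (2 : ℝ)) (by fun_prop) (by fun_prop) hpt
  simpa using this

end circle

section reduction

variable {f : E n → ℝ} {x : E n}

lemma hasGradientAt_sub_norm_sq (hf : DifferentiableAt ℝ f x) (a : ℝ) :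
    HasGradientAt (fun y => f y - a / 2 * (‖y‖ ^ 2 - 1)) (gradient f x - a • x) x := by
  have h1 : HasFDerivAt (fun y : E n => a / 2 * (‖y‖ ^ 2 - 1)) _ x :=
    (((hasFDerivAt_id x).norm_sq.sub_const 1).const_mul (a / 2))
  have h2 := hf.hasGradientAt.hasFDerivAt.fun_sub h1
  refine h2.congr_fderiv (ContinuousLinearMap.ext fun v => ?_)
  simp
  ring

lemma gradient_sub_norm_sq (hf : DifferentiableAt ℝ f x) (a : ℝ) :
    gradient (fun y => f y - a / 2 * (‖y‖ ^ 2 - 1)) x = gradient f x - a • x :=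
  (hasGradientAt_sub_norm_sq hf a).gradient

lemma hess_sub_norm_sq (hf : ContDiffAt ℝ 2 f x) (a : ℝ) :
    hess (fun y => f y - a / 2 * (‖y‖ ^ 2 - 1)) x =
      hess f x - a • ContinuousLinearMap.id ℝ (E n) := by
  have he : gradient (fun y => f y - a / 2 * (‖y‖ ^ 2 - 1)) =ᶠ[𝓝 x]
      fun y => gradient f y - a • y := by
    filter_upwards [hf.eventually (by simp)] with y hy
    exact gradient_sub_norm_sq (hy.differentiableAt two_ne_zero) a
  have hd : HasFDerivAt (gradient f) (hess f x) x :=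
    ((contDiffAt_gradient hf).differentiableAt one_ne_zero).hasFDerivAt
  rw [hess, he.fderiv_eq]
  exact (hd.fun_sub ((hasFDerivAt_id x).const_smul a)).fderiv

end reduction

/-- **Theorem 1.2 (Statement 1).** Second order concentration on the sphere
in terms of the Euclidean Hessian. -/
theorem second_order_concentration_euclidean_hessian
    {n : ℕ} (hn : 2 ≤ n) (f : E n → ℝ) (U : Set (E n)) (hU : IsOpen U)
    (hUS : Metric.sphere (0 : E n) 1 ⊆ U) (hf : ContDiffOn ℝ 2 f U)
    (hmean : ∫ θ, f θ ∂sphMeasure n = 0)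
    (hlin : ∀ v : E n, ∫ θ, ⟪v, θ⟫ * f θ ∂sphMeasure n = 0)
    {a b : ℝ} (hb : 0 ≤ b)
    (hop : ∀ θ ∈ Metric.sphere (0 : E n) 1,
      ‖hess f θ - a • ContinuousLinearMap.id ℝ (E n)‖ ≤ 1)
    (hHS : ∫ θ, hsNormSq (hess f θ - a • ContinuousLinearMap.id ℝ (E n)) ∂sphMeasure n ≤ b ^ 2) :
    ∫ θ, Real.exp (((n : ℝ) - 1) / (2 * (1 + 4 * b ^ 2)) * |f θ|) ∂sphMeasure n ≤ 2 := by
  have : NeZero n := ⟨by omega⟩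
  have hfs : SphSmooth 2 f := fun x hx => hf.contDiffAt (hU.mem_nhds (hUS hx))
  obtain ⟨F, hF⟩ : ∃ F : E n → ℝ, F = fun y => f y - a / 2 * (‖y‖ ^ 2 - 1) := ⟨_, rfl⟩
  have hFs : SphSmooth 2 F := fun x hx => hF ▸ (hfs x hx).sub
    (contDiffAt_const.mul ((contDiff_norm_sq ℝ).contDiffAt.sub contDiffAt_const))
  have hFf : ∀ x ∈ Metric.sphere (0 : E n) 1, F x = f x := fun x hx => by
    rw [mem_sphere_zero_iff_norm] at hx
    simp [hF, hx]
  have hhess : ∀ x ∈ Metric.sphere (0 : E n) 1,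
      hess F x = hess f x - a • ContinuousLinearMap.id ℝ (E n) :=
    fun x hx => hF ▸ hess_sub_norm_sq (hfs x hx) a
  have hmean' : ∫ θ, F θ ∂sphMeasure n = 0 := (integral_congr_sphere hFf).trans hmean
  have hlin' : ∀ v : E n, ∫ θ, ⟪v, θ⟫ * F θ ∂sphMeasure n = 0 := fun v =>
    (integral_congr_sphere fun x hx => by rw [hFf x hx]).trans (hlin v)
  have hop' : ∀ θ ∈ Metric.sphere (0 : E n) 1, ‖hess F θ‖ ≤ 1 := fun θ hθ => by
    rw [hhess θ hθ]; exact hop θ hθ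
  have hHS' : ∫ θ, hsNormSq (hess F θ) ∂sphMeasure n ≤ b ^ 2 :=
    (integral_congr_sphere fun x hx => by rw [hhess x hx]).trans_le hHS
  refine (integral_congr_sphere fun x hx => by rw [hFf x hx]).trans_le
    (?_ : ∫ θ, Real.exp (((n : ℝ) - 1) / (2 * (1 + 4 * b ^ 2)) * |F θ|) ∂sphMeasure n ≤ 2)
  rcases hn.eq_or_lt with rfl | hn
  · have h := integral_exp_abs_le_of_two hFs hmean' hlin' hb hHS'
    rwa [show ((2 : ℕ) : ℝ) - 1 = 1 by norm_num]
  · exact integral_exp_abs_le_of_three_le hn hFs hmean' hlin' hop' hHS'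

end SecondOrderConc
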